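/- arXiv:1503.00325 — 8 statements merged into one kernel-verified Lean document; each statement's English description precedes it below -/
import Mathlib

section
/- For every positive integer m there exists a constant C = C(m) > 0 (one may take C = e²·A_m^{2m}, where A_m is the constant in Biernacki's theorem) with the following property: if f(z) = Σ_{k≥0} a_k z^k is analytic in D_R and is (s, s+m)-valent in D_R for every nonnegative integer s, then, setting ρ = R^{−1}, there exist complex coefficients c_j(k) (1 ≤ j ≤ m, k ≥ m+1) such that a_k = Σ_{j=1}^m c_j(k)·a_{k−j} for all k ≥ m+1, and |c_j(k)| ≤ C·ρ^j for all j and k. -/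
-- The order of vanishing of `g` at `z` (zero if `g` is not analytic at `z`).
open scoped Classical in
noncomputable def ordAt (g : ℂ → ℂ) (z : ℂ) : ℕ∞ :=
  if h : AnalyticAt ℂ g z then analyticOrderAt g z else 0

/-- The number of zeroes of `g` in `Ω`, counted with multiplicity. -/
noncomputable def solCount (g : ℂ → ℂ) (Ω : Set ℂ) : ℕ∞ :=
  ∑' z : Ω, ordAt g z

/-- `f` is `(s,p)`-valent in `Ω`: for every polynomial `P` of degree at most `s`,
the equation `f = P` has at most `p` solutions in `Ω`, counted with multiplicity. -/
def IsSPValentOn (f : ℂ → ℂ) (Ω : Set ℂ) (s p : ℕ) : Prop :=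
  ∀ P : Polynomial ℂ, P.degree ≤ (s : ℕ) →
    solCount (fun z => f z - P.eval z) Ω ≤ (p : ℕ∞)

/-- `g` is `p`-valent in `Ω`: for every constant `c`, the equation `g = c` has
at most `p` solutions in `Ω`, counted with multiplicity. -/
def IsPValentOn (g : ℂ → ℂ) (Ω : Set ℂ) (p : ℕ) : Prop :=
  ∀ c : ℂ, solCount (fun z => g z - c) Ω ≤ (p : ℕ∞)

section Aux
open Metric Real MeasureTheory

def Hval (g : ℂ → ℂ) (m : ℕ) : Prop :=
  ∀ c : ℂ, c ≠ 0 → ∀ S : Finset ℂ, (∀ u ∈ S, u ∈ ball (0:ℂ) 1) →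
    ∑ u ∈ S, analyticOrderAt (fun z => g z - c) u ≤ (m : ℕ∞)

lemma jensen_bound {h : ℂ → ℂ} {m : ℕ} (han : AnalyticOnNhd ℂ h (ball 0 1)) (h0 : h 0 = 0)
    (hv : Hval h m) {δ : ℝ} (hδ : 0 < δ) (hδ2 : δ < 1/2) (hsm : ∀ z : ℂ, ‖z‖ ≤ δ → ‖h z‖ < 1)
    {t : ℝ} (ht : 0 < t) (ht2 : t ≤ 1/2) {c : ℂ} (hc : ‖c‖ = 1) :
    circleAverage (fun z => log ‖h z - c‖) 0 t ≤ m * log (1 / (2 * δ)) := by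
  have hc0 : c ≠ 0 := by rintro rfl; simp at hc
  have hL : 0 ≤ log (1 / (2 * δ)) := log_nonneg (by rw [le_div_iff₀ (by positivity)]; linarith)
  have habs : |t| = t := abs_of_pos ht
  have hsub : closedBall (0:ℂ) |t| ⊆ ball 0 1 := by
    rw [habs]; exact closedBall_subset_ball (by linarith)
  have han' : AnalyticOnNhd ℂ (fun z => h z - c) (closedBall 0 |t|) :=
    fun z hz => (han z (hsub hz)).sub analyticAt_const
  rw [AnalyticOnNhd.circleAverage_log_norm ht.ne' han' (by simpa [h0] using hc0)]
  simp only [h0, zero_sub, norm_neg, hc, log_one, add_zero]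
  set D := MeromorphicOn.divisor (fun z => h z - c) (closedBall 0 |t|) with hD
  have hfin : D.support.Finite := D.finiteSupport (isCompact_closedBall ..)
  have hDn : ∀ u, 0 ≤ D u := fun u => MeromorphicOn.AnalyticOnNhd.divisor_nonneg han' u
  have hmem : ∀ u, D u ≠ 0 → u ∈ closedBall (0:ℂ) |t| := by
    intro u hu
    by_contra hcon
    exact hu (D.apply_eq_zero_of_notMem hcon)
  have hDapp : ∀ u, D u ≠ 0 → ((analyticOrderAt (fun z => h z - c) u).toNat : ℤ) = D u := by
    intro u hu
    rw [hD, MeromorphicOn.AnalyticOnNhd.divisor_apply han' (hmem u hu)]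
    generalize analyticOrderAt (fun z => h z - c) u = n
    induction n using ENat.recTopCoe <;> simp
  have hbig : ∀ u, D u ≠ 0 → δ < ‖u‖ := by
    intro u hu
    by_contra hcon
    push Not at hcon
    have h1 := hsm u hcon
    have h2 : h u - c ≠ 0 := by
      intro h3
      rw [sub_eq_zero.1 h3, hc] at h1
      exact lt_irrefl _ h1
    have := (han' u (hmem u hu)).analyticOrderAt_eq_zero.mpr h2
    have h4 := hDapp u hu
    rw [this] at h4
    exact hu (by simpa using h4.symm)
  rw [finsum_eq_sum_of_support_subset (s := hfin.toFinset) _ (by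
    intro u hu
    simp only [Function.mem_support] at hu
    simp only [Set.Finite.coe_toFinset, Function.mem_support]
    intro h; exact hu (by simp [h]))]
  have hsum : (∑ u ∈ hfin.toFinset, (D u : ℝ)) ≤ m := by
    have := hv c hc0 hfin.toFinset (fun u hu => hsub (hmem u (by simpa using hu)))
    have hne : ∀ u ∈ hfin.toFinset, analyticOrderAt (fun z => h z - c) u ≠ ⊤ := by
      intro u hu htop
      have := hDapp u (by simpa using hu)
      rw [htop] at this
      have h5 : D u ≠ 0 := by simpa using hu
      exact h5 (by simpa using this.symm)
    have h6 : ∑ u ∈ hfin.toFinset, analyticOrderAt (fun z => h z - c) u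
        = ((∑ u ∈ hfin.toFinset, (analyticOrderAt (fun z => h z - c) u).toNat : ℕ) : ℕ∞) := by
      push_cast
      exact Finset.sum_congr rfl fun u hu => (ENat.natCast_toNat (hne u hu)).symm
    rw [h6] at this
    have h7 := Nat.cast_le.1 this
    have h8 : ((∑ u ∈ hfin.toFinset, (analyticOrderAt (fun z => h z - c) u).toNat : ℕ) : ℝ) ≤ m := by
      exact_mod_cast h7
    refine le_trans (le_of_eq ?_) h8
    push_cast
    refine Finset.sum_congr rfl fun u hu => ?_
    rw [← hDapp u (by simpa using hu)]
    simp
  calc _ ≤ ∑ u ∈ hfin.toFinset, (D u : ℝ) * log (1 / (2 * δ)) := by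
        refine Finset.sum_le_sum fun u hu => ?_
        have hu' : D u ≠ 0 := by simpa using hu
        have hb := hbig u hu'
        refine mul_le_mul_of_nonneg_left ?_ (by exact_mod_cast hDn u)
        have hup : 0 < ‖u‖ := hδ.trans hb
        apply log_le_log (by positivity)
        rw [← div_eq_mul_inv, div_le_div_iff₀ hup (by positivity)]
        nlinarith
    _ = (∑ u ∈ hfin.toFinset, (D u : ℝ)) * log (1 / (2 * δ)) := by rw [Finset.sum_mul]
    _ ≤ _ := by gcongr


lemma cartan_bound {h : ℂ → ℂ} {t B : ℝ} (hcont : Continuous fun β : ℝ => h (circleMap 0 t β))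
    (hB : ∀ c : ℂ, ‖c‖ = 1 → circleAverage (fun z => log ‖h z - c‖) 0 t ≤ B) :
    circleAverage (fun z => log⁺ ‖h z‖) 0 t ≤ B := by
  let F : ℝ → ℝ → ℝ := ValueDistribution.Cartan.cartanKernel h t
  have hFdef : ∀ α β, F α β = log ‖h (circleMap 0 t β) - circleMap 0 1 α‖ := fun _ _ => rfl
  have hpi := two_pi_pos
  have hav : ∀ β, ∫ α in 0..2 * π, F α β = 2 * π * log⁺ ‖h (circleMap 0 t β)‖ := by
    intro β
    have := circleAverage_log_norm_sub_const_eq_posLog (a := h (circleMap 0 t β))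
    rw [← this, circleAverage_def]
    simp only [hFdef, smul_eq_mul]
    rw [← mul_assoc, mul_inv_cancel₀ hpi.ne', one_mul]
    simp_rw [norm_sub_rev]
  -- bound on h on circle
  obtain ⟨M, hM⟩ : ∃ M : ℝ, ∀ β ∈ Set.Icc 0 (2 * π), ‖h (circleMap 0 t β)‖ ≤ M :=
    isCompact_Icc.exists_bound_of_continuousOn hcont.continuousOn
  set C := log⁺ (M + 1) with hC
  have hC0 : 0 ≤ C := posLog_nonneg
  have hFC : ∀ α, ∀ β ∈ Set.Icc 0 (2 * π), F α β ≤ C := by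
    intro α β hβ
    rw [hFdef]
    have h1 : ‖h (circleMap 0 t β) - circleMap 0 1 α‖ ≤ M + 1 := by
      refine (norm_sub_le _ _).trans ?_
      have : ‖circleMap 0 1 α‖ = 1 := by simp
      linarith [hM β hβ]
    refine (le_max_right 0 _).trans ?_
    exact posLog_le_posLog (norm_nonneg _) h1
  have hmeas : Measurable (fun p : ℝ × ℝ => F p.1 p.2) := by
    simp only [hFdef]
    have : Continuous (fun p : ℝ × ℝ => h (circleMap 0 t p.2)) := hcont.comp continuous_snd
    have h2 : Continuous (fun p : ℝ × ℝ => circleMap 0 1 p.1) := (continuous_circleMap 0 1).comp continuous_fst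
    exact ((this.sub h2).norm.measurable).log
  let μ : Measure ℝ := volume.restrict (Set.Ioc 0 (2 * π))
  have hleft : ∀ β, Integrable (fun α => F α β) μ :=
    fun β => ValueDistribution.Cartan.integrableOn_cartanKernel_left h t β
  have hint : Integrable (fun p : ℝ × ℝ => F p.1 p.2) (μ.prod μ) := by
    rw [integrable_prod_iff' hmeas.aestronglyMeasurable]
    refine ⟨Filter.Eventually.of_forall hleft, ?_⟩
    have hm2 : StronglyMeasurable (fun β => ∫ α, ‖F α β‖ ∂μ) :=
      (hmeas.norm.stronglyMeasurable).integral_prod_left'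
    refine Integrable.mono' (integrable_const (2 * π * (2 * C))) hm2.aestronglyMeasurable ?_
    filter_upwards [ae_restrict_mem measurableSet_Ioc] with β hβ
    rw [norm_of_nonneg (integral_nonneg fun _ => norm_nonneg _)]
    have hβ' : β ∈ Set.Icc 0 (2 * π) := ⟨hβ.1.le, hβ.2⟩
    calc ∫ α, ‖F α β‖ ∂μ ≤ ∫ α, (2 * C - F α β) ∂μ := by
          refine integral_mono (hleft β).norm ((integrable_const _).sub (hleft β)) fun α => ?_
          have := hFC α β hβ'
          simp only [norm_eq_abs]
          rw [abs_le]
          constructor <;> linarith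
      _ = 2 * π * (2 * C) - 2 * π * log⁺ ‖h (circleMap 0 t β)‖ := by
          rw [integral_sub (integrable_const _) (hleft β), ← hav β,
            intervalIntegral.integral_of_le hpi.le]
          congr 1
          simp [μ, hpi.le]
      _ ≤ 2 * π * (2 * C) := by
          have : 0 ≤ log⁺ ‖h (circleMap 0 t β)‖ := posLog_nonneg
          nlinarith
  have hright : Integrable (fun α => ∫ β, F α β ∂μ) μ := hint.integral_prod_left
  have hswap : ∫ α, (∫ β, F α β ∂μ) ∂μ = ∫ β, (∫ α, F α β ∂μ) ∂μ := integral_integral_swap hint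
  have hup : ∫ α, (∫ β, F α β ∂μ) ∂μ ≤ ∫ α, 2 * π * B ∂μ := by
    refine integral_mono hright (integrable_const _) fun α => ?_
    have := hB (circleMap 0 1 α) (by simp)
    rw [circleAverage_def, smul_eq_mul, intervalIntegral.integral_of_le hpi.le,
      inv_mul_le_iff₀ hpi] at this
    exact this
  have hlow : ∫ β, (∫ α, F α β ∂μ) ∂μ = 2 * π * ∫ β, log⁺ ‖h (circleMap 0 t β)‖ ∂μ := by
    rw [← integral_const_mul]
    refine integral_congr_ae (Filter.Eventually.of_forall fun β => ?_)
    simp only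
    rw [← hav β, intervalIntegral.integral_of_le hpi.le]
  rw [hswap, hlow] at hup
  have hc2 : ∫ α, 2 * π * B ∂μ = 2 * π * (2 * π * B) := by
    simp [μ, hpi.le]
  rw [hc2] at hup
  rw [circleAverage_def, smul_eq_mul, intervalIntegral.integral_of_le hpi.le, inv_mul_le_iff₀ hpi]
  exact le_of_mul_le_mul_left hup hpi


lemma polar_ball {φ : ℂ → ℝ} {w : ℂ} {ρ : ℝ} (hρ : 0 < ρ)
    (hφ : ContinuousOn φ (closedBall w ρ)) :
    IntegrableOn (fun t => 2 * π * (t * circleAverage φ w t)) (Set.Ioo 0 ρ) ∧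
    ∫ z in ball w ρ, φ z = ∫ t in Set.Ioo 0 ρ, 2 * π * (t * circleAverage φ w t) := by
  have hpi := two_pi_pos
  have hin : ∀ t : ℝ, ∫ θ in Set.Ioo (-π) π, t * φ (circleMap w t θ)
      = 2 * π * (t * circleAverage φ w t) := by
    intro t
    rw [circleAverage_eq_integral_add (-π), intervalIntegral.integral_comp_add_right
      (fun θ => φ (circleMap w t θ)) (-π), integral_const_mul, ← integral_Ioc_eq_integral_Ioo,
      ← intervalIntegral.integral_of_le (by linarith [pi_pos])]
    rw [show (0:ℝ) + -π = -π by ring, show 2 * π + -π = π by ring, smul_eq_mul]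
    field_simp
  have hint : IntegrableOn (fun p : ℝ × ℝ => p.1 * φ (circleMap w p.1 p.2))
      (Set.Ioo 0 ρ ×ˢ Set.Ioo (-π) π) (volume.prod volume) := by
    have : ContinuousOn (fun p : ℝ × ℝ => p.1 * φ (circleMap w p.1 p.2))
        (Set.Icc 0 ρ ×ˢ Set.Icc (-π) π) := by
      refine continuousOn_fst.mul (hφ.comp (by unfold circleMap; fun_prop) ?_)
      rintro ⟨t, θ⟩ ⟨ht, -⟩
      simp only [mem_closedBall, dist_eq_norm, circleMap, add_sub_cancel_left]
      simp [abs_of_nonneg ht.1, ht.2]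
    exact (this.integrableOn_compact (isCompact_Icc.prod isCompact_Icc)).mono_set
      (Set.prod_mono Set.Ioo_subset_Icc_self Set.Ioo_subset_Icc_self)
  constructor
  · simp_rw [← hin]
    rw [IntegrableOn, ← Measure.prod_restrict] at hint
    exact hint.integral_prod_left
  · simp_rw [← hin]
    rw [← setIntegral_prod _ hint]
    have h1 : ∫ z in ball w ρ, φ z = ∫ z, (ball (0:ℂ) ρ).indicator (fun z => φ (z + w)) z := by
      rw [← integral_indicator measurableSet_ball, ← integral_add_right_eq_self _ w]
      congr 1; ext z
      simp [Set.indicator]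
    rw [h1, ← Complex.integral_comp_polarCoord_symm]
    have m1 : MeasurableSet (Set.Ioo (0:ℝ) ρ ×ˢ Set.Ioo (-π) π) :=
      measurableSet_Ioo.prod measurableSet_Ioo
    have m2 : MeasurableSet polarCoord.target := by
      rw [polarCoord_target]; exact measurableSet_Ioi.prod measurableSet_Ioo
    rw [← integral_indicator m2, ← Measure.volume_eq_prod, ← integral_indicator m1]
    congr 1
    ext ⟨t, θ⟩
    have hnorm : Complex.polarCoord.symm (t, θ) = circleMap 0 t θ := by
      rw [Complex.polarCoord_symm_apply, circleMap, Complex.exp_mul_I]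
      simp
    simp only [Set.indicator, polarCoord_target, Set.mem_prod, hnorm, smul_eq_mul]
    by_cases h2 : θ ∈ Set.Ioo (-π) π
    · by_cases h3 : 0 < t
      · have e : circleMap 0 t θ + w = circleMap w t θ := by simp [circleMap, add_comm]
        simp [h2.1, h2.2, h3, abs_of_pos h3, e]
      · simp [h3]
    · simp [h2]

lemma area_bound {φ : ℂ → ℝ} {w : ℂ} {ρ r V B : ℝ} (hr : ‖w‖ ≤ r) (hrρ : r < ρ)
    (hφ : ContinuousOn φ (closedBall 0 ρ)) (hφ0 : ∀ z, 0 ≤ φ z)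
    (hV : ∀ t, 0 < t → t < ρ - r → V ≤ circleAverage φ w t)
    (hB : ∀ t, 0 < t → t < ρ → circleAverage φ 0 t ≤ B) :
    V * (ρ - r) ^ 2 ≤ B * ρ ^ 2 := by
  have hr0 : 0 ≤ r := (norm_nonneg _).trans hr
  have hρ : 0 < ρ := by linarith
  have hsub : closedBall w (ρ - r) ⊆ closedBall 0 ρ :=
    closedBall_subset_closedBall' (by rw [dist_zero_right]; linarith)
  have hsub' : ball w (ρ - r) ⊆ ball 0 ρ :=
    ball_subset_ball' (by rw [dist_zero_right]; linarith)
  obtain ⟨i1, e1⟩ := polar_ball (by linarith : 0 < ρ - r) (hφ.mono hsub)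
  obtain ⟨i2, e2⟩ := polar_ball hρ hφ
  have hmono : ∫ z in ball w (ρ - r), φ z ≤ ∫ z in ball 0 ρ, φ z := by
    refine setIntegral_mono_set ?_ (Filter.Eventually.of_forall fun z => hφ0 z)
      (LE.le.eventuallyLE hsub')
    exact (hφ.integrableOn_compact (isCompact_closedBall _ _)).mono_set ball_subset_closedBall
  have hq : ∀ (A s : ℝ), 0 < s → IntegrableOn (fun t : ℝ => 2 * π * (t * A)) (Set.Ioo 0 s) ∧
      ∫ t in Set.Ioo 0 s, 2 * π * (t * A) = π * (A * s ^ 2) := by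
    intro A s hs
    constructor
    · exact (Continuous.integrableOn_Icc (by fun_prop)).mono_set Set.Ioo_subset_Icc_self
    · rw [← integral_Ioc_eq_integral_Ioo, ← intervalIntegral.integral_of_le hs.le]
      simp only [intervalIntegral.integral_const_mul, intervalIntegral.integral_mul_const,
        integral_id]
      ring
  have h1 := setIntegral_mono_on (hq V (ρ - r) (by linarith)).1 i1 measurableSet_Ioo
    (fun t ht => by
      have := hV t ht.1 ht.2
      have := ht.1
      gcongr)
  have h2 := setIntegral_mono_on i2 (hq B ρ hρ).1 measurableSet_Ioo
    (fun t ht => by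
      have := hB t ht.1 ht.2
      have := ht.1
      gcongr)
  rw [(hq V (ρ - r) (by linarith)).2, ← e1] at h1
  rw [(hq B ρ hρ).2, ← e2] at h2
  have := h1.trans (hmono.trans h2)
  exact le_of_mul_le_mul_left this pi_pos

lemma submean {h : ℂ → ℂ} {w : ℂ} {t : ℝ} (ht : 0 < t)
    (han : AnalyticOnNhd ℂ h (closedBall w t)) (hw : h w ≠ 0) :
    log ‖h w‖ ≤ circleAverage (fun z => log⁺ ‖h z‖) w t := by
  have habs : |t| = t := abs_of_pos ht
  have han' : AnalyticOnNhd ℂ h (closedBall w |t|) := by rwa [habs]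
  have hj := AnalyticOnNhd.circleAverage_log_norm ht.ne' han' hw
  have hsph : sphere w |t| ⊆ closedBall w t := by rw [habs]; exact sphere_subset_closedBall
  have hmono : circleAverage (fun z => log ‖h z‖) w t ≤ circleAverage (fun z => log⁺ ‖h z‖) w t := by
    refine circleAverage_mono ?_ ?_ ?_
    · exact (han.mono hsph).meromorphicOn.circleIntegrable_log_norm
    · exact (han.mono hsph).meromorphicOn.circleIntegrable_posLog_norm
    · intro x _
      exact le_max_right _ _
  have hpos : 0 ≤ ∑ᶠ u, (MeromorphicOn.divisor h (closedBall w |t|) u : ℝ) * log (t * ‖w - u‖⁻¹) := by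
    refine finsum_nonneg fun u => ?_
    by_cases hu : u ∈ closedBall w |t|
    · refine mul_nonneg (by exact_mod_cast MeromorphicOn.AnalyticOnNhd.divisor_nonneg han' u) ?_
      rcases eq_or_ne u w with rfl | hne
      · simp
      · have h1 : 0 < ‖w - u‖ := norm_pos_iff.2 (sub_ne_zero.2 hne.symm)
        apply log_nonneg
        rw [← div_eq_mul_inv, one_le_div h1, ← dist_eq_norm, dist_comm]
        rwa [habs] at hu
    · simp [Function.locallyFinsuppWithin.apply_eq_zero_of_notMem _ hu]
  linarith

lemma hval_scale {g : ℂ → ℂ} {m : ℕ} (han : AnalyticOnNhd ℂ g (ball 0 1)) (hv : Hval g m)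
    {K : ℝ} (hK : 0 < K) : Hval (fun z => (K:ℂ)⁻¹ * g z) m := by
  intro c hc S hS
  have hK' : (K:ℂ) ≠ 0 := by exact_mod_cast hK.ne'
  refine le_trans (le_of_eq ?_) (hv (K * c) (mul_ne_zero hK' hc) S hS)
  refine Finset.sum_congr rfl fun u hu => ?_
  have e : (fun z => (K:ℂ)⁻¹ * g z - c) = (fun _ => (K:ℂ)⁻¹) * (fun z => g z - K * c) := by
    ext z
    simp only [Pi.mul_apply]
    field_simp
  have h1 : AnalyticAt ℂ (fun z => g z - K * c) u := (han u (hS u hu)).sub analyticAt_const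
  rw [e, analyticOrderAt_mul analyticAt_const h1]
  rw [(analyticAt_const (v := (K:ℂ)⁻¹)).analyticOrderAt_eq_zero.2 (inv_ne_zero hK'), zero_add]

lemma growth {g : ℂ → ℂ} {m : ℕ} (han : AnalyticOnNhd ℂ g (ball 0 1)) (h0 : g 0 = 0)
    (hv : Hval g m) {δ K r : ℝ} (hδ : 0 < δ) (hδ2 : δ < 1/2) (hK : 0 < K)
    (hsm : ∀ z : ℂ, ‖z‖ ≤ δ → ‖g z‖ < K) (hr2 : r < 1/2) {w : ℂ} (hw : ‖w‖ ≤ r) :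
    log (‖g w‖ / K) * (1 - 2 * r) ^ 2 ≤ m * log (1 / (2 * δ)) := by
  have hL : 0 ≤ log (1 / (2 * δ)) := log_nonneg (by rw [le_div_iff₀ (by positivity)]; linarith)
  rcases eq_or_ne (g w) 0 with hgw | hgw
  · simp only [hgw, norm_zero, zero_div, log_zero, zero_mul]; positivity
  set h : ℂ → ℂ := fun z => (K:ℂ)⁻¹ * g z with hh
  have hK' : (K:ℂ) ≠ 0 := by exact_mod_cast hK.ne'
  have hnorm : ∀ z, ‖h z‖ = ‖g z‖ / K := by
    intro z; simp [hh, abs_of_pos hK, div_eq_inv_mul]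
  have hanh : AnalyticOnNhd ℂ h (ball 0 1) := fun z hz => analyticAt_const.mul (han z hz)
  have hcb : closedBall (0:ℂ) (1/2) ⊆ ball 0 1 := closedBall_subset_ball (by norm_num)
  have hT : ∀ t, 0 < t → t < 1/2 → circleAverage (fun z => log⁺ ‖h z‖) 0 t ≤ m * log (1 / (2 * δ)) := by
    intro t ht ht2
    refine cartan_bound ?_ fun c hc => jensen_bound hanh (by simp [hh, h0])
      (hval_scale han hv hK) hδ hδ2 ?_ ht ht2.le hc
    · refine hanh.continuousOn.comp_continuous (continuous_circleMap 0 t) fun β => ?_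
      simp [abs_of_pos ht]; linarith
    · intro z hz
      rw [hnorm, div_lt_one hK]; exact hsm z hz
  have hcont : ContinuousOn (fun z => log⁺ ‖h z‖) (closedBall 0 (1/2)) :=
    continuous_posLog.comp_continuousOn (hanh.continuousOn.mono hcb).norm
  have := area_bound (V := log ‖h w‖) hw hr2 hcont (fun z => posLog_nonneg) (fun t ht ht2 => ?_) hT
  · rw [hnorm] at this
    nlinarith
  · refine submean ht (hanh.mono ?_) ?_
    · exact (closedBall_subset_closedBall' (by rw [dist_zero_right]; linarith)).trans hcb
    · simp [hh, hgw, hK.ne']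

lemma hasFPS {b : ℕ → ℂ} {g : ℂ → ℂ} {R : ℝ} (hR : 0 < R)
    (hs : ∀ z ∈ ball (0:ℂ) R, HasSum (fun k => b k * z ^ k) (g z)) :
    HasFPowerSeriesOnBall g (FormalMultilinearSeries.ofScalars ℂ b) 0 (ENNReal.ofReal R) := by
  refine ⟨?_, by simpa using hR, ?_⟩
  · refine ENNReal.le_of_forall_nnreal_lt fun r hr => ?_
    have hr' : (r:ℝ) < R := by
      rw [ENNReal.ofReal, ENNReal.coe_lt_coe] at hr
      exact (Real.lt_toNNReal_iff_coe_lt).1 hr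
    apply FormalMultilinearSeries.le_radius_of_summable
    have := (hs (r:ℂ) (by simpa using hr')).summable.norm
    simpa using this
  · intro y hy
    have hy' : y ∈ ball (0:ℂ) R := by
      rw [Metric.eball_ofReal] at hy
      exact hy
    simpa [FormalMultilinearSeries.ofScalars_apply_eq, mul_comm] using hs y hy'

lemma cauchy_coeff {b : ℕ → ℂ} {g : ℂ → ℂ}
    (hs : ∀ z ∈ ball (0:ℂ) 1, HasSum (fun k => b k * z ^ k) (g z)) {r M : ℝ} (hr : 0 < r)
    (hr1 : r < 1) (hM : ∀ z : ℂ, ‖z‖ ≤ r → ‖g z‖ ≤ M) (n : ℕ) : ‖b n‖ ≤ M / r ^ n := by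
  have h1 := hasFPS one_pos hs
  have han := h1.analyticOnNhd
  lift r to NNReal using hr.le
  have hsub : closedBall (0:ℂ) r ⊆ eball 0 (ENNReal.ofReal 1) := by
    rw [Metric.eball_ofReal]
    exact closedBall_subset_ball hr1
  have h2 : HasFPowerSeriesOnBall g (cauchyPowerSeries g 0 r) 0 r :=
    (han.differentiableOn.mono hsub).hasFPowerSeriesOnBall (by exact_mod_cast hr)
  have h3 := h1.hasFPowerSeriesAt.eq_formalMultilinearSeries h2.hasFPowerSeriesAt
  have h4 : ‖b n‖ = ‖cauchyPowerSeries g 0 r n‖ := by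
    rw [← h3, FormalMultilinearSeries.ofScalars_norm]
  rw [h4]
  refine (norm_cauchyPowerSeries_le g 0 r n).trans ?_
  rw [abs_of_pos hr, inv_pow, div_eq_mul_inv]
  gcongr
  rw [inv_mul_le_iff₀ two_pi_pos]
  have hc : Continuous fun θ : ℝ => ‖g (circleMap 0 r θ)‖ := by
    refine ((han.continuousOn.mono hsub).comp_continuous (continuous_circleMap 0 r) fun β => ?_).norm
    simp
  calc _ ≤ ∫ θ in 0..2 * π, M := by
        refine intervalIntegral.integral_mono_on two_pi_pos.le (hc.intervalIntegrable _ _)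
          (by simp) fun θ _ => hM _ (by simp)
    _ = _ := by simp

lemma core (m : ℕ) (hm : 0 < m) : ∃ C : ℝ, 0 < C ∧ ∀ (b : ℕ → ℂ) (g : ℂ → ℂ),
    (∀ z ∈ ball (0:ℂ) 1, HasSum (fun k => b k * z ^ k) (g z)) → b 0 = 0 → Hval g m →
    ∀ A : ℝ, 0 < A → (∀ i ∈ Finset.Icc 1 m, ‖b i‖ ≤ A) → ‖b (m + 1)‖ ≤ C * A := by
  set r : ℝ := 1 / (4 * (2 * m + 1)) with hr
  have hm' : (1:ℝ) ≤ m := by exact_mod_cast hm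
  have hr0 : 0 < r := by positivity
  have hr1 : r ≤ 1 / 12 := by
    rw [hr]; apply one_div_le_one_div_of_le <;> linarith
  set η : ℝ := (2 * r) ^ (m + 1) / 4 with hη
  have hη0 : 0 < η := by positivity
  have hηr : η ≤ r / 2 := by
    have : (2 * r) ^ (m + 1) ≤ (2 * r) ^ 1 :=
      pow_le_pow_of_le_one (by positivity) (by linarith) (by omega)
    rw [hη]; linarith
  refine ⟨2 * (m + 1) * η⁻¹ ^ (2 * m + 1) / r ^ (m + 1), by positivity, ?_⟩
  intro b g hs hb0 hv A hA hbA
  have hfps := hasFPS one_pos hs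
  have han : AnalyticOnNhd ℂ g (ball 0 1) := by
    have := hfps.analyticOnNhd
    rwa [Metric.eball_ofReal] at this
  have hg0 : g 0 = 0 := by
    have h1 := hs 0 (by simp)
    have h2 : HasSum (fun k => b k * (0:ℂ) ^ k) (b 0 * 0 ^ 0) := hasSum_single 0 (by
      intro k hk; simp [hk])
    rw [h1.unique h2, hb0]; simp
  obtain ⟨w, hw, hmax⟩ := (isCompact_closedBall (0:ℂ) r).exists_isMaxOn
    (nonempty_closedBall.2 hr0.le) ((han.continuousOn.mono
      (closedBall_subset_ball (by linarith))).norm)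
  set M := ‖g w‖ with hMdef
  have hM : ∀ z : ℂ, ‖z‖ ≤ r → ‖g z‖ ≤ M := fun z hz => hmax (by simpa using hz)
  have hM0 : 0 ≤ M := norm_nonneg _
  have hcf := cauchy_coeff hs hr0 (by linarith) hM
  set δ := η ^ 2 / 2 with hδ
  have hδ0 : 0 < δ := by positivity
  have hδr : δ / r ≤ 1 / 2 := by
    rw [div_le_iff₀ hr0, hδ]; nlinarith
  have hδr2 : δ ≤ r / 2 := by rw [div_le_iff₀ hr0] at hδr; linarith
  have hbd : ∀ z : ℂ, ‖z‖ ≤ δ → ‖g z‖ ≤ m * A + 2 * M * (δ / r) ^ (m + 1) := by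
    intro z hz
    have hz1 : z ∈ ball (0:ℂ) 1 := by simp; linarith
    have h1 := hs z hz1
    have h2 := (h1.summable.sum_add_tsum_nat_add (m + 1)).trans h1.tsum_eq
    rw [← h2]
    refine (norm_add_le _ _).trans (add_le_add ?_ ?_)
    · rw [Finset.sum_range_succ']
      simp only [hb0, zero_mul, add_zero]
      refine (norm_sum_le _ _).trans ?_
      have : ∀ i ∈ Finset.range m, ‖b (i + 1) * z ^ (i + 1)‖ ≤ A := by
        intro i hi
        rw [norm_mul, norm_pow]
        have h3 := hbA (i + 1) (by simp at hi ⊢; omega)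
        have h4 : ‖z‖ ^ (i + 1) ≤ 1 := pow_le_one₀ (norm_nonneg _) (by linarith)
        calc _ ≤ A * 1 := by gcongr
          _ = A := mul_one A
      simpa using Finset.sum_le_card_nsmul _ _ _ this
    · have hgeo : HasSum (fun i : ℕ => M * (δ / r) ^ (m + 1) * (1 / 2 : ℝ) ^ i)
          (M * (δ / r) ^ (m + 1) * 2) := hasSum_geometric_two.mul_left _
      refine (tsum_of_norm_bounded hgeo fun i => ?_).trans (le_of_eq (by ring))
      rw [norm_mul, norm_pow]
      calc ‖b (i + (m + 1))‖ * ‖z‖ ^ (i + (m + 1))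
          ≤ M / r ^ (i + (m + 1)) * δ ^ (i + (m + 1)) := by gcongr; exact hcf _
        _ = M * (δ / r) ^ (m + 1) * (δ / r) ^ i := by
            rw [mul_assoc, ← pow_add, add_comm (m + 1) i, div_pow δ r, div_mul_eq_mul_div,
              mul_div_assoc]
        _ ≤ _ := by gcongr
  set K := (m + 1) * A + 2 * M * (δ / r) ^ (m + 1) with hK
  have hK0 : 0 < K := by positivity
  have hgr := growth han hg0 hv hδ0 (by linarith : δ < 1/2) hK0
    (fun z hz => (hbd z hz).trans_lt (by rw [hK]; linarith)) (by linarith : r < 1/2)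
    (by simpa using hw : ‖w‖ ≤ r)
  have hMK : M ≤ K * η⁻¹ ^ (2 * m + 1) := by
    rcases le_or_gt M K with h | h
    · have : 1 ≤ η⁻¹ ^ (2 * m + 1) := one_le_pow₀ ((one_le_inv₀ hη0).2 (by linarith))
      nlinarith
    · have hlog : 0 ≤ log (M / K) := log_nonneg ((one_le_div hK0).2 h.le)
      have e1 : 1 / (2 * δ) = η⁻¹ ^ 2 := by rw [hδ]; field_simp
      rw [e1, log_pow] at hgr
      have e2 : 1 - 4 * r = 2 * m / (2 * m + 1) := by rw [hr]; field_simp; ring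
      have h5 : log (M / K) * (2 * m / (2 * m + 1)) ≤ m * (2 * log η⁻¹) := by
        rw [← e2]
        refine le_trans ?_ (by exact_mod_cast hgr)
        apply mul_le_mul_of_nonneg_left _ hlog
        nlinarith
      have h6 : log (M / K) ≤ (2 * m + 1) * log η⁻¹ := by
        rw [mul_div_assoc', div_le_iff₀ (by positivity)] at h5
        have : (2 * (m:ℝ)) * log (M / K) ≤ (2 * m) * ((2 * m + 1) * log η⁻¹) := by linarith
        exact le_of_mul_le_mul_left this (by positivity)
      have h7 : log (M / K) ≤ log (η⁻¹ ^ (2 * m + 1)) := by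
        rw [log_pow]; push_cast; exact h6
      have hMp : 0 < M := hK0.trans h
      have h8 := (log_le_log_iff (by positivity) (by positivity)).1 h7
      rw [div_le_iff₀ hK0] at h8
      linarith
  have hkey : 2 * M * (δ / r) ^ (m + 1) * η⁻¹ ^ (2 * m + 1) = M / 2 := by
    have e3 : (δ / r) ^ (m + 1) = η ^ (2 * m + 1) * η / (2 * r) ^ (m + 1) := by
      have : δ / r = η ^ 2 / (2 * r) := by rw [hδ, div_div]
      rw [this, div_pow, ← pow_mul, ← pow_succ]
      rfl
    have e4 : (2 * r) ^ (m + 1) = 4 * η := by rw [hη]; ring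
    rw [e3, e4, inv_pow]; field_simp; ring
  have hM2 : M ≤ 2 * (m + 1) * η⁻¹ ^ (2 * m + 1) * A := by
    rw [hK, add_mul, hkey] at hMK; linarith
  calc _ ≤ M / r ^ (m + 1) := hcf _
    _ ≤ 2 * (m + 1) * η⁻¹ ^ (2 * m + 1) * A / r ^ (m + 1) := by gcongr
    _ = _ := by ring

lemma enat_sum_le {ι : Type*} (f : ι → ℕ∞) (S : Finset ι) : ∑ i ∈ S, f i ≤ ∑' i, f i := by
  have hs : Summable f :=
    ⟨_, tendsto_atTop_iSup (f := fun s : Finset ι => ∑ i ∈ s, f i)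
      (fun s t h => Finset.sum_le_sum_of_subset h)⟩
  exact hs.sum_le_tsum S (fun i _ => zero_le)

lemma sum_ord_le {F : ℂ → ℂ} {R : ℝ} (hR : 0 < R) (han : AnalyticOnNhd ℂ F (ball 0 R))
    (S : Finset ℂ) (hS : ∀ u ∈ S, u ∈ ball (0:ℂ) 1) :
    ∑ u ∈ S, analyticOrderAt (fun z => F (R * z)) u ≤ solCount F (ball 0 R) := by
  have hmem : ∀ u ∈ S, (R:ℂ) * u ∈ ball (0:ℂ) R := by
    intro u hu
    have := hS u hu
    rw [mem_ball_zero_iff] at this ⊢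
    rw [norm_mul, Complex.norm_real, Real.norm_of_nonneg hR.le]
    nlinarith
  have hRc : (R:ℂ) ≠ 0 := by exact_mod_cast hR.ne'
  let e : S ↪ ball (0:ℂ) R := ⟨fun u => ⟨R * u, hmem u u.2⟩, fun u v h => by
    have h1 : (R:ℂ) * u = R * v := congrArg Subtype.val h
    exact Subtype.ext (mul_left_cancel₀ hRc h1)⟩
  calc ∑ u ∈ S, analyticOrderAt (fun z => F (R * z)) u
      = ∑ u ∈ S.attach, ordAt F (e u) := by
        rw [← Finset.sum_attach]
        refine Finset.sum_congr rfl fun u _ => ?_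
        have ha : AnalyticAt ℂ F (R * u) := han _ (hmem u u.2)
        have h2 : AnalyticAt ℂ (fun z : ℂ => (R:ℂ) * z) u := by fun_prop
        have h3 : deriv (fun z : ℂ => (R:ℂ) * z) u ≠ 0 := by
          rw [deriv_const_mul_id']; exact hRc
        have := analyticOrderAt_comp_of_deriv_ne_zero (f := F) h2 h3
        show _ = ordAt F (R * u)
        rw [ordAt, dif_pos ha]
        exact this
    _ = ∑ v ∈ S.attach.map e, ordAt F v := by rw [Finset.sum_map]
    _ ≤ _ := enat_sum_le (fun v : ball (0:ℂ) R => ordAt F v) _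

lemma hval_of {m s : ℕ} {R : ℝ} (hR : 0 < R) {a : ℕ → ℂ} {f : ℂ → ℂ}
    (hf : ∀ z ∈ ball (0:ℂ) R, HasSum (fun k => a k * z ^ k) (f z))
    (hv : IsSPValentOn f (ball 0 R) s (s + m)) :
    ∃ g : ℂ → ℂ, (∀ z ∈ ball (0:ℂ) 1,
      HasSum (fun i => (if i = 0 then 0 else a (s + i) * R ^ (s + i)) * z ^ i) (g z)) ∧
      Hval g m := by
  have hRc : (R:ℂ) ≠ 0 := by exact_mod_cast hR.ne'
  set b : ℕ → ℂ := fun i => if i = 0 then 0 else a (s + i) * R ^ (s + i) with hb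
  have hRz : ∀ z ∈ ball (0:ℂ) 1, (R:ℂ) * z ∈ ball (0:ℂ) R := by
    intro u this
    rw [mem_ball_zero_iff] at this ⊢
    rw [norm_mul, Complex.norm_real, Real.norm_of_nonneg hR.le]
    nlinarith
  have htail : ∀ z ∈ ball (0:ℂ) 1, HasSum (fun i => z ^ s * (b i * z ^ i))
      (f (R * z) - ∑ i ∈ Finset.range (s + 1), a i * (R * z) ^ i) := by
    intro z hz
    have h1 := hf _ (hRz z hz)
    have h2 := (hasSum_nat_add_iff' (s + 1)).2 h1
    refine (hasSum_nat_add_iff' (f := fun i => z ^ s * (b i * z ^ i)) 1).1 ?_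
    simp only [Finset.range_one, Finset.sum_singleton]
    have h0 : z ^ s * (b 0 * z ^ 0) = 0 := by simp [hb]
    rw [h0, sub_zero]
    refine h2.congr_fun ?_
    intro n
    simp only [hb, Nat.add_eq_zero_iff, one_ne_zero, and_false, if_false]
    rw [show n + (s + 1) = s + (n + 1) by ring]
    rw [mul_pow, pow_add z]; ring
  have hsum : ∀ z ∈ ball (0:ℂ) 1, Summable (fun i => b i * z ^ i) := by
    intro z hz
    by_cases h0 : z = 0
    · subst h0
      refine summable_of_ne_finset_zero (s := {0}) fun i hi => ?_
      simp at hi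
      simp [hi]
    · have := (htail z hz).summable
      exact (summable_mul_left_iff (pow_ne_zero s h0)).1 this
  let g : ℂ → ℂ := fun z => ∑' i, b i * z ^ i
  have hg : ∀ z ∈ ball (0:ℂ) 1, HasSum (fun i => b i * z ^ i) (g z) :=
    fun z hz => (hsum z hz).hasSum
  refine ⟨g, hg, ?_⟩
  intro c hc S hS
  let P : Polynomial ℂ := ∑ i ∈ Finset.range (s + 1), Polynomial.C (a i) * Polynomial.X ^ i
    + Polynomial.C (c / R ^ s) * Polynomial.X ^ s
  have hPdeg : P.degree ≤ (s : ℕ) := by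
    refine (Polynomial.degree_add_le _ _).trans (max_le ?_ (Polynomial.degree_C_mul_X_pow_le _ _))
    refine (Polynomial.degree_sum_le _ _).trans (Finset.sup_le fun i hi => ?_)
    refine (Polynomial.degree_C_mul_X_pow_le _ _).trans ?_
    have : i ≤ s := by simpa [Nat.lt_succ_iff] using hi
    exact_mod_cast this
  have hPe : ∀ w, P.eval w = ∑ i ∈ Finset.range (s + 1), a i * w ^ i + c / R ^ s * w ^ s := by
    intro w
    simp [P, Polynomial.eval_finsetSum]
  have hF := hv P hPdeg
  set F : ℂ → ℂ := fun z => f z - P.eval z with hFdef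
  have hfan : AnalyticOnNhd ℂ f (ball 0 R) := by
    have := (hasFPS hR hf).analyticOnNhd
    rwa [Metric.eball_ofReal] at this
  have hFan : AnalyticOnNhd ℂ F (ball 0 R) := by
    refine hfan.sub ?_
    intro z _
    exact (Polynomial.differentiable P).analyticAt z
  have hgan : AnalyticOnNhd ℂ g (ball 0 1) := by
    have := (hasFPS one_pos hg).analyticOnNhd
    rwa [Metric.eball_ofReal] at this
  have hid : ∀ z ∈ ball (0:ℂ) 1, F (R * z) = z ^ s * (g z - c) := by
    intro z hz
    have h1 := (htail z hz).unique ((hg z hz).mul_left (z ^ s))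
    simp only [hFdef, hPe]
    rw [mul_sub, ← h1]
    field_simp
    ring
  have hord : ∀ u ∈ ball (0:ℂ) 1, analyticOrderAt (fun z => F (R * z)) u
      = analyticOrderAt (fun z : ℂ => z ^ s) u + analyticOrderAt (fun z => g z - c) u := by
    intro u hu
    have h1 : (fun z => F (R * z)) =ᶠ[nhds u] ((fun z : ℂ => z ^ s) * fun z => g z - c) := by
      filter_upwards [isOpen_ball.mem_nhds hu] with z hz
      exact hid z hz
    have h2 : AnalyticAt ℂ (fun z : ℂ => z ^ s) u := by fun_prop
    have h3 : AnalyticAt ℂ (fun z => g z - c) u := (hgan u hu).sub analyticAt_const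
    rw [analyticOrderAt_congr h1, analyticOrderAt_mul h2 h3]
  have hz0 : analyticOrderAt (fun z : ℂ => z ^ s) 0 = s := by
    have := analyticOrderAt_pow (f := (id : ℂ → ℂ)) (z₀ := 0) analyticAt_id s
    rw [analyticOrderAt_id] at this
    have h2 : (fun z : ℂ => z ^ s) = id ^ s := rfl
    rw [h2, this]; simp
  have hle := (sum_ord_le hR hFan (insert 0 S) (by
    intro u hu
    rcases Finset.mem_insert.1 hu with h | h
    · simp [h]
    · exact hS u h)).trans hF
  have hle2 : (s : ℕ∞) + ∑ u ∈ S, analyticOrderAt (fun z => g z - c) u ≤ s + m := by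
    refine le_trans ?_ (by exact_mod_cast hle)
    have : ∑ u ∈ insert 0 S, analyticOrderAt (fun z => F (R * z)) u
        = ∑ u ∈ insert 0 S, analyticOrderAt (fun z : ℂ => z ^ s) u
          + ∑ u ∈ insert 0 S, analyticOrderAt (fun z => g z - c) u := by
      rw [← Finset.sum_add_distrib]
      refine Finset.sum_congr rfl fun u hu => hord u ?_
      rcases Finset.mem_insert.1 hu with h | h
      · simp [h]
      · exact hS u h
    rw [this]
    refine add_le_add ?_ (Finset.sum_le_sum_of_subset (Finset.subset_insert _ _))
    rw [← hz0]
    exact Finset.single_le_sum (f := fun u => analyticOrderAt (fun z : ℂ => z ^ s) u)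
      (fun _ _ => zero_le) (Finset.mem_insert_self _ _)
  exact (ENat.add_le_add_iff_left (ENat.natCast_ne_top s)).1 hle2

lemma coeff_bound (m : ℕ) (hm : 0 < m) : ∃ C : ℝ, 0 < C ∧
    ∀ (R : ℝ), 0 < R → ∀ (a : ℕ → ℂ) (f : ℂ → ℂ),
      (∀ z ∈ ball (0 : ℂ) R, HasSum (fun k => a k * z ^ k) (f z)) →
      (∀ s : ℕ, IsSPValentOn f (ball (0 : ℂ) R) s (s + m)) →
      ∀ k : ℕ, m + 1 ≤ k → ∃ j ∈ Finset.Icc 1 m, ‖a k‖ ≤ C * R⁻¹ ^ j * ‖a (k - j)‖ := by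
  obtain ⟨C, hC, hcore⟩ := core m hm
  refine ⟨C, hC, fun R hR a f hf hv k hk => ?_⟩
  obtain ⟨s, rfl⟩ : ∃ s, k = s + (m + 1) := ⟨k - (m + 1), by omega⟩
  obtain ⟨g, hg, hH⟩ := hval_of hR hf (hv s)
  obtain ⟨i, hi, hmax⟩ := Finset.exists_max_image (Finset.Icc 1 m)
    (fun i => ‖a (s + i)‖ * R ^ (s + i)) ⟨1, by simp; omega⟩
  have hnorm : ∀ i, i ≠ 0 → ‖(if i = 0 then (0:ℂ) else a (s + i) * (R:ℂ) ^ (s + i))‖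
      = ‖a (s + i)‖ * R ^ (s + i) := by
    intro i hi
    rw [if_neg hi, norm_mul, norm_pow, Complex.norm_real, Real.norm_of_nonneg hR.le]
  have key : ∀ A : ℝ, 0 < A → ‖a (s + i)‖ * R ^ (s + i) ≤ A →
      ‖a (s + (m + 1))‖ * R ^ (s + (m + 1)) ≤ C * A := by
    intro A hA hle
    have := hcore _ g hg (by simp) hH A hA (fun i' hi' => by
      rw [hnorm i' (by simp at hi'; omega)]
      exact (hmax i' hi').trans hle)
    rwa [hnorm _ (by omega)] at this
  have key2 : ‖a (s + (m + 1))‖ * R ^ (s + (m + 1)) ≤ C * (‖a (s + i)‖ * R ^ (s + i)) := by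
    refine le_of_forall_pos_le_add fun ε hε => ?_
    have := key (‖a (s + i)‖ * R ^ (s + i) + ε / C) (by positivity)
      (by have : 0 < ε / C := by positivity
          linarith)
    rwa [mul_add, mul_div_cancel₀ _ hC.ne'] at this
  simp only [Finset.mem_Icc] at hi
  refine ⟨m + 1 - i, by simp; omega, ?_⟩
  obtain ⟨j, hj⟩ : ∃ j, m + 1 = i + j := ⟨m + 1 - i, by omega⟩
  rw [hj, show s + (i + j) - (i + j - i) = s + i by omega, show i + j - i = j by omega]
  rw [hj, ← add_assoc, pow_add R (s + i) j] at key2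
  have hp : 0 < R ^ (s + i) := by positivity
  have hq : 0 < R ^ j := by positivity
  have h3 : ‖a (s + i + j)‖ * R ^ j ≤ C * ‖a (s + i)‖ := by
    refine le_of_mul_le_mul_right ?_ hp
    nlinarith
  rw [← add_assoc, inv_pow]
  calc _ ≤ C * ‖a (s + i)‖ / R ^ j := (le_div_iff₀ hq).2 h3
    _ = _ := by field_simp

end Aux

theorem statement5 (m : ℕ) (hm : 0 < m) :
    ∃ C : ℝ, 0 < C ∧
      ∀ (R : ℝ), 0 < R → ∀ (a : ℕ → ℂ) (f : ℂ → ℂ),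
        (∀ z ∈ Metric.ball (0 : ℂ) R, HasSum (fun k => a k * z ^ k) (f z)) →
        (∀ s : ℕ, IsSPValentOn f (Metric.ball (0 : ℂ) R) s (s + m)) →
        ∃ c : ℕ → ℕ → ℂ,
          (∀ k : ℕ, m + 1 ≤ k → a k = ∑ j ∈ Finset.Icc 1 m, c j k * a (k - j)) ∧
          (∀ j ∈ Finset.Icc 1 m, ∀ k : ℕ, m + 1 ≤ k →
            ‖c j k‖ ≤ C * R⁻¹ ^ j) := by
  obtain ⟨C, hC, hmain⟩ := coeff_bound m hm
  refine ⟨C, hC, fun R hR a f hf hv => ?_⟩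
  have h1 : ∀ k, ∃ j, m + 1 ≤ k → j ∈ Finset.Icc 1 m ∧ ‖a k‖ ≤ C * R⁻¹ ^ j * ‖a (k - j)‖ := by
    intro k
    by_cases hk : m + 1 ≤ k
    · obtain ⟨j, hj, h⟩ := hmain R hR a f hf hv k hk
      exact ⟨j, fun _ => ⟨hj, h⟩⟩
    · exact ⟨0, fun h => absurd h hk⟩
  choose j0 hj0 using h1
  refine ⟨fun j k => if j = j0 k then a k / a (k - j) else 0, ?_, ?_⟩
  · intro k hk
    obtain ⟨hj, hle⟩ := hj0 k hk
    rw [Finset.sum_eq_single_of_mem (j0 k) hj (fun j _ hne => by simp [hne])]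
    simp only [if_true]
    by_cases h0 : a (k - j0 k) = 0
    · rw [h0, norm_zero, mul_zero] at hle
      rw [h0, mul_zero]
      exact norm_le_zero_iff.1 hle
    · rw [div_mul_cancel₀ _ h0]
  · intro j hj k hk
    obtain ⟨_, hle⟩ := hj0 k hk
    show ‖(if j = j0 k then a k / a (k - j) else 0)‖ ≤ _
    split_ifs with h
    · subst h
      rw [norm_div]
      exact div_le_of_le_mul₀ (norm_nonneg _) (by positivity) hle
    · rw [norm_zero]; positivity
end

section
/- (Hayman) Let g(z) = a_0 + a_1 z + ⋯ be analytic, nowhere vanishing, and p-valent in the unit disk D_1 = {z ∈ ℂ : |z| < 1}. Then for every z ∈ D_1, ((1−|z|)/(1+|z|))^{2p} ≤ |g(z)/a_0| ≤ ((1+|z|)/(1−|z|))^{2p}. -/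
open Metric Set Filter Topology in
lemma hay_sum_le (f : ℂ → ℕ∞) (Ω : Set ℂ) (s : Finset ℂ) (hs : ∀ z ∈ s, z ∈ Ω) :
    ∑ z ∈ s, f z ≤ ∑' z : Ω, f z := by
  classical
  have hsum : Summable (fun z : Ω => f z) :=
    ⟨_, hasSum_of_isLUB _ (isLUB_iSup (f := fun t : Finset Ω => ∑ z ∈ t, f z))⟩
  have h := hsum.sum_le_tsum (s.subtype (· ∈ Ω)) (fun _ _ => zero_le)
  refine le_trans (le_of_eq ?_) h
  rw [Finset.sum_subtype_of_mem (f := f) hs]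

lemma hay_ordAt (g : ℂ → ℂ) (z : ℂ) : ordAt g z = analyticOrderAt g z := by
  unfold ordAt
  split_ifs with h
  · rfl
  · rw [analyticOrderAt_of_not_analyticAt h]

/-- Consequences of `p`-valence used below. -/
lemma hay_val (g : ℂ → ℂ) (p : ℕ) (Ω : Set ℂ)
    (hg : AnalyticOnNhd ℂ g Ω) (hval : IsPValentOn g Ω p) (c : ℂ) (s : Finset ℂ)
    (hs : ∀ z ∈ s, z ∈ Ω ∧ g z = c) :
    s.card ≤ p ∧ ∀ z₀ ∈ s, deriv g z₀ = 0 → s.card < p := by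
  classical
  have h1 : ∑ z ∈ s, analyticOrderAt (fun z => g z - c) z ≤ (p : ℕ∞) := by
    have := hay_sum_le (fun z => ordAt (fun z => g z - c) z) Ω s (fun z hz => (hs z hz).1)
    simp only [hay_ordAt] at this
    refine this.trans ?_
    have := hval c
    simpa only [solCount, hay_ordAt] using this
  have han : ∀ z ∈ s, AnalyticAt ℂ (fun z => g z - c) z := fun z hz =>
    (hg z (hs z hz).1).sub analyticAt_const
  have h2 : ∀ z ∈ s, (1 : ℕ∞) ≤ analyticOrderAt (fun z => g z - c) z := by
    intro z hz
    rw [Order.one_le_iff_ne_zero, (han z hz).analyticOrderAt_ne_zero]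
    simp [(hs z hz).2]
  have h3 : (s.card : ℕ∞) ≤ ∑ z ∈ s, analyticOrderAt (fun z => g z - c) z := by
    have := Finset.sum_le_sum h2
    simpa using this
  refine ⟨by exact_mod_cast h3.trans h1, fun z₀ hz₀ hd => ?_⟩
  have h4 : (2 : ℕ∞) ≤ analyticOrderAt (fun z => g z - c) z₀ := by
    have := (natCast_le_analyticOrderAt_iff_iteratedDeriv_eq_zero (n := 2) (han z₀ hz₀)).2 ?_
    · exact_mod_cast this
    · intro i hi
      interval_cases i
      · simp [(hs z₀ hz₀).2]
      · simp [hd]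
  have h5 : ((s.card + 1 : ℕ) : ℕ∞) ≤ ∑ z ∈ s, analyticOrderAt (fun z => g z - c) z := by
    rw [← Finset.add_sum_erase _ _ hz₀]
    have h6 := Finset.sum_le_sum (fun z hz => h2 z (Finset.mem_of_mem_erase hz) : ∀ z ∈ s.erase z₀, _)
    have h7 := add_le_add h4 h6
    refine le_trans (le_of_eq ?_) h7
    have := Finset.card_erase_add_one hz₀
    rw [← this]
    simp
    ring
  have : ((s.card + 1 : ℕ) : ℕ∞) ≤ p := h5.trans h1
  have : s.card + 1 ≤ p := by exact_mod_cast this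
  omega

open Complex Metric in
/-- `exp k` omits a point of each circle centred at the origin. -/
lemma hay_omit (k : ℂ → ℂ) (p : ℕ) (hp : p ≠ 0) (Ω : Set ℂ) (hΩ : IsOpen Ω)
    (hk : AnalyticOnNhd ℂ k Ω)
    (hV : ∀ (c : ℂ) (s : Finset ℂ), (∀ z ∈ s, z ∈ Ω ∧ exp (p * k z) = c) →
      s.card ≤ p ∧ ∀ z₀ ∈ s, deriv k z₀ = 0 → s.card < p) (R : ℝ) (hR : 0 ≤ R) :
    ∃ e : ℂ, ‖e‖ = R ∧ ∀ z ∈ Ω, exp (k z) ≠ e := by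
  classical
  rcases hR.eq_or_lt with rfl | hR
  · exact ⟨0, by simp, fun z _ => exp_ne_zero _⟩
  by_contra! hcon
  choose! σ hσ using hcon
  have key : ∀ e : ℂ, ‖e‖ = R → (∀ z ∈ Ω, exp (k z) = e → z = σ e) ∧ deriv k (σ e) ≠ 0 := by
    intro e he
    have he0 : e ≠ 0 := by rintro rfl; simp at he; exact hR.ne he
    set T := Polynomial.nthRootsFinset p (1 : ℂ) with hT
    have hTc : T.card = p := (Complex.isPrimitiveRoot_exp p hp).card_nthRootsFinset
    have hTm : ∀ ζ ∈ T, ζ ^ p = 1 := fun ζ hζ =>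
      (Polynomial.mem_nthRootsFinset (Nat.pos_of_ne_zero hp) 1).1 hζ
    have hTn : ∀ ζ ∈ T, ‖e * ζ‖ = R := by
      intro ζ hζ
      rw [norm_mul, he, Complex.norm_eq_one_of_pow_eq_one (hTm ζ hζ) hp, mul_one]
    have h1T : (1 : ℂ) ∈ T := (Polynomial.mem_nthRootsFinset (Nat.pos_of_ne_zero hp) 1).2 (by simp)
    set S := T.image (fun ζ => σ (e * ζ)) with hS
    have hSc : S.card = p := by
      rw [hS, Finset.card_image_of_injOn, hTc]
      intro a ha b hb hab
      simp only at hab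
      have h1 := (hσ _ (hTn a ha)).2
      have h2 := (hσ _ (hTn b hb)).2
      rw [hab, h2] at h1
      exact (mul_left_cancel₀ he0 h1).symm
    have hSm : ∀ z ∈ S, z ∈ Ω ∧ exp (p * k z) = e ^ p := by
      intro z hz
      obtain ⟨ζ, hζ, rfl⟩ := Finset.mem_image.1 hz
      refine ⟨(hσ _ (hTn ζ hζ)).1, ?_⟩
      rw [exp_nat_mul, (hσ _ (hTn ζ hζ)).2, mul_pow, hTm ζ hζ, mul_one]
    have hσS : σ e ∈ S := Finset.mem_image.2 ⟨1, h1T, by simp⟩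
    constructor
    · intro z hz hze
      by_cases hzS : z ∈ S
      · obtain ⟨ζ, hζ, rfl⟩ := Finset.mem_image.1 hzS
        rw [(hσ _ (hTn ζ hζ)).2] at hze
        rw [hze]
      · exfalso
        have := (hV (e ^ p) (insert z S) ?_).1
        · rw [Finset.card_insert_of_notMem hzS] at this
          omega
        · intro w hw
          rcases Finset.mem_insert.1 hw with rfl | hw
          · exact ⟨hz, by rw [exp_nat_mul, hze]⟩
          · exact hSm w hw
    · intro hd
      have := (hV (e ^ p) S hSm).2 _ hσS hd
      omega
  -- the continuous logarithm
  set c : ℝ → ℂ := fun θ => R * exp (θ * I) with hc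
  have hcn : ∀ θ, ‖c θ‖ = R := by
    intro θ; simp [hc, norm_exp_ofReal_mul_I, abs_of_pos hR]
  have hcd : ∀ θ, HasDerivAt c (c θ * I) θ := by
    intro θ
    have h1 : HasDerivAt (fun θ : ℝ => (θ : ℂ) * I) I θ := by
      simpa using (hasDerivAt_id θ).ofReal_comp.mul_const I
    have := (h1.cexp).const_mul (R : ℂ)
    refine this.congr_deriv ?_
    simp only [hc]; ring
  set M : ℝ → ℂ := fun θ => k (σ (c θ)) with hM
  have hMe : ∀ θ, exp (M θ) = c θ := fun θ => (hσ _ (hcn θ)).2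
  have hMd : ∀ θ, DifferentiableAt ℝ M θ := by
    intro θ
    set z₀ := σ (c θ) with hz₀
    have hz₀Ω : z₀ ∈ Ω := (hσ _ (hcn θ)).1
    have hd : HasStrictDerivAt (fun z => exp (k z)) (exp (k z₀) * deriv k z₀) z₀ :=
      (hk z₀ hz₀Ω).hasStrictDerivAt.cexp
    have hne : exp (k z₀) * deriv k z₀ ≠ 0 := mul_ne_zero (exp_ne_zero _) (key _ (hcn θ)).2
    set L := hd.localInverse _ _ _ hne with hL
    have hL1 : HasStrictDerivAt L _ (exp (k z₀)) := hd.to_localInverse hne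
    have hL2 : ∀ᶠ w in nhds (exp (k z₀)), exp (k (L w)) = w := hd.eventually_right_inverse hne
    have hL3 : L (exp (k z₀)) = z₀ := (hd.eventually_left_inverse hne).self_of_nhds
    have hez : exp (k z₀) = c θ := hMe θ
    have hL4 : ∀ᶠ w in nhds (exp (k z₀)), L w ∈ Ω := by
      have := hL1.hasDerivAt.continuousAt
      exact this.eventually (by rw [hL3]; exact hΩ.mem_nhds hz₀Ω)
    rw [hez] at hL1 hL2 hL3 hL4
    have hev : (fun θ' => k (L (c θ'))) =ᶠ[nhds θ] M := by
      filter_upwards [(hcd θ).continuousAt.eventually hL2, (hcd θ).continuousAt.eventually hL4]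
        with θ' h1 h2
      simp only [hM]
      rw [(key _ (hcn θ')).1 _ h2 h1]
    have h5 : HasDerivAt k (deriv k z₀) (L (c θ)) := by
      rw [hL3]; exact (hk z₀ hz₀Ω).differentiableAt.hasDerivAt
    have h6 := (h5.comp (c θ) hL1.hasDerivAt).comp_of_eq θ (hcd θ) rfl
    exact (h6.congr_of_eventuallyEq hev.symm).differentiableAt
  have hMd' : ∀ θ, HasDerivAt (fun θ : ℝ => M θ - θ * I) 0 θ := by
    intro θ
    have h1 := (hMd θ).hasDerivAt
    have h2 := h1.cexp
    simp only [hMe] at h2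
    have h3 := h2.unique (hcd θ)
    have hc0 : c θ ≠ 0 := by rw [← hMe]; exact exp_ne_zero _
    have h4 := mul_left_cancel₀ hc0 h3
    rw [h4] at h1
    have h5 : HasDerivAt (fun θ : ℝ => (θ : ℂ) * I) I θ := by
      simpa using (hasDerivAt_id θ).ofReal_comp.mul_const I
    have h6 := h1.sub h5
    rw [sub_self] at h6
    exact h6
  have hconst := is_const_of_deriv_eq_zero (fun θ => (hMd' θ).differentiableAt)
    (fun θ => (hMd' θ).deriv) 0 (2 * Real.pi)
  have hper : c (2 * Real.pi) = c 0 := by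
    simp [hc, exp_two_pi_mul_I]
  have : M (2 * Real.pi) = M 0 := by simp only [hM, hper]
  simp only [this] at hconst
  have h7 : (2 * Real.pi * I : ℂ) = 0 := by
    have : M 0 - 0 = M 0 - 2 * Real.pi * I := by simpa using hconst
    exact (sub_right_injective this).symm
  exact Complex.two_pi_I_ne_zero h7

open Complex Metric in
lemma hay_exists_log (g : ℂ → ℂ) (p : ℕ) (hp : p ≠ 0)
    (hg : AnalyticOnNhd ℂ g (ball 0 1)) (hnz : ∀ z ∈ ball (0 : ℂ) 1, g z ≠ 0) :
    ∃ k : ℂ → ℂ, AnalyticOnNhd ℂ k (ball 0 1) ∧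
      ∀ z ∈ ball (0 : ℂ) 1, g z = exp (p * k z) := by
  have hp' : (p : ℂ) ≠ 0 := by exact_mod_cast hp
  have h1 : DifferentiableOn ℂ (fun z => deriv g z / (p * g z)) (ball 0 1) := by
    intro z hz
    exact ((hg.deriv z hz).differentiableAt.div
      ((hg z hz).differentiableAt.const_mul _)
      (mul_ne_zero hp' (hnz z hz))).differentiableWithinAt
  obtain ⟨k₀, hk₀⟩ := h1.isExactOn_ball
  have h0 : (0 : ℂ) ∈ ball (0 : ℂ) 1 := by simp
  set k : ℂ → ℂ := fun z => k₀ z - k₀ 0 + log (g 0) / p with hk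
  have hkd : ∀ z ∈ ball (0 : ℂ) 1, HasDerivAt k (deriv g z / (p * g z)) z := by
    intro z hz
    exact ((hk₀ z hz).sub_const _).add_const _
  have hdo : DifferentiableOn ℂ k (ball 0 1) :=
    fun z hz => (hkd z hz).differentiableAt.differentiableWithinAt
  refine ⟨k, hdo.analyticOnNhd isOpen_ball, ?_⟩
  have h2 : ∀ z ∈ ball (0 : ℂ) 1, HasDerivAt (fun z => g z * exp (-(p * k z))) 0 z := by
    intro z hz
    have := (hg z hz).differentiableAt.hasDerivAt.mul (((hkd z hz).const_mul (p : ℂ)).neg.cexp)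
    refine this.congr_deriv ?_
    have := hnz z hz
    field_simp
    ring
  intro z hz
  have h3 := (convex_ball (0 : ℂ) 1).is_const_of_fderivWithin_eq_zero (𝕜 := ℂ)
    (f := fun z => g z * exp (-(p * k z)))
    (fun w hw => (h2 w hw).differentiableAt.differentiableWithinAt) (fun w hw => by
      rw [fderivWithin_of_isOpen isOpen_ball hw, (h2 w hw).hasFDerivAt.fderiv]; simp) hz h0
  have h4 : k 0 = log (g 0) / p := by simp [hk]
  simp only [h4] at h3
  rw [mul_div_cancel₀ _ hp', exp_neg (log _), exp_log (hnz 0 h0), mul_inv_cancel₀ (hnz 0 h0),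
    exp_neg] at h3
  have := exp_ne_zero (p * k z)
  field_simp at h3
  exact h3

open MeasureTheory in
lemma hay_cos_ae (ψ : ℝ) : ∀ᵐ φ : ℝ, Real.cos φ ≠ Real.cos ψ := by
  have h : {φ : ℝ | Real.cos φ = Real.cos ψ} ⊆
      (Set.range fun k : ℤ => ψ - 2 * k * Real.pi) ∪ (Set.range fun k : ℤ => 2 * k * Real.pi - ψ) := by
    intro φ hφ
    obtain ⟨k, hk | hk⟩ := Real.cos_eq_cos_iff.1 hφ
    · left; exact ⟨k, by simp only; linarith⟩
    · right; exact ⟨k, by simp only; linarith⟩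
  have hc : {φ : ℝ | Real.cos φ = Real.cos ψ}.Countable :=
    ((Set.countable_range _).union (Set.countable_range _)).mono h
  have := hc.measure_zero volume
  rw [ae_iff]
  simpa using this

open MeasureTheory in
lemma hay_cos_int (ψ : ℝ) : ∃ q : ℝ → ℝ, IntervalIntegrable q volume 0 (2 * Real.pi) ∧
    ∫ φ in 0..(2 * Real.pi), q φ = - (2 * Real.pi * Real.log 4) ∧
    ∀ φ, Real.cos φ ≠ Real.cos ψ → q φ = Real.log (|Real.cos φ - Real.cos ψ| / 2) := by
  set a : ℂ := Complex.exp (ψ * Complex.I) with ha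
  set b : ℂ := Complex.exp (-ψ * Complex.I) with hb
  have hna : ‖a‖ = 1 := Complex.norm_exp_ofReal_mul_I ψ
  have hnb : ‖b‖ = 1 := by
    have := Complex.norm_exp_ofReal_mul_I (-ψ)
    rw [hb]; simpa using this
  have hab : a * b = 1 := by rw [ha, hb, ← Complex.exp_add]; simp
  have hab2 : a + b = 2 * Complex.cos ψ := by rw [Complex.two_cos, ha, hb]
  have i1 : IntervalIntegrable (fun φ => Real.log ‖circleMap 0 1 φ - a‖) volume 0 (2 * Real.pi) :=
    circleIntegrable_log_norm_sub_const (a := a) (c := 0) 1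
  have i2 : IntervalIntegrable (fun φ => Real.log ‖circleMap 0 1 φ - b‖) volume 0 (2 * Real.pi) :=
    circleIntegrable_log_norm_sub_const (a := b) (c := 0) 1
  have e1 : ∫ φ in 0..(2 * Real.pi), Real.log ‖circleMap 0 1 φ - a‖ = 0 := by
    have := circleAverage_log_norm_sub_const₁ hna
    rw [Real.circleAverage_def, smul_eq_zero] at this
    exact this.resolve_left (by positivity)
  have e2 : ∫ φ in 0..(2 * Real.pi), Real.log ‖circleMap 0 1 φ - b‖ = 0 := by
    have := circleAverage_log_norm_sub_const₁ hnb
    rw [Real.circleAverage_def, smul_eq_zero] at this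
    exact this.resolve_left (by positivity)
  refine ⟨fun φ => Real.log ‖circleMap 0 1 φ - a‖ + Real.log ‖circleMap 0 1 φ - b‖ - Real.log 4,
    (i1.add i2).sub intervalIntegrable_const, ?_, ?_⟩
  · rw [intervalIntegral.integral_sub (i1.add i2) intervalIntegrable_const,
      intervalIntegral.integral_add i1 i2, e1, e2]
    simp
  · intro φ hφ
    set w : ℂ := circleMap 0 1 φ with hw
    have hw' : w = Complex.exp (φ * Complex.I) := by simp [hw, circleMap]
    have hnw : ‖w‖ = 1 := by rw [hw']; exact Complex.norm_exp_ofReal_mul_I φ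
    have hw2 : w * w + 1 = 2 * Complex.cos φ * w := by
      rw [Complex.two_cos, ← hw', add_mul]
      rw [hw', ← Complex.exp_add (-φ * Complex.I)]; simp
    have hprod : (w - a) * (w - b) = 2 * w * ((Real.cos φ - Real.cos ψ : ℝ) : ℂ) := by
      push_cast
      linear_combination hw2 - w * hab2 + hab
    have hn : ‖w - a‖ * ‖w - b‖ = 2 * |Real.cos φ - Real.cos ψ| := by
      rw [← norm_mul, hprod]; simp only [norm_mul, hnw, Complex.norm_real]; simp
    have hne : |Real.cos φ - Real.cos ψ| ≠ 0 := abs_ne_zero.2 (sub_ne_zero.2 hφ)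
    have hne1 : ‖w - a‖ * ‖w - b‖ ≠ 0 := by rw [hn]; positivity
    show Real.log ‖w - a‖ + Real.log ‖w - b‖ - Real.log 4 = _
    rw [← Real.log_mul (left_ne_zero_of_mul hne1) (right_ne_zero_of_mul hne1), hn,
      ← Real.log_div (by positivity) (by norm_num)]
    congr 1; ring

open Complex in
lemma hay_select (K : Set ℂ) (hK : IsClosed K)
    (h : ∀ R : ℝ, 0 ≤ R → ∃ e : ℂ, ‖e‖ = R ∧ e ∉ K) :
    ∃ E : ℝ → ℂ, Measurable E ∧ ∀ R, 0 ≤ R → ‖E R‖ = R ∧ E R ∉ K := by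
  classical
  have h' : ∀ R : ℝ, ∃ u : Circle, (R : ℂ) * u ∉ K := by
    intro R
    obtain ⟨e, he, heK⟩ := h |R| (abs_nonneg R)
    rcases eq_or_ne R 0 with rfl | hR
    · have : e = 0 := by simpa using he
      exact ⟨1, by simpa [this] using heK⟩
    · have hRC : (R : ℂ) ≠ 0 := by exact_mod_cast hR
      refine ⟨⟨e / R, ?_⟩, ?_⟩
      · show e / R ∈ Metric.sphere (0 : ℂ) 1
        rw [mem_sphere_zero_iff_norm, norm_div, he, norm_real, Real.norm_eq_abs]
        exact div_self (abs_ne_zero.2 hR)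
      · simpa [mul_div_cancel₀ _ hRC] using heK
  set q := TopologicalSpace.denseSeq Circle with hq
  have h'' : ∀ R : ℝ, ∃ n : ℕ, (R : ℂ) * q n ∉ K := by
    intro R
    obtain ⟨u, hu⟩ := h' R
    have hopen : IsOpen {u : Circle | (R : ℂ) * u ∉ K} :=
      hK.isOpen_compl.preimage (by fun_prop : Continuous fun u : Circle => (R : ℂ) * u)
    obtain ⟨n, hn⟩ := (TopologicalSpace.denseRange_denseSeq Circle).exists_mem_open hopen ⟨u, hu⟩
    exact ⟨n, hn⟩
  refine ⟨fun R => (R : ℂ) * q (Nat.find (h'' R)), ?_, fun R hR => ⟨?_, Nat.find_spec (h'' R)⟩⟩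
  · refine Measurable.find (f := fun n (R : ℝ) => (R : ℂ) * q n) (p := fun n R => (R : ℂ) * q n ∉ K)
      (fun n => by fun_prop) (fun n => ?_) h''
    exact (hK.isOpen_compl.preimage (by fun_prop : Continuous fun R : ℝ => (R : ℂ) * q n)).measurableSet
  · simp only [norm_mul, norm_real, Circle.norm_coe, mul_one, Real.norm_eq_abs, abs_of_nonneg hR]

open Metric MeromorphicOn in
lemma hay_jensen (F : ℂ → ℂ) (hF : AnalyticOnNhd ℂ F (closedBall 0 1)) (h0 : F 0 ≠ 0) :
    Real.log ‖F 0‖ ≤ Real.circleAverage (Real.log ‖F ·‖) 0 1 := by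
  have hF' : AnalyticOnNhd ℂ F (closedBall 0 |1|) := by simpa using hF
  rw [hF'.circleAverage_log_norm one_ne_zero h0, le_add_iff_nonneg_left]
  refine finsum_nonneg fun u => ?_
  by_cases hu : u ∈ closedBall (0 : ℂ) |1|
  · have hdv : (0 : ℤ) ≤ divisor F (closedBall 0 |1|) u :=
      AnalyticOnNhd.divisor_nonneg hF' u
    have : ‖u‖ ≤ 1 := by simpa using hu
    refine mul_nonneg (by exact_mod_cast hdv) ?_
    rcases eq_or_ne u 0 with rfl | h
    · simp
    · apply Real.log_nonneg
      rw [one_mul]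
      simp only [zero_sub, norm_neg]
      exact (one_le_inv₀ (norm_pos_iff.2 h)).2 this
  · rw [Function.locallyFinsuppWithin.apply_eq_zero_of_notMem _ hu]; simp

open Metric in
lemma hay_jensen' (F : ℂ → ℂ) (hF : AnalyticOnNhd ℂ F (closedBall 0 1)) (h0 : F 0 = 1)
    (hd : deriv F 0 ≠ 0) :
    2 * Real.pi * Real.log ‖deriv F 0‖ ≤
      ∫ θ in 0..(2 * Real.pi), Real.log ‖F (circleMap 0 1 θ) - 1‖ := by
  have h1 : AnalyticOnNhd ℂ (dslope F 0) (closedBall 0 1) := by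
    intro z hz
    rcases eq_or_ne z 0 with rfl | hz0
    · obtain ⟨P, hP⟩ := hF 0 hz
      exact ⟨_, hP.has_fpower_series_dslope_fslope⟩
    · have : AnalyticAt ℂ (fun w => (w - 0)⁻¹ * (F w - F 0)) z :=
        ((analyticAt_id.sub analyticAt_const).inv (by simpa using hz0)).mul
          ((hF z hz).sub analyticAt_const)
      refine this.congr ?_
      filter_upwards [isOpen_ne.mem_nhds hz0] with w hw
      rw [dslope_of_ne _ hw, slope_def_module]; simp
  have h2 := hay_jensen (dslope F 0) h1 (by rwa [dslope_same])
  rw [dslope_same, Real.circleAverage_def, smul_eq_mul, le_inv_mul_iff₀ (by positivity)] at h2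
  refine h2.trans (le_of_eq ?_)
  congr 1
  ext θ
  have hn : ‖circleMap 0 1 θ‖ = 1 := by simp
  have hne : circleMap 0 1 θ ≠ 0 := by rw [← norm_ne_zero_iff, hn]; exact one_ne_zero
  rw [dslope_of_ne _ hne, slope_def_module, h0]
  simp

lemma hay_pointwise (v e : ℂ) (R φ : ℝ) (hR : R = (1 - Real.cos φ) / (1 + Real.cos φ))
    (hφ : Real.cos φ ≠ -1) (he : ‖e‖ = R) (hv1 : v ≠ 1) (he1 : e ≠ 1) (hve : v ≠ e)
    (ψ : ℝ) (hψ : Real.cos ψ = 2 / (1 + ‖v‖) - 1) (hφψ : Real.cos φ ≠ Real.cos ψ) :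
    Real.log ‖v - 1‖ + Real.log (|Real.cos φ - Real.cos ψ| / 2) ≤
      Real.log ‖v - e‖ - Real.log ‖1 - e‖ := by
  have hc : 0 < 1 + Real.cos φ := by
    have := Real.neg_one_le_cos φ
    rcases this.eq_or_lt with h | h
    · exact absurd h.symm hφ
    · linarith
  have hs : 0 < 1 + ‖v‖ := by positivity
  have hR0 : 0 ≤ R := he ▸ norm_nonneg e
  have hR1 : 0 < 1 + R := by linarith
  have hcR : Real.cos φ = 2 / (1 + R) - 1 := by
    rw [hR]; field_simp; ring
  have hpos1 : 0 < ‖v - 1‖ := norm_pos_iff.2 (sub_ne_zero.2 hv1)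
  have hpos2 : 0 < ‖1 - e‖ := norm_pos_iff.2 (sub_ne_zero.2 he1.symm)
  have hpos3 : 0 < ‖v - e‖ := norm_pos_iff.2 (sub_ne_zero.2 hve)
  have hpos4 : 0 < |Real.cos φ - Real.cos ψ| := abs_pos.2 (sub_ne_zero.2 hφψ)
  have h1 : |Real.cos φ - Real.cos ψ| / 2 = |‖v‖ - R| / ((1 + ‖v‖) * (1 + R)) := by
    have : Real.cos φ - Real.cos ψ = 2 * ((‖v‖ - R) / ((1 + ‖v‖) * (1 + R))) := by
      rw [hcR, hψ]; field_simp; ring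
    rw [this, abs_mul, abs_div, abs_of_pos (mul_pos hs hR1)]; simp
  have h2 : |‖v‖ - R| ≤ ‖v - e‖ := by rw [← he]; exact abs_norm_sub_norm_le v e
  have h3 : ‖v - 1‖ ≤ 1 + ‖v‖ := by
    have := norm_sub_le v 1; rw [norm_one] at this; linarith
  have h4 : ‖1 - e‖ ≤ 1 + R := by
    have := norm_sub_le 1 e; rw [norm_one, he] at this; linarith
  rw [← Real.log_mul hpos1.ne' (by positivity), ← Real.log_div hpos3.ne' hpos2.ne']
  apply Real.log_le_log (by positivity)
  rw [h1, mul_div_assoc', div_le_div_iff₀ (by positivity) hpos2]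
  calc ‖v - 1‖ * |‖v‖ - R| * ‖1 - e‖ ≤ (1 + ‖v‖) * ‖v - e‖ * (1 + R) := by gcongr
    _ = _ := by ring

open Metric MeasureTheory in
lemma hay_koebe (F : ℂ → ℂ) (hF : AnalyticOnNhd ℂ F (closedBall 0 1)) (h0 : F 0 = 1)
    (hom : ∀ R : ℝ, 0 ≤ R → ∃ e : ℂ, ‖e‖ = R ∧ ∀ z ∈ closedBall (0 : ℂ) 1, F z ≠ e) :
    ‖deriv F 0‖ ≤ 4 := by
  rcases eq_or_ne (deriv F 0) 0 with hd | hd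
  · rw [hd]; simp
  set K := F '' closedBall 0 1 with hKdef
  have hKc : IsCompact K := (isCompact_closedBall 0 1).image_of_continuousOn hF.continuousOn
  obtain ⟨E₀, hE₀m, hE₀⟩ := hay_select K hKc.isClosed (fun R hR => by
    obtain ⟨e, he, h⟩ := hom R hR
    refine ⟨e, he, ?_⟩
    rintro ⟨z, hz, hze⟩
    exact h z hz hze)
  set ρ : ℝ → ℝ := fun φ => (1 - Real.cos φ) / (1 + Real.cos φ) with hρ
  have hρ0 : ∀ φ, 0 ≤ ρ φ := fun φ => div_nonneg (by linarith [Real.cos_le_one φ])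
    (by linarith [Real.neg_one_le_cos φ])
  have hρm : Measurable ρ := by fun_prop
  set E : ℝ → ℂ := fun φ => E₀ (ρ φ) with hE
  have hEm : Measurable E := hE₀m.comp hρm
  have hEn : ∀ φ, ‖E φ‖ = ρ φ := fun φ => (hE₀ _ (hρ0 φ)).1
  have hEK : ∀ φ, E φ ∉ K := fun φ => (hE₀ _ (hρ0 φ)).2
  have h01 : (0 : ℂ) ∈ closedBall (0 : ℂ) 1 := by simp
  have hKn : K ∈ nhds (1 : ℂ) := by
    have := (hF 0 h01).hasStrictDerivAt.map_nhds_eq hd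
    rw [← h0, ← this]
    exact Filter.image_mem_map (closedBall_mem_nhds 0 one_pos)
  obtain ⟨d, hd0, hdK⟩ := Metric.mem_nhds_iff.1 hKn
  have hEd : ∀ φ, d ≤ ‖1 - E φ‖ := by
    intro φ
    by_contra! h
    refine hEK φ (hdK ?_)
    rw [mem_ball_iff_norm, norm_sub_rev]; exact h
  set v : ℝ → ℂ := fun θ => F (circleMap 0 1 θ) with hv
  have hcm : ∀ θ, circleMap 0 1 θ ∈ closedBall (0 : ℂ) 1 := fun θ => by simp
  have hvc : Continuous v := hF.continuousOn.comp_continuous (continuous_circleMap 0 1) hcm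
  have hvK : ∀ θ, v θ ∈ K := fun θ => ⟨_, hcm θ, rfl⟩
  have hvE : ∀ θ φ, v θ ≠ E φ := fun θ φ h => hEK φ (h ▸ hvK θ)
  have hE1 : ∀ φ, E φ ≠ 1 := fun φ h => hEK φ (by rw [h]; exact ⟨0, h01, h0⟩)
  obtain ⟨B, hB⟩ := hKc.isBounded.exists_norm_le
  have hB0 : 0 ≤ B := (norm_nonneg _).trans (hB _ (hvK 0))
  set f : ℝ → ℝ → ℝ := fun φ θ => Real.log ‖v θ - E φ‖ - Real.log ‖1 - E φ‖ with hf
  set C := Real.log (1 + (B + 1) / d) with hC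
  have hfC : ∀ φ θ, f φ θ ≤ C := by
    intro φ θ
    have p1 : 0 < ‖v θ - E φ‖ := norm_pos_iff.2 (sub_ne_zero.2 (hvE θ φ))
    have p2 : 0 < ‖1 - E φ‖ := norm_pos_iff.2 (sub_ne_zero.2 (hE1 φ).symm)
    simp only [hf]
    rw [← Real.log_div p1.ne' p2.ne']
    apply Real.log_le_log (by positivity)
    rw [div_le_iff₀ p2]
    have q1 : ‖v θ - E φ‖ ≤ ‖v θ - 1‖ + ‖1 - E φ‖ := norm_sub_le_norm_sub_add_norm_sub _ _ _
    have q2 : ‖v θ - 1‖ ≤ B + 1 := by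
      have := norm_sub_le (v θ) 1; rw [norm_one] at this
      linarith [hB _ (hvK θ)]
    have q3 : (B + 1) / d * d ≤ (B + 1) / d * ‖1 - E φ‖ := by gcongr; exact hEd φ
    rw [div_mul_cancel₀ _ hd0.ne'] at q3
    linarith
  have hfθc : ∀ φ, Continuous (f φ) := by
    intro φ
    have : Continuous fun θ => Real.log ‖v θ - E φ‖ :=
      Continuous.log (by fun_prop) (fun θ => norm_ne_zero_iff.2 (sub_ne_zero.2 (hvE θ φ)))
    exact this.sub continuous_const
  have hfθ : ∀ φ, ∫ θ in 0..(2 * Real.pi), f φ θ = 0 := by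
    intro φ
    have hA : AnalyticOnNhd ℂ (fun z => F z - E φ) (closedBall 0 |1|) := by
      rw [abs_one]; exact hF.sub analyticOnNhd_const
    have h1 := hA.circleAverage_log_norm_of_ne_zero (fun u hu => by
      rw [abs_one] at hu
      exact sub_ne_zero.2 (fun h => hEK φ ⟨u, hu, h⟩))
    rw [Real.circleAverage_def, smul_eq_mul, inv_mul_eq_iff_eq_mul₀ (by positivity), h0] at h1
    simp only [hf]
    rw [intervalIntegral.integral_sub _ intervalIntegrable_const]
    · simp only [hv]
      rw [h1]; simp
    · have : Continuous fun θ => Real.log ‖v θ - E φ‖ :=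
        Continuous.log (by fun_prop) (fun θ => norm_ne_zero_iff.2 (sub_ne_zero.2 (hvE θ φ)))
      exact this.intervalIntegrable _ _
  set μ : Measure ℝ := volume.restrict (Set.Ioc 0 (2 * Real.pi)) with hμ
  have hpi : (0 : ℝ) ≤ 2 * Real.pi := by positivity
  have hii : ∀ h : ℝ → ℝ, ∫ θ in 0..(2 * Real.pi), h θ = ∫ θ, h θ ∂μ := fun h => by
    rw [intervalIntegral.integral_of_le hpi]
  have hint : ∀ h : ℝ → ℝ, IntervalIntegrable h volume 0 (2 * Real.pi) ↔ Integrable h μ :=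
    fun h => intervalIntegrable_iff_integrableOn_Ioc_of_le hpi
  have hfm : Measurable (Function.uncurry f) := by
    have hvm := hvc.measurable
    simp only [hf, Function.uncurry_def]
    fun_prop
  have hfi : ∀ φ, Integrable (f φ) μ := fun φ => (hint _).1 ((hfθc φ).intervalIntegrable _ _)
  have hprod : Integrable (Function.uncurry f) (μ.prod μ) := by
    have h1 : Integrable (fun x : ℝ × ℝ => C - f x.1 x.2) (μ.prod μ) := by
      rw [integrable_prod_iff (by
        exact (measurable_const.sub hfm).aestronglyMeasurable)]
      refine ⟨Filter.Eventually.of_forall fun φ => (integrable_const C).sub (hfi φ), ?_⟩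
      have : (fun φ => ∫ θ, ‖C - f φ θ‖ ∂μ) = fun φ => ∫ θ, C ∂μ := by
        ext φ
        have e1 : (fun θ => ‖C - f φ θ‖) = fun θ => C - f φ θ := by
          ext θ; exact Real.norm_of_nonneg (sub_nonneg.2 (hfC φ θ))
        rw [e1, integral_sub (integrable_const C) (hfi φ), ← hii (f φ), hfθ φ, sub_zero]
      simp only [this]
      exact integrable_const _
    have h2 := (integrable_const C).sub h1
    refine h2.congr (Filter.Eventually.of_forall fun x => ?_)
    simp [Function.uncurry_def]
  have hswap : ∫ θ, ∫ φ, f φ θ ∂μ ∂μ = 0 := by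
    rw [← integral_integral_swap hprod]
    simp only [← hii, hfθ]
    simp
  have hlog : Integrable (fun θ => Real.log ‖v θ - 1‖) μ := by
    rw [← hint]
    have hA : AnalyticOnNhd ℂ (fun z => F z - 1) (sphere 0 |1|) := by
      rw [abs_one]; exact (hF.sub analyticOnNhd_const).mono sphere_subset_closedBall
    exact hA.meromorphicOn.circleIntegrable_log_norm
  have hmain : ∀ᵐ θ ∂μ, 2 * Real.pi * (Real.log ‖v θ - 1‖ - Real.log 4) ≤ ∫ φ, f φ θ ∂μ := by
    filter_upwards [hprod.prod_left_ae] with θ hθ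
    have hθ' : Integrable (fun φ => f φ θ) μ := hθ
    rcases eq_or_ne (v θ) 1 with hv1 | hv1
    · have : (fun φ => f φ θ) = fun _ => 0 := by
        ext φ; simp [hf, hv1]
      rw [this, hv1]
      have : 0 ≤ Real.log 4 := Real.log_nonneg (by norm_num)
      simp
      positivity
    · obtain ⟨ψ, hψ⟩ : ∃ ψ : ℝ, Real.cos ψ = 2 / (1 + ‖v θ‖) - 1 := by
        refine ⟨Real.arccos (2 / (1 + ‖v θ‖) - 1), Real.cos_arccos ?_ ?_⟩
        · have : 0 ≤ 2 / (1 + ‖v θ‖) := by positivity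
          linarith
        · have : 2 / (1 + ‖v θ‖) ≤ 2 := div_le_self (by norm_num) (by linarith [norm_nonneg (v θ)])
          linarith
      obtain ⟨q, hq1, hq2, hq3⟩ := hay_cos_int ψ
      rw [hint] at hq1
      rw [hii] at hq2
      have h1 : ∫ φ, (Real.log ‖v θ - 1‖ + q φ) ∂μ ≤ ∫ φ, f φ θ ∂μ := by
        refine integral_mono_ae ((integrable_const _).add hq1) hθ' ?_
        filter_upwards [ae_restrict_of_ae (hay_cos_ae ψ), ae_restrict_of_ae (hay_cos_ae Real.pi)]
          with φ h2 h3
        rw [Real.cos_pi] at h3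
        simp only [hf]
        rw [hq3 φ h2]
        exact hay_pointwise (v θ) (E φ) (ρ φ) φ rfl h3 (hEn φ) hv1 (hE1 φ) (hvE θ φ) ψ hψ h2
      rw [integral_add (integrable_const _) hq1, hq2, ← hii] at h1
      simp only [intervalIntegral.integral_const, smul_eq_mul, sub_zero] at h1
      linarith
  have hfin : ∫ θ, 2 * Real.pi * (Real.log ‖v θ - 1‖ - Real.log 4) ∂μ ≤ 0 := by
    rw [← hswap]
    refine integral_mono_ae ((hlog.sub (integrable_const _)).const_mul _) hprod.integral_prod_right ?_
    exact hmain
  rw [integral_const_mul, integral_sub hlog (integrable_const _), ← hii, ← hii] at hfin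
  simp only [intervalIntegral.integral_const, smul_eq_mul, sub_zero] at hfin
  have hj := hay_jensen' F hF h0 hd
  have hpi' : (0 : ℝ) < 2 * Real.pi := by positivity
  have h5 : Real.log ‖deriv F 0‖ ≤ Real.log 4 := by
    have h6 : (∫ θ in 0..(2 * Real.pi), Real.log ‖v θ - 1‖) - 2 * Real.pi * Real.log 4 ≤ 0 := by
      by_contra! h
      exact absurd hfin (not_le.2 (mul_pos hpi' h))
    have : 2 * Real.pi * Real.log ‖deriv F 0‖ ≤ 2 * Real.pi * Real.log 4 := by
      simp only [hv] at h6
      linarith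
    exact le_of_mul_le_mul_left this hpi'
  exact (Real.log_le_log_iff (norm_pos_iff.2 hd) (by norm_num)).1 h5

open Metric Complex ComplexConjugate in
lemma hay_deriv (k : ℂ → ℂ) (hk : AnalyticOnNhd ℂ k (ball 0 1))
    (hom : ∀ R : ℝ, 0 ≤ R → ∃ e : ℂ, ‖e‖ = R ∧ ∀ z ∈ ball (0 : ℂ) 1, exp (k z) ≠ e)
    (a : ℂ) (ha : a ∈ ball (0 : ℂ) 1) : ‖deriv k a‖ * (1 - ‖a‖ ^ 2) ≤ 4 := by
  have ha1 : ‖a‖ < 1 := by simpa using ha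
  have ha2 : 0 < 1 - ‖a‖ ^ 2 := by nlinarith [norm_nonneg a]
  have hden : ∀ ζ : ℂ, ‖ζ‖ < 1 → 1 + conj a * ζ ≠ 0 := by
    intro ζ hζ h
    have h1 : conj a * ζ = -1 := by linear_combination h
    have h2 : ‖conj a * ζ‖ = 1 := by rw [h1]; simp
    rw [norm_mul, Complex.norm_conj] at h2
    nlinarith [norm_nonneg a, norm_nonneg ζ]
  have hmap : ∀ ζ : ℂ, ‖ζ‖ < 1 → (ζ + a) / (1 + conj a * ζ) ∈ ball (0 : ℂ) 1 := by
    intro ζ hζ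
    rw [mem_ball_zero_iff, norm_div, div_lt_one (norm_pos_iff.2 (hden ζ hζ))]
    have hsq : ‖ζ + a‖ ^ 2 < ‖1 + conj a * ζ‖ ^ 2 := by
      have e : ‖1 + conj a * ζ‖ ^ 2 - ‖ζ + a‖ ^ 2 = (1 - ‖a‖ ^ 2) * (1 - ‖ζ‖ ^ 2) := by
        simp only [← Complex.normSq_eq_norm_sq, Complex.normSq_apply]
        simp
        ring
      have : 0 < (1 - ‖a‖ ^ 2) * (1 - ‖ζ‖ ^ 2) := mul_pos ha2 (by nlinarith [norm_nonneg ζ])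
      linarith
    exact lt_of_pow_lt_pow_left₀ 2 (norm_nonneg _) hsq
  have hr : ∀ r : ℝ, 0 < r → r < 1 → r * (‖deriv k a‖ * (1 - ‖a‖ ^ 2)) ≤ 4 := by
    intro r hr0 hr1
    have hrn : ∀ ζ ∈ closedBall (0 : ℂ) 1, ‖(r : ℂ) * ζ‖ < 1 := by
      intro ζ hζ
      have : ‖ζ‖ ≤ 1 := by simpa using hζ
      rw [norm_mul, norm_real, Real.norm_eq_abs, abs_of_pos hr0]
      nlinarith [norm_nonneg ζ]
    set m : ℂ → ℂ := fun ζ => (r * ζ + a) / (1 + conj a * (r * ζ)) with hm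
    set F : ℂ → ℂ := fun ζ => exp (k (m ζ) - k a) with hF
    have hm0 : m 0 = a := by simp [hm]
    have hman : ∀ ζ ∈ closedBall (0 : ℂ) 1, AnalyticAt ℂ m ζ := by
      intro ζ hζ
      exact AnalyticAt.div (by fun_prop) (by fun_prop) (hden _ (hrn ζ hζ))
    have hFan : AnalyticOnNhd ℂ F (closedBall 0 1) := by
      intro ζ hζ
      have h1 : AnalyticAt ℂ (fun ζ => k (m ζ)) ζ :=
        AnalyticAt.comp' (hk (m ζ) (hmap _ (hrn ζ hζ))) (hman ζ hζ)
      exact (h1.sub analyticAt_const).cexp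
    have h4 := hay_koebe F hFan (by simp [hF, hm0]) (fun R hR => by
      obtain ⟨e, he, h⟩ := hom (R * ‖exp (k a)‖) (by positivity)
      refine ⟨e / exp (k a), ?_, fun ζ hζ hc => ?_⟩
      · rw [norm_div, he, mul_div_cancel_right₀]
        exact norm_ne_zero_iff.2 (exp_ne_zero _)
      · refine h (m ζ) (hmap _ (hrn ζ hζ)) ?_
        simp only [hF] at hc
        rw [exp_sub, div_left_inj' (exp_ne_zero _)] at hc
        exact hc)
    have hmd : HasDerivAt m (r * (1 - ‖a‖ ^ 2 : ℝ)) 0 := by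
      have h1 : HasDerivAt (fun ζ : ℂ => r * ζ + a) r 0 := by
        simpa using ((hasDerivAt_id (0 : ℂ)).const_mul (r : ℂ)).add_const a
      have h2 : HasDerivAt (fun ζ : ℂ => 1 + conj a * (r * ζ)) (conj a * r) 0 := by
        simpa using (((hasDerivAt_id (0 : ℂ)).const_mul (r : ℂ)).const_mul (conj a)).const_add 1
      refine (h1.div h2 (by simp)).congr_deriv ?_
      have := Complex.conj_mul' a
      push_cast
      simp
      linear_combination (-r : ℂ) * this
    have hkd : HasDerivAt k (deriv k a) (m 0) := by
      rw [hm0]; exact (hk a ha).differentiableAt.hasDerivAt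
    have hFd := ((hkd.comp 0 hmd).sub_const (k a)).cexp
    have hFd' : deriv F 0 = deriv k a * (r * (1 - ‖a‖ ^ 2 : ℝ)) := by
      have := hFd.deriv
      simp only [Function.comp, hm0, sub_self, exp_zero, one_mul] at this
      exact this
    rw [hFd', norm_mul, norm_mul, norm_real, norm_real, Real.norm_of_nonneg hr0.le,
      Real.norm_of_nonneg ha2.le] at h4
    linarith
  by_contra! h
  set Q := ‖deriv k a‖ * (1 - ‖a‖ ^ 2) with hQ
  have hQ0 : 0 < Q := by linarith
  have := hr ((1 + 4 / Q) / 2) (by positivity) (by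
    have : 4 / Q < 1 := (div_lt_one hQ0).2 h
    linarith)
  have h2 : (1 + 4 / Q) / 2 * Q = (Q + 4) / 2 := by field_simp
  linarith

open Metric Complex in
lemma hay_growth (k : ℂ → ℂ) (hk : AnalyticOnNhd ℂ k (ball 0 1))
    (hom : ∀ R : ℝ, 0 ≤ R → ∃ e : ℂ, ‖e‖ = R ∧ ∀ z ∈ ball (0 : ℂ) 1, exp (k z) ≠ e)
    (z : ℂ) (hz : z ∈ ball (0 : ℂ) 1) :
    ‖k z - k 0‖ ≤ 2 * Real.log ((1 + ‖z‖) / (1 - ‖z‖)) := by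
  have hz1 : ‖z‖ < 1 := by simpa using hz
  have hn := norm_nonneg z
  have hmem : ∀ t ∈ Set.Icc (0 : ℝ) 1, ‖(t : ℂ) * z‖ = t * ‖z‖ ∧ t * ‖z‖ < 1 := by
    intro t ht
    refine ⟨by rw [norm_mul, norm_real, Real.norm_of_nonneg ht.1], ?_⟩
    nlinarith [ht.1, ht.2]
  have hmem' : ∀ t ∈ Set.Icc (0 : ℝ) 1, (t : ℂ) * z ∈ ball (0 : ℂ) 1 := by
    intro t ht
    rw [mem_ball_zero_iff, (hmem t ht).1]; exact (hmem t ht).2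
  have hd : ∀ t ∈ Set.Icc (0 : ℝ) 1,
      HasDerivAt (fun t : ℝ => k (t * z) - k 0) (deriv k (t * z) * z) t := by
    intro t ht
    have h1 : HasDerivAt (fun t : ℝ => (t : ℂ) * z) z t := by
      simpa using (hasDerivAt_id t).ofReal_comp.mul_const z
    have h2 := (hk _ (hmem' t ht)).differentiableAt.hasDerivAt
    exact (h2.comp_of_eq t h1 rfl).sub_const (k 0)
  have hB : ∀ t ∈ Set.Icc (0 : ℝ) 1,
      HasDerivAt (fun t : ℝ => 2 * (Real.log (1 + t * ‖z‖) - Real.log (1 - t * ‖z‖)))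
        (4 * ‖z‖ / (1 - (t * ‖z‖) ^ 2)) t := by
    intro t ht
    have hp1 : 0 < 1 + t * ‖z‖ := by have := mul_nonneg ht.1 hn; linarith
    have hp2 : 0 < 1 - t * ‖z‖ := by linarith [(hmem t ht).2]
    have h1 : HasDerivAt (fun t : ℝ => 1 + t * ‖z‖) ‖z‖ t := by
      simpa using ((hasDerivAt_id t).mul_const ‖z‖).const_add 1
    have h2 : HasDerivAt (fun t : ℝ => 1 - t * ‖z‖) (-‖z‖) t := by
      simpa using ((hasDerivAt_id t).mul_const ‖z‖).const_sub 1
    refine (((h1.log hp1.ne').sub (h2.log hp2.ne')).const_mul 2).congr_deriv ?_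
    have : 1 - (t * ‖z‖) ^ 2 = (1 + t * ‖z‖) * (1 - t * ‖z‖) := by ring
    have hne1 := hp1.ne'
    have hne2 := hp2.ne'
    rw [this, div_sub_div _ _ hne1 hne2, mul_div_assoc']
    congr 1
    ring
  have := image_norm_le_of_norm_deriv_right_le_deriv_boundary'
    (fun t ht => (hd t ht).continuousAt.continuousWithinAt)
    (fun t ht => (hd t (Set.Ico_subset_Icc_self ht)).hasDerivWithinAt)
    (by simp) (fun t ht => (hB t ht).continuousAt.continuousWithinAt)
    (fun t ht => (hB t (Set.Ico_subset_Icc_self ht)).hasDerivWithinAt)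
    (fun t ht => by
      have ht' := Set.Ico_subset_Icc_self ht
      have h1 := hay_deriv k hk hom _ (hmem' t ht')
      rw [(hmem t ht').1] at h1
      have hp : 0 < 1 - (t * ‖z‖) ^ 2 := by
        have := mul_nonneg ht'.1 hn
        nlinarith [(hmem t ht').2]
      rw [norm_mul, le_div_iff₀ hp]
      nlinarith) (Set.right_mem_Icc.2 zero_le_one)
  simp only [ofReal_one, one_mul] at this
  rwa [Real.log_div (by linarith) (by linarith)]

/-- Hayman's distortion theorem: if `g` is analytic, nowhere vanishing and `p`-valent in
the unit disk, then `((1-|z|)/(1+|z|))^{2p} ≤ |g(z)/g(0)| ≤ ((1+|z|)/(1-|z|))^{2p}`. -/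
theorem statement7 (g : ℂ → ℂ) (p : ℕ)
    (hg : AnalyticOnNhd ℂ g (Metric.ball (0 : ℂ) 1))
    (hnz : ∀ z ∈ Metric.ball (0 : ℂ) 1, g z ≠ 0)
    (hval : IsPValentOn g (Metric.ball (0 : ℂ) 1) p) :
    ∀ z ∈ Metric.ball (0 : ℂ) 1,
      ((1 - ‖z‖) / (1 + ‖z‖)) ^ (2 * p) ≤ ‖g z / g 0‖ ∧
      ‖g z / g 0‖ ≤
        ((1 + ‖z‖) / (1 - ‖z‖)) ^ (2 * p) := by
  rcases Nat.eq_zero_or_pos p with hp | hp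
  · exfalso
    have := (hay_val g p _ hg hval (g 0) {0} (by simp)).1
    simp at this
    omega
  obtain ⟨k, hk, hgk⟩ := hay_exists_log g p hp.ne' hg hnz
  have hom := hay_omit k p hp.ne' _ Metric.isOpen_ball hk (fun c s hs => by
    obtain ⟨h1, h2⟩ := hay_val g p _ hg hval c s (fun z hz => ⟨(hs z hz).1, by
      rw [hgk z (hs z hz).1, (hs z hz).2]⟩)
    refine ⟨h1, fun z₀ hz₀ hd => h2 z₀ hz₀ ?_⟩
    have hz₀' := (hs z₀ hz₀).1
    have hev : g =ᶠ[nhds z₀] fun z => Complex.exp (p * k z) := by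
      filter_upwards [Metric.isOpen_ball.mem_nhds hz₀'] with w hw
      exact hgk w hw
    rw [hev.deriv_eq]
    have h3 := ((hk z₀ hz₀').differentiableAt.hasDerivAt.const_mul (p : ℂ)).cexp
    rw [h3.deriv, hd]; simp)
  intro z hz
  have hz1 : ‖z‖ < 1 := by simpa using hz
  have hb := hay_growth k hk hom z hz
  have h0 : (0 : ℂ) ∈ Metric.ball (0 : ℂ) 1 := by simp
  have hq : ‖g z / g 0‖ = Real.exp (p * (k z - k 0).re) := by
    rw [hgk z hz, hgk 0 h0, ← Complex.exp_sub, Complex.norm_exp, ← mul_sub]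
    congr 1
    simp
  have hre := abs_le.1 ((Complex.abs_re_le_norm (k z - k 0)).trans hb)
  have hn := norm_nonneg z
  have hpos : 0 < (1 + ‖z‖) / (1 - ‖z‖) := div_pos (by linarith) (by linarith)
  have hp0 : (0 : ℝ) ≤ p := by positivity
  have e1 : ((1 + ‖z‖) / (1 - ‖z‖)) ^ (2 * p) =
      Real.exp (p * (2 * Real.log ((1 + ‖z‖) / (1 - ‖z‖)))) := by
    rw [← Real.exp_log (pow_pos hpos _), Real.log_pow]
    congr 1; push_cast; ring
  have e2 : ((1 - ‖z‖) / (1 + ‖z‖)) ^ (2 * p) =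
      Real.exp (p * -(2 * Real.log ((1 + ‖z‖) / (1 - ‖z‖)))) := by
    rw [mul_neg, Real.exp_neg, ← e1, ← inv_pow, inv_div]
  rw [hq, e1, e2, Real.exp_le_exp, Real.exp_le_exp]
  exact ⟨mul_le_mul_of_nonneg_left hre.1 hp0, mul_le_mul_of_nonneg_left hre.2 hp0⟩
end

section
/- (Distortion theorem) Let f be an (s,p)-valent function in the unit disk D_1 having in D_1 exactly s zeroes x_1, …, x_s (counted with multiplicity). Let P(x) = A·Π_{j=1}^s (x − x_j), where the constant A ∈ ℂ is chosen so that the constant term of the Taylor series of f(x)/P(x) at 0 equals 1. Then for every x ∈ D_1, ((1−|x|)/(1+|x|))^{2p} ≤ |f(x)/P(x)| ≤ ((1+|x|)/(1−|x|))^{2p}. -/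
open Polynomial in
lemma cheb_prod (N : ℕ) (φ : ℝ) :
    2 ^ (N - 1) * ∏ j ∈ Finset.range N,
      (Real.cos φ - Real.cos ((2 * (j : ℝ) + 1) * Real.pi / (2 * N))) = Real.cos (N * φ) := by
  have hroots := Polynomial.Chebyshev.roots_T_real N
  have hinj := (Finset.range N).nodup_map_iff_injOn.mp (Polynomial.Chebyshev.roots_T_real_nodup N)
  have hcard : (Polynomial.Chebyshev.T ℝ (N : ℤ)).roots.card =
      (Polynomial.Chebyshev.T ℝ (N : ℤ)).natDegree := by
    rw [hroots, Polynomial.Chebyshev.natDegree_T]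
    exact (Finset.card_image_of_injOn hinj).trans (by simp)
  have h := Polynomial.C_leadingCoeff_mul_prod_multiset_X_sub_C hcard
  rw [hroots, Polynomial.Chebyshev.leadingCoeff_T] at h
  have h2 := congrArg (Polynomial.eval (Real.cos φ)) h
  rw [Polynomial.Chebyshev.T_real_cos] at h2
  have h3 : (Multiset.map (fun a : ℝ => X - C a) (Finset.image (fun k : ℕ =>
      Real.cos ((2 * (k : ℝ) + 1) * Real.pi / (2 * N))) (Finset.range N)).val).prod
      = ∏ j ∈ Finset.range N, (X - C (Real.cos ((2 * (j : ℝ) + 1) * Real.pi / (2 * N)))) := by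
    rw [← Finset.prod_image (f := fun a : ℝ => X - C a) hinj]
    rfl
  rw [h3] at h2
  simpa [Polynomial.eval_prod] using h2

lemma cheb_aux (N : ℕ) (hN : 1 ≤ N) (j0 : ℕ) (hj0 : j0 < N) (φ : ℝ)
    (hφ : |φ - (2 * (j0 : ℝ) + 1) * Real.pi / (2 * N)| ≤ Real.pi / (2 * N))
    (hne : φ ≠ (2 * (j0 : ℝ) + 1) * Real.pi / (2 * N)) :
    (1 / 4 : ℝ) ^ N ≤ ∏ j ∈ (Finset.range N).erase j0,
      (|Real.cos φ - Real.cos ((2 * (j : ℝ) + 1) * Real.pi / (2 * N))| / 2) := by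
  set θ := (2 * (j0 : ℝ) + 1) * Real.pi / (2 * N) with hθ
  have hNpos : (0 : ℝ) < N := by exact_mod_cast hN
  have hpi := Real.pi_pos
  have hd : 0 < |φ - θ| := abs_pos.mpr (sub_ne_zero.mpr hne)
  have h1 : |Real.cos (N * φ)| = |Real.sin (N * (φ - θ))| := by
    have : N * φ = (N * (φ - θ) + Real.pi / 2) + j0 * Real.pi := by
      rw [hθ]; field_simp; ring
    rw [this, Real.cos_add_nat_mul_pi, Real.cos_add_pi_div_two, abs_mul, abs_pow]
    simp
  have h2 : 2 / Real.pi * (N * |φ - θ|) ≤ |Real.cos (N * φ)| := by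
    rw [h1]
    have : |(N : ℝ) * (φ - θ)| = N * |φ - θ| := by rw [abs_mul, abs_of_pos hNpos]
    rw [← this]
    apply Real.mul_abs_le_abs_sin
    rw [this]
    calc (N : ℝ) * |φ - θ| ≤ N * (Real.pi / (2 * N)) := by gcongr
      _ = Real.pi / 2 := by field_simp
  set P := ∏ j ∈ (Finset.range N).erase j0,
      |Real.cos φ - Real.cos ((2 * (j : ℝ) + 1) * Real.pi / (2 * N))| with hP
  have hP0 : 0 ≤ P := Finset.prod_nonneg fun _ _ => abs_nonneg _
  have h3 : 2 ^ (N - 1) * (|Real.cos φ - Real.cos θ| * P) = |Real.cos (N * φ)| := by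
    rw [← cheb_prod, abs_mul, abs_pow, Finset.abs_prod, hP, hθ,
      Finset.mul_prod_erase (Finset.range N) (fun j : ℕ => |Real.cos φ - Real.cos ((2 * (j : ℝ) + 1) * Real.pi / (2 * N))|)
      (Finset.mem_range.mpr hj0)]
    simp
  have h4 := Real.abs_cos_sub_cos_le φ θ
  have h5 : 2 / Real.pi * N ≤ 2 ^ (N - 1) * P := by
    have : (2 / Real.pi * N) * |φ - θ| ≤ (2 ^ (N - 1) * P) * |φ - θ| := by
      calc (2 / Real.pi * N) * |φ - θ| = 2 / Real.pi * (N * |φ - θ|) := by ring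
        _ ≤ 2 ^ (N - 1) * (|Real.cos φ - Real.cos θ| * P) := by rw [h3]; exact h2
        _ ≤ 2 ^ (N - 1) * (|φ - θ| * P) := by gcongr
        _ = _ := by ring
    exact le_of_mul_le_mul_right this hd
  have h6 : (1 / 4 : ℝ) ≤ 2 / Real.pi * N := by
    have : (1:ℝ) ≤ N := by exact_mod_cast hN
    have h4 := Real.pi_lt_four
    rw [div_mul_eq_mul_div, le_div_iff₀ hpi]
    nlinarith
  rw [Finset.prod_div_distrib, Finset.prod_const, Finset.card_erase_of_mem (Finset.mem_range.mpr hj0),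
    Finset.card_range, ← hP, le_div_iff₀ (by positivity)]
  obtain ⟨m, rfl⟩ : ∃ m, N = m + 1 := ⟨N - 1, by omega⟩
  simp only [Nat.add_sub_cancel] at *
  have h7 : (1 / 4 : ℝ) ≤ 2 ^ m * P := h6.trans h5
  have h8 : (1 / 4 : ℝ) ^ (m + 1) * 2 ^ m = (1 / 4) * (1 / 2) ^ m := by
    rw [pow_succ, mul_right_comm, ← mul_pow]; norm_num; ring
  rw [h8]
  calc (1 / 4 : ℝ) * (1 / 2) ^ m ≤ (2 ^ m * P) * (1 / 2) ^ m := by gcongr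
    _ = P * (2 * (1 / 2)) ^ m := by rw [mul_pow]; ring
    _ = P := by norm_num

lemma cheb_lower (N : ℕ) (hN : 1 ≤ N) (u : ℝ) (hu : -1 ≤ u) (hu' : u ≤ 1) :
    ∃ j0 < N, (1 / 4 : ℝ) ^ N ≤ ∏ j ∈ (Finset.range N).erase j0,
      (|u - Real.cos ((2 * (j : ℝ) + 1) * Real.pi / (2 * N))| / 2) := by
  have hNpos : (0 : ℝ) < N := by exact_mod_cast hN
  have hpi := Real.pi_pos
  set φ := Real.arccos u with hφ
  have hcos : Real.cos φ = u := Real.cos_arccos hu hu'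
  have h0 : 0 ≤ φ := Real.arccos_nonneg u
  have h1 : φ ≤ Real.pi := Real.arccos_le_pi u
  obtain ⟨j0, hj0, hj⟩ : ∃ j0 < N, |φ - (2 * (j0 : ℝ) + 1) * Real.pi / (2 * N)| ≤ Real.pi / (2 * N) := by
    have key : ∀ j : ℕ, (j : ℝ) * Real.pi ≤ N * φ → N * φ ≤ (j + 1) * Real.pi →
        |φ - (2 * (j : ℝ) + 1) * Real.pi / (2 * N)| ≤ Real.pi / (2 * N) := by
      intro j h h'
      have e : φ - (2 * (j : ℝ) + 1) * Real.pi / (2 * N)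
          = (2 * (N * φ) - (2 * (j : ℝ) + 1) * Real.pi) / (2 * N) := by field_simp
      rw [e, abs_div, abs_of_pos (by positivity : (0:ℝ) < 2 * N)]
      gcongr
      rw [abs_le]; constructor <;> linarith
    by_cases hlt : ⌊N * φ / Real.pi⌋₊ < N
    · refine ⟨_, hlt, key _ ?_ ?_⟩
      · rw [← le_div_iff₀ hpi]; exact Nat.floor_le (by positivity)
      · rw [← div_le_iff₀ hpi]; exact (Nat.lt_floor_add_one _).le
    · push Not at hlt
      have : (N : ℝ) ≤ N * φ / Real.pi := (Nat.le_floor_iff (by positivity)).mp hlt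
      rw [le_div_iff₀ hpi] at this
      have hN1 : ((N - 1 : ℕ) : ℝ) = N - 1 := by push_cast [hN]; ring
      refine ⟨N - 1, by omega, key _ ?_ ?_⟩ <;> rw [hN1] <;> nlinarith
  refine ⟨j0, hj0, ?_⟩
  set θ := (2 * (j0 : ℝ) + 1) * Real.pi / (2 * N) with hθ
  rw [← hcos]
  by_cases hne : φ = θ
  · rw [hne]
    have hcont : Continuous fun t : ℝ => ∏ j ∈ (Finset.range N).erase j0,
      (|Real.cos t - Real.cos ((2 * (j : ℝ) + 1) * Real.pi / (2 * N))| / 2) := by fun_prop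
    have ht := (hcont.tendsto θ).mono_left (nhdsWithin_le_nhds (s := {θ}ᶜ))
    refine ge_of_tendsto ht ?_
    have hb : Metric.closedBall θ (Real.pi / (2 * N)) ∈ nhdsWithin θ {θ}ᶜ :=
      mem_nhdsWithin_of_mem_nhds (Metric.closedBall_mem_nhds _ (by positivity))
    filter_upwards [hb, self_mem_nhdsWithin] with t ht1 ht2
    exact cheb_aux N hN j0 hj0 t (by simpa [Real.dist_eq] using ht1) ht2
  · exact cheb_aux N hN j0 hj0 φ hj hne

lemma factor_bound (w e : ℂ) (uj : ℝ) (h1 : uj < 1)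
    (he : ‖e‖ = (1 + uj) / (1 - uj)) (hwe : w ≠ e) :
    ‖1 - e‖ * ‖w - 1‖ / ‖w - e‖ * (|(‖w‖ - 1) / (‖w‖ + 1) - uj| / 2) ≤ 1 := by
  have hpos : 0 < ‖w - e‖ := norm_pos_iff.mpr (sub_ne_zero.mpr hwe)
  have hR : (uj : ℝ) = (‖e‖ - 1) / (‖e‖ + 1) := by
    have : 0 < 1 - uj := by linarith
    rw [he]; field_simp; ring
  have hw0 := norm_nonneg w
  have he0 := norm_nonneg e
  have e1 : |(‖w‖ - 1) / (‖w‖ + 1) - uj| / 2 = |‖w‖ - ‖e‖| / ((‖w‖ + 1) * (‖e‖ + 1)) := by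
    rw [hR]
    have : (‖w‖ - 1) / (‖w‖ + 1) - (‖e‖ - 1) / (‖e‖ + 1)
        = 2 * (‖w‖ - ‖e‖) / ((‖w‖ + 1) * (‖e‖ + 1)) := by field_simp; ring
    rw [this, abs_div, abs_mul, abs_of_pos (by positivity : 0 < (‖w‖ + 1) * (‖e‖ + 1))]
    norm_num; ring
  rw [e1, div_mul_div_comm, div_le_one (by positivity)]
  have a1 : ‖1 - e‖ ≤ ‖e‖ + 1 := by
    have := norm_sub_le (1:ℂ) e; simp at this; linarith
  have a2 : ‖w - 1‖ ≤ ‖w‖ + 1 := by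
    have := norm_sub_le w (1:ℂ); simpa using this
  have a3 := abs_norm_sub_norm_le w e
  calc ‖1 - e‖ * ‖w - 1‖ * |‖w‖ - ‖e‖| ≤ (‖e‖ + 1) * (‖w‖ + 1) * ‖w - e‖ := by gcongr
    _ = _ := by ring

lemma core_r (h : ℂ → ℂ) (hh : DifferentiableOn ℂ h (Metric.ball 0 1)) (h0 : h 0 = 1)
    (homit : ∀ R : ℝ, 0 < R → ∃ e : ℂ, ‖e‖ = R ∧ ∀ z ∈ Metric.ball (0:ℂ) 1, h z ≠ e)
    (hopen : IsOpen (h '' Metric.ball 0 1)) (r : ℝ) (hr : 0 < r) (hr1 : r < 1) :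
    ‖deriv h 0‖ * r ≤ 4 := by
  have hsub : Metric.closedBall (0:ℂ) r ⊆ Metric.ball 0 1 := Metric.closedBall_subset_ball hr1
  have hcomp : IsCompact (h '' Metric.closedBall 0 r) :=
    (isCompact_closedBall 0 r).image_of_continuousOn (hh.continuousOn.mono hsub)
  obtain ⟨δ, hδ, hth⟩ := hcomp.exists_thickening_subset_open hopen (Set.image_mono hsub)
  obtain ⟨M, hM⟩ := (isCompact_closedBall (0:ℂ) r).exists_bound_of_continuousOn
    (f := fun z => h z - 1) ((hh.continuousOn.mono hsub).sub continuousOn_const)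
  have hM0 : 0 ≤ M := (norm_nonneg _).trans (hM 0 (by simp [hr.le]))
  have hdist : ∀ z ∈ Metric.closedBall (0:ℂ) r, ∀ e, (∀ z ∈ Metric.ball (0:ℂ) 1, h z ≠ e) →
      δ ≤ ‖h z - e‖ := by
    intro z hz e he
    by_contra hlt
    push Not at hlt
    have : e ∈ Metric.thickening δ (h '' Metric.closedBall 0 r) := by
      rw [Metric.mem_thickening_iff]
      exact ⟨h z, ⟨z, hz, rfl⟩, by rw [dist_comm, dist_eq_norm]; exact hlt⟩
    obtain ⟨z', hz', hze⟩ := hth this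
    exact he z' hz' hze
  set B := (1 + M / δ) * M with hB
  have hfac : ∀ z ∈ Metric.closedBall (0:ℂ) r, ∀ e, (∀ z ∈ Metric.ball (0:ℂ) 1, h z ≠ e) →
      ‖1 - e‖ * ‖h z - 1‖ / ‖h z - e‖ ≤ B := by
    intro z hz e he
    have hd := hdist z hz e he
    have hp : 0 < ‖h z - e‖ := hδ.trans_le hd
    have hm := hM z hz
    have : ‖1 - e‖ ≤ ‖h z - 1‖ + ‖h z - e‖ := by
      have := norm_sub_le (h z - e) (h z - 1)
      rw [show h z - e - (h z - 1) = 1 - e by ring] at this; linarith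
    have h2 : ‖1 - e‖ / ‖h z - e‖ ≤ 1 + M / δ := by
      calc ‖1 - e‖ / ‖h z - e‖ ≤ (‖h z - 1‖ + ‖h z - e‖) / ‖h z - e‖ := by gcongr
        _ = 1 + ‖h z - 1‖ / ‖h z - e‖ := by field_simp; ring
        _ ≤ _ := by gcongr
    rw [mul_div_right_comm]
    exact mul_le_mul h2 hm (norm_nonneg _) (by positivity)
  have hB0 : 0 ≤ B := by positivity
  have main : ∀ N : ℕ, 1 ≤ N → (‖deriv h 0‖ * r / 4) ^ N ≤ B := by
    intro N hN
    have hNpos : (0 : ℝ) < N := by exact_mod_cast hN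
    have hpi := Real.pi_pos
    set u : ℕ → ℝ := fun j => Real.cos ((2 * (j : ℝ) + 1) * Real.pi / (2 * N)) with hu
    have hu1 : ∀ j ∈ Finset.range N, -1 < u j ∧ u j < 1 := by
      intro j hj
      have hj' : (j : ℝ) + 1 ≤ N := by exact_mod_cast Finset.mem_range.mp hj
      have p1 : 0 < (2 * (j : ℝ) + 1) * Real.pi / (2 * N) := by positivity
      have p2 : (2 * (j : ℝ) + 1) * Real.pi / (2 * N) < Real.pi := by
        rw [div_lt_iff₀ (by positivity)]; nlinarith
      constructor
      · rw [← Real.cos_pi]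
        exact Real.cos_lt_cos_of_nonneg_of_le_pi p1.le le_rfl p2
      · rw [← Real.cos_zero]
        exact Real.cos_lt_cos_of_nonneg_of_le_pi le_rfl p2.le p1
    have hex : ∀ j : ℕ, ∃ e : ℂ, j ∈ Finset.range N → (‖e‖ = (1 + u j) / (1 - u j) ∧
        ∀ z ∈ Metric.ball (0:ℂ) 1, h z ≠ e) := by
      intro j
      by_cases hj : j ∈ Finset.range N
      · obtain ⟨e, he⟩ := homit ((1 + u j) / (1 - u j))
          (div_pos (by linarith [(hu1 j hj).1]) (by linarith [(hu1 j hj).2]))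
        exact ⟨e, fun _ => he⟩
      · exact ⟨0, fun h => absurd h hj⟩
    choose e he using hex
    set Q : ℂ → ℂ := fun z => ∏ j ∈ Finset.range N, ((1 - e j) * dslope h 0 z / (h z - e j)) with hQ
    have hk : DifferentiableOn ℂ (dslope h 0) (Metric.ball 0 1) :=
      (Complex.differentiableOn_dslope (Metric.ball_mem_nhds 0 one_pos)).mpr hh
    have hQd : DifferentiableOn ℂ Q (Metric.ball 0 1) := by
      apply DifferentiableOn.fun_finsetProd
      intro j hj
      exact (hk.const_mul _).div (hh.sub_const _) (fun z hz => sub_ne_zero.mpr ((he j hj).2 z hz))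
    have hQc : DiffContOnCl ℂ Q (Metric.ball 0 r) := by
      apply DifferentiableOn.diffContOnCl
      rw [closure_ball _ hr.ne']
      exact hQd.mono hsub
    have hfr : ∀ z ∈ frontier (Metric.ball (0:ℂ) r), ‖Q z‖ ≤ B * 4 ^ N / r ^ N := by
      rw [frontier_ball _ hr.ne']
      intro z hz
      have hzr : ‖z‖ = r := by simpa using hz
      have hzc : z ∈ Metric.closedBall (0:ℂ) r := by simp [hzr]
      have hz0 : z ≠ 0 := by rintro rfl; simp at hzr; linarith
      have hds : ‖dslope h 0 z‖ = ‖h z - 1‖ / r := by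
        rw [dslope_of_ne _ hz0, slope_def_field, h0, norm_div, sub_zero, hzr]
      set G : ℕ → ℝ := fun j => ‖1 - e j‖ * ‖h z - 1‖ / ‖h z - e j‖ with hG
      have hQn : ‖Q z‖ = (∏ j ∈ Finset.range N, G j) / r ^ N := by
        rw [hQ, norm_prod]
        have : (r ^ N) = ∏ j ∈ Finset.range N, r := by simp
        rw [this, ← Finset.prod_div_distrib]
        apply Finset.prod_congr rfl
        intro j _
        rw [norm_div, norm_mul, hds]; ring
      rw [hQn]
      have hw0 := norm_nonneg (h z)
      obtain ⟨j0, hj0, hlow⟩ := cheb_lower N hN ((‖h z‖ - 1) / (‖h z‖ + 1))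
        (by rw [le_div_iff₀ (by positivity)]; linarith) (by rw [div_le_iff₀ (by positivity)]; linarith)
      have hG0 : ∀ j, 0 ≤ G j := fun j => by positivity
      set V : ℕ → ℝ := fun j => |(‖h z‖ - 1) / (‖h z‖ + 1) - u j| / 2 with hV
      have hV0 : ∀ j, 0 ≤ V j := fun j => by positivity
      have hGV : ∏ j ∈ (Finset.range N).erase j0, (G j * V j) ≤ 1 := by
        apply Finset.prod_le_one
        · intro j _; exact mul_nonneg (hG0 j) (hV0 j)
        · intro j hj
          have hj' := Finset.mem_of_mem_erase hj
          exact factor_bound _ _ _ (hu1 j hj').2 (he j hj').1 ((he j hj').2 z (hsub hzc))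
      have hlow' : (1 / 4 : ℝ) ^ N ≤ ∏ j ∈ (Finset.range N).erase j0, V j := hlow
      rw [Finset.prod_mul_distrib] at hGV
      have hE0 : 0 ≤ ∏ j ∈ (Finset.range N).erase j0, G j := Finset.prod_nonneg fun j _ => hG0 j
      have hE : ∏ j ∈ (Finset.range N).erase j0, G j ≤ 4 ^ N := by
        have : (∏ j ∈ (Finset.range N).erase j0, G j) * (1 / 4 : ℝ) ^ N ≤ 1 :=
          (mul_le_mul_of_nonneg_left hlow' hE0).trans hGV
        rw [one_div, inv_pow, ← div_eq_mul_inv, div_le_one (by positivity)] at this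
        exact this
      have hj0m := Finset.mem_range.mpr hj0
      have hGj : G j0 ≤ B := hfac z hzc _ (he j0 hj0m).2
      gcongr
      rw [← Finset.mul_prod_erase _ _ hj0m]
      exact mul_le_mul hGj hE hE0 hB0
    have hmax := Complex.norm_le_of_forall_mem_frontier_norm_le Metric.isBounded_ball hQc hfr
      (z := 0) (subset_closure (Metric.mem_ball_self hr))
    have hQ0 : ‖Q 0‖ = ‖deriv h 0‖ ^ N := by
      have : Q 0 = ∏ j ∈ Finset.range N, deriv h 0 := by
        apply Finset.prod_congr rfl
        intro j hj
        have h1 := (he j hj).2 0 (by simp)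
        rw [h0] at h1
        rw [h0, dslope_same, mul_div_cancel_left₀ _ (sub_ne_zero.mpr h1)]
      rw [this]; simp
    rw [hQ0, le_div_iff₀ (by positivity)] at hmax
    rw [div_pow, mul_pow, div_le_iff₀ (by positivity)]
    exact hmax
  by_contra hlt
  push Not at hlt
  have h1 : 1 < ‖deriv h 0‖ * r / 4 := by rw [lt_div_iff₀ (by norm_num)]; linarith
  obtain ⟨n, hn⟩ := pow_unbounded_of_one_lt B h1
  have := main (n + 1) (by omega)
  have h2 : (‖deriv h 0‖ * r / 4) ^ n ≤ (‖deriv h 0‖ * r / 4) ^ (n + 1) :=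
    pow_le_pow_right₀ h1.le (by omega)
  linarith

lemma core_s8 (h : ℂ → ℂ) (hh : DifferentiableOn ℂ h (Metric.ball 0 1)) (h0 : h 0 = 1)
    (homit : ∀ R : ℝ, 0 < R → ∃ e : ℂ, ‖e‖ = R ∧ ∀ z ∈ Metric.ball (0:ℂ) 1, h z ≠ e) :
    ‖deriv h 0‖ ≤ 4 := by
  have han : AnalyticOnNhd ℂ h (Metric.ball 0 1) := hh.analyticOnNhd Metric.isOpen_ball
  rcases han.is_constant_or_isOpen (convex_ball (0:ℂ) 1).isPreconnected with ⟨w, hw⟩ | ho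
  · have : h =ᶠ[nhds 0] fun _ => w := by
      filter_upwards [Metric.ball_mem_nhds (0:ℂ) one_pos] with z hz using hw z hz
    rw [this.deriv_eq]; simp
  · have hop := ho _ subset_rfl Metric.isOpen_ball
    by_contra hlt
    push Not at hlt
    have hp : 0 < ‖deriv h 0‖ := by linarith
    obtain ⟨r, hr1, hr2⟩ := exists_between ((div_lt_one hp).mpr hlt)
    have h4 : 0 < 4 / ‖deriv h 0‖ := by positivity
    have := core_r h hh h0 homit hop r (h4.trans hr1) hr2
    rw [div_lt_iff₀ hp] at hr1
    linarith

lemma deriv_bound_n (F : ℂ → ℂ) (p n : ℕ) (hn : 1 ≤ n)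
    (hF : DifferentiableOn ℂ F (Metric.ball 0 1))
    (hv : ∀ c : ℂ, ∀ T : Finset ℂ, (∀ z ∈ T, z ∈ Metric.ball (0:ℂ) 1 ∧ Complex.exp (F z) = c) →
      T.card ≤ p) :
    ‖deriv F 0‖ ≤ 4 * p + 4 / n := by
  set m : ℕ := n * p + 1 with hm
  have hmC : (m : ℂ) ≠ 0 := by rw [hm]; exact_mod_cast Nat.succ_ne_zero (n * p)
  have hmR : (0 : ℝ) < m := by rw [hm]; positivity
  have hnR : (0 : ℝ) < n := by exact_mod_cast hn
  set h : ℂ → ℂ := fun z => Complex.exp ((n / m : ℂ) * (F z - F 0)) with hh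
  have hd : DifferentiableOn ℂ h (Metric.ball 0 1) := by
    apply DifferentiableOn.cexp
    exact (hF.sub_const _).const_mul _
  have hpow : ∀ z, h z ^ m = Complex.exp (F z) ^ n / Complex.exp (F 0) ^ n := by
    intro z
    rw [hh, ← Complex.exp_nat_mul, ← Complex.exp_nat_mul, ← Complex.exp_nat_mul, ← Complex.exp_sub]
    congr 1
    field_simp
  have homit : ∀ R : ℝ, 0 < R → ∃ e : ℂ, ‖e‖ = R ∧ ∀ z ∈ Metric.ball (0:ℂ) 1, h z ≠ e := by
    intro R hR
    by_contra hcon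
    push Not at hcon
    have hprim := Complex.isPrimitiveRoot_exp m (by omega)
    set ζ := Complex.exp (2 * Real.pi * Complex.I / m) with hζ
    have hζn : ‖ζ‖ = 1 := hprim.norm'_eq_one (by omega)
    have hz : ∀ j : ℕ, ∃ z ∈ Metric.ball (0:ℂ) 1, h z = R * ζ ^ j := by
      intro j
      apply hcon
      rw [norm_mul, norm_pow, hζn]; simp [abs_of_pos hR]
    choose z hzb hze using hz
    have hinj : Set.InjOn z (Finset.range m : Set ℕ) := by
      intro i hi j hj hij
      have : (R : ℂ) * ζ ^ i = R * ζ ^ j := by rw [← hze, ← hze, hij]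
      have h2 := mul_left_cancel₀ (by exact_mod_cast hR.ne' : (R : ℂ) ≠ 0) this
      exact hprim.pow_inj (by simpa using hi) (by simpa using hj) h2
    set S := (Finset.range m).image z with hS
    have hScard : S.card = m := by rw [hS, Finset.card_image_of_injOn hinj]; simp
    set C : ℂ := Complex.exp (F 0) ^ n * R ^ m with hC
    have hval : ∀ w ∈ S, w ∈ Metric.ball (0:ℂ) 1 ∧ Complex.exp (F w) ^ n = C := by
      intro w hw
      obtain ⟨j, _, rfl⟩ := Finset.mem_image.mp hw
      refine ⟨hzb j, ?_⟩
      have h1 := hpow (z j)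
      rw [hze, mul_pow, ← pow_mul, mul_comm j m, pow_mul, hprim.pow_eq_one, one_pow, mul_one,
        eq_div_iff (pow_ne_zero _ (Complex.exp_ne_zero _))] at h1
      rw [← h1, hC]; ring
    have h1 := Finset.card_le_mul_card_image (f := fun w => Complex.exp (F w)) S p (by
      intro b _
      apply hv b
      intro w hw
      rw [Finset.mem_filter] at hw
      exact ⟨(hval w hw.1).1, hw.2⟩)
    have h2 : (S.image fun w => Complex.exp (F w)).card ≤ n := by
      have hsub : (S.image fun w => Complex.exp (F w)) ⊆ (Polynomial.nthRoots n C).toFinset := by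
        intro b hb
        obtain ⟨w, hw, rfl⟩ := Finset.mem_image.mp hb
        rw [Multiset.mem_toFinset, Polynomial.mem_nthRoots (by omega)]
        exact (hval w hw).2
      exact (Finset.card_le_card hsub).trans ((Multiset.toFinset_card_le _).trans
        (Polynomial.card_nthRoots n C))
    have h3 : p * (S.image fun w => Complex.exp (F w)).card ≤ p * n := Nat.mul_le_mul_left _ h2
    rw [hScard, hm] at h1
    have : p * n = n * p := mul_comm _ _
    omega
  have hc := core_s8 h hd (by simp [hh]) homit
  have hF0 : HasDerivAt F (deriv F 0) 0 :=
    (hF.differentiableAt (Metric.ball_mem_nhds 0 one_pos)).hasDerivAt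
  have hder : deriv h 0 = (n / m : ℂ) * deriv F 0 := by
    have := ((hF0.sub_const (F 0)).const_mul (n / m : ℂ)).cexp
    rw [this.deriv]; simp
  rw [hder, norm_mul, norm_div, Complex.norm_natCast, Complex.norm_natCast] at hc
  rw [div_mul_eq_mul_div, div_le_iff₀ hmR] at hc
  have e : (4 * p + 4 / n : ℝ) = 4 * m / n := by rw [hm]; push_cast; field_simp
  rw [e, le_div_iff₀ hnR]; linarith

lemma deriv_bound (F : ℂ → ℂ) (p : ℕ)
    (hF : DifferentiableOn ℂ F (Metric.ball 0 1))
    (hv : ∀ c : ℂ, ∀ T : Finset ℂ, (∀ z ∈ T, z ∈ Metric.ball (0:ℂ) 1 ∧ Complex.exp (F z) = c) →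
      T.card ≤ p) :
    ‖deriv F 0‖ ≤ 4 * p := by
  apply le_of_forall_pos_le_add
  intro ε hε
  obtain ⟨n, hn⟩ := exists_nat_gt (4 / ε)
  have hn0 : (0 : ℝ) < n := lt_trans (by positivity) hn
  have hn1 : 1 ≤ n := by exact_mod_cast hn0
  have := deriv_bound_n F p n hn1 hF hv
  have h2 : (4 : ℝ) / n ≤ ε := by
    rw [div_lt_iff₀ hε] at hn; rw [div_le_iff₀ hn0]; linarith
  linarith

lemma mob_den (a z : ℂ) (ha : ‖a‖ < 1) (hz : ‖z‖ < 1) : 1 + starRingEnd ℂ a * z ≠ 0 := by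
  intro h
  have h1 : starRingEnd ℂ a * z = -1 := by linear_combination h
  have h2 := congrArg norm h1
  rw [norm_mul, RCLike.norm_conj, norm_neg, norm_one] at h2
  nlinarith [norm_nonneg a, norm_nonneg z]

lemma mob_norm (a z : ℂ) (ha : ‖a‖ < 1) (hz : ‖z‖ < 1) :
    ‖(z + a) / (1 + starRingEnd ℂ a * z)‖ < 1 := by
  have hd := mob_den a z ha hz
  rw [norm_div, div_lt_one (norm_pos_iff.mpr hd)]
  apply lt_of_pow_lt_pow_left₀ 2 (norm_nonneg _)
  have ha2 : ‖a‖ ^ 2 < 1 := by nlinarith [norm_nonneg a]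
  have hz2 : ‖z‖ ^ 2 < 1 := by nlinarith [norm_nonneg z]
  rw [← Complex.normSq_eq_norm_sq] at *
  rw [← Complex.normSq_eq_norm_sq] at *
  simp only [Complex.normSq_apply, Complex.add_re, Complex.add_im, Complex.mul_re, Complex.mul_im,
    Complex.conj_re, Complex.conj_im, Complex.one_re, Complex.one_im] at *
  nlinarith [mul_pos (sub_pos.mpr ha2) (sub_pos.mpr hz2)]

lemma deriv_bound_at (F : ℂ → ℂ) (p : ℕ)
    (hF : DifferentiableOn ℂ F (Metric.ball 0 1))
    (hv : ∀ c : ℂ, ∀ T : Finset ℂ, (∀ z ∈ T, z ∈ Metric.ball (0:ℂ) 1 ∧ Complex.exp (F z) = c) →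
      T.card ≤ p) (a : ℂ) (ha : ‖a‖ < 1) :
    ‖deriv F a‖ ≤ 4 * p / (1 - ‖a‖ ^ 2) := by
  set φ : ℂ → ℂ := fun z => (z + a) / (1 + starRingEnd ℂ a * z) with hφ
  have hden : ∀ z ∈ Metric.ball (0:ℂ) 1, 1 + starRingEnd ℂ a * z ≠ 0 := fun z hz =>
    mob_den a z ha (by simpa using hz)
  have hmaps : Set.MapsTo φ (Metric.ball 0 1) (Metric.ball 0 1) := by
    intro z hz
    have := mob_norm a z ha (by simpa using hz)
    exact mem_ball_zero_iff.mpr this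
  have hφd : DifferentiableOn ℂ φ (Metric.ball 0 1) := by
    apply DifferentiableOn.div (by fun_prop) (by fun_prop) hden
  have ha2 : 0 < 1 - ‖a‖ ^ 2 := by nlinarith [norm_nonneg a]
  have haa : (1 : ℂ) - starRingEnd ℂ a * a = ((1 - ‖a‖ ^ 2 : ℝ) : ℂ) := by
    rw [Complex.conj_mul']; push_cast; ring
  have hinj : Set.InjOn φ (Metric.ball 0 1) := by
    intro z hz w hw hzw
    simp only [hφ] at hzw
    rw [div_eq_div_iff (hden z hz) (hden w hw)] at hzw
    have : (1 - starRingEnd ℂ a * a) * (z - w) = 0 := by linear_combination hzw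
    rw [haa] at this
    rcases mul_eq_zero.mp this with h | h
    · exact absurd h (by exact_mod_cast ha2.ne')
    · exact sub_eq_zero.mp h
  have h1 := deriv_bound (F ∘ φ) p (hF.comp hφd hmaps) (by
    intro c T hT
    have hc := hv c (T.image φ) (by
      intro w hw
      obtain ⟨z, hz, rfl⟩ := Finset.mem_image.mp hw
      exact ⟨hmaps (hT z hz).1, (hT z hz).2⟩)
    rwa [Finset.card_image_of_injOn (hinj.mono fun z hz => (hT z hz).1)] at hc)
  have hφ0 : φ 0 = a := by simp [hφ]
  have hφ' : HasDerivAt φ ((1 - ‖a‖ ^ 2 : ℝ) : ℂ) 0 := by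
    have hnum : HasDerivAt (fun z : ℂ => z + a) 1 0 := (hasDerivAt_id (0:ℂ)).add_const a
    have hde : HasDerivAt (fun z : ℂ => 1 + starRingEnd ℂ a * z) (starRingEnd ℂ a) 0 := by
      simpa using ((hasDerivAt_id (0:ℂ)).const_mul (starRingEnd ℂ a)).const_add 1
    have := hnum.div hde (by simp)
    refine this.congr_deriv ?_
    rw [← haa]; simp; ring
  have hFa : HasDerivAt F (deriv F a) (φ 0) := by
    rw [hφ0]
    exact (hF.differentiableAt (Metric.isOpen_ball.mem_nhds (by simpa using ha))).hasDerivAt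
  rw [(hFa.comp 0 hφ').deriv, norm_mul, Complex.norm_real, Real.norm_eq_abs, abs_of_pos ha2] at h1
  rwa [le_div_iff₀ ha2]

lemma growth_s8 (F : ℂ → ℂ) (p : ℕ)
    (hF : DifferentiableOn ℂ F (Metric.ball 0 1)) (hF0 : F 0 = 0)
    (hv : ∀ c : ℂ, ∀ T : Finset ℂ, (∀ z ∈ T, z ∈ Metric.ball (0:ℂ) 1 ∧ Complex.exp (F z) = c) →
      T.card ≤ p) (z : ℂ) (hz : ‖z‖ < 1) :
    ‖F z‖ ≤ 2 * p * Real.log ((1 + ‖z‖) / (1 - ‖z‖)) := by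
  have hz0 := norm_nonneg z
  have hin : ∀ t : ℝ, t ∈ Set.Icc (0:ℝ) 1 → ‖(t : ℂ) * z‖ = t * ‖z‖ ∧ t * ‖z‖ < 1 := by
    intro t ht
    refine ⟨by rw [norm_mul, Complex.norm_real, Real.norm_eq_abs, abs_of_nonneg ht.1], ?_⟩
    nlinarith [ht.1, ht.2]
  have hd : ∀ t : ℝ, t ∈ Set.Icc (0:ℝ) 1 →
      HasDerivAt (fun t : ℝ => F (t * z)) (deriv F (t * z) * z) t := by
    intro t ht
    have h1 : HasDerivAt F (deriv F (t * z)) ((t : ℂ) * z) :=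
      (hF.differentiableAt (Metric.isOpen_ball.mem_nhds (by
        have := hin t ht; simp only [mem_ball_zero_iff]; rw [this.1]; exact this.2))).hasDerivAt
    have h2 : HasDerivAt (fun t : ℝ => (t : ℂ) * z) z t := by
      simpa using (Complex.ofRealCLM.hasDerivAt (x := t)).mul_const z
    exact h1.comp t h2
  have hB : ∀ t : ℝ, t ∈ Set.Icc (0:ℝ) 1 →
      HasDerivAt (fun t : ℝ => 2 * p * (Real.log (1 + t * ‖z‖) - Real.log (1 - t * ‖z‖)))
        (2 * p * (‖z‖ / (1 + t * ‖z‖) - (-‖z‖) / (1 - t * ‖z‖))) t := by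
    intro t ht
    have := (hin t ht).2
    have h0 : 0 ≤ t * ‖z‖ := mul_nonneg ht.1 hz0
    have d : HasDerivAt (fun t : ℝ => t * ‖z‖) ‖z‖ t := by simpa using (hasDerivAt_id t).mul_const ‖z‖
    exact (((d.const_add 1).log (by positivity)).sub ((d.const_sub 1).log (by linarith))).const_mul _
  have := image_norm_le_of_norm_deriv_right_le_deriv_boundary' (a := 0) (b := 1)
    (f := fun t : ℝ => F (t * z)) (f' := fun t : ℝ => deriv F (t * z) * z)
    (fun t ht => (hd t ht).continuousAt.continuousWithinAt)
    (fun t ht => (hd t (Set.Ico_subset_Icc_self ht)).hasDerivWithinAt)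
    (B := fun t : ℝ => 2 * p * (Real.log (1 + t * ‖z‖) - Real.log (1 - t * ‖z‖)))
    (B' := fun t : ℝ => 2 * p * (‖z‖ / (1 + t * ‖z‖) - (-‖z‖) / (1 - t * ‖z‖)))
    (by simp [hF0])
    (fun t ht => (hB t ht).continuousAt.continuousWithinAt)
    (fun t ht => (hB t (Set.Ico_subset_Icc_self ht)).hasDerivWithinAt)
    (by
      intro t ht
      have ht' := Set.Ico_subset_Icc_self ht
      obtain ⟨h1, h2⟩ := hin t ht'
      have h0 : 0 ≤ t * ‖z‖ := mul_nonneg ht.1 hz0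
      have hb := deriv_bound_at F p hF hv (t * z) (by rw [h1]; exact h2)
      rw [h1] at hb
      rw [norm_mul]
      have e : 2 * p * (‖z‖ / (1 + t * ‖z‖) - (-‖z‖) / (1 - t * ‖z‖))
          = 4 * p / (1 - (t * ‖z‖) ^ 2) * ‖z‖ := by
        have a1 : (1 - t * ‖z‖) ≠ 0 := by linarith
        have a2 : (1 + t * ‖z‖) ≠ 0 := by linarith
        have a3 : 1 - (t * ‖z‖) ^ 2 = (1 - t * ‖z‖) * (1 + t * ‖z‖) := by ring
        rw [a3, div_sub_div _ _ a2 a1, div_mul_eq_mul_div, ← mul_div_assoc, mul_comm (1 - t * ‖z‖)]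
        congr 1; ring
      rw [e]; gcongr)
    (x := 1) (by simp)
  rw [Real.log_div (by positivity) (by linarith)]
  simpa using this

lemma valent_of (f : ℂ → ℂ) (s p : ℕ) (x : Fin s → ℂ) (A : ℂ) (g : ℂ → ℂ)
    (hf : AnalyticOnNhd ℂ f (Metric.ball (0 : ℂ) 1))
    (hval : IsSPValentOn f (Metric.ball (0 : ℂ) 1) s p)
    (hfactor : ∀ z ∈ Metric.ball (0 : ℂ) 1, f z = (A * ∏ j, (z - x j)) * g z)
    (c : ℂ) (T : Finset ℂ) (hT : ∀ z ∈ T, z ∈ Metric.ball (0:ℂ) 1 ∧ g z = c) :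
    T.card ≤ p := by
  classical
  set P : Polynomial ℂ := Polynomial.C (c * A) * ∏ j, (Polynomial.X - Polynomial.C (x j)) with hP
  have hdeg : P.degree ≤ (s : ℕ) := by
    have h1 : (∏ j, (Polynomial.X - Polynomial.C (x j))).degree ≤ (s : WithBot ℕ) := by
      refine (Polynomial.degree_prod_le _ _).trans ?_
      simp
    refine (Polynomial.degree_mul_le _ _).trans ?_
    refine (add_le_add Polynomial.degree_C_le h1).trans ?_
    simp
  have h := hval P hdeg
  unfold solCount at h
  set q : ℂ → ℂ := fun z => f z - P.eval z with hq
  have hsum : Summable (fun z : Metric.ball (0:ℂ) 1 => ordAt q z) :=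
    (hasSum_of_isLUB _ (isLUB_sSup _)).summable
  set T' : Finset (Metric.ball (0:ℂ) 1) := T.subtype (fun z => z ∈ Metric.ball (0:ℂ) 1) with hT'
  have hcard : T'.card = T.card := by
    rw [hT', Finset.card_subtype, Finset.filter_true_of_mem fun z hz => (hT z hz).1]
  have h1 := hsum.sum_le_tsum T' (fun _ _ => zero_le)
  have h2 : (T'.card : ℕ∞) ≤ ∑ z ∈ T', ordAt q z := by
    rw [Finset.card_eq_sum_ones, Nat.cast_sum]
    apply Finset.sum_le_sum
    intro z hz
    have hzT : (z : ℂ) ∈ T := by simpa [hT'] using hz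
    have han : AnalyticAt ℂ q z := by
      apply (hf z z.2).sub
      exact AnalyticOnNhd.eval_polynomial P z (Set.mem_univ _)
    have hz0 : q z = 0 := by
      simp only [hq, hfactor z z.2, hP, (hT z hzT).2]
      simp [Polynomial.eval_prod]; ring
    unfold ordAt
    rw [dif_pos han]
    have : analyticOrderAt q z ≠ 0 := han.analyticOrderAt_ne_zero.mpr hz0
    simpa using Order.one_le_iff_ne_zero.mpr this
  have h3 := (h2.trans h1).trans h
  rw [hcard] at h3
  exact_mod_cast h3

lemma nonvan (f : ℂ → ℂ) (s : ℕ) (x : Fin s → ℂ) (A : ℂ) (g : ℂ → ℂ)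
    (hf : AnalyticOnNhd ℂ f (Metric.ball (0 : ℂ) 1))
    (hzeros : ∀ z ∈ Metric.ball (0 : ℂ) 1,
      ordAt f z = (({j : Fin s | x j = z} : Set (Fin s)).ncard : ℕ∞))
    (hg : AnalyticOnNhd ℂ g (Metric.ball (0 : ℂ) 1))
    (hfactor : ∀ z ∈ Metric.ball (0 : ℂ) 1, f z = (A * ∏ j, (z - x j)) * g z)
    (z : ℂ) (hz : z ∈ Metric.ball (0:ℂ) 1) : g z ≠ 0 := by
  classical
  intro hgz
  have hord := hzeros z hz
  unfold ordAt at hord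
  rw [dif_pos (hf z hz)] at hord
  set m := ({j : Fin s | x j = z} : Set (Fin s)).ncard with hm
  have hm' : (Finset.univ.filter fun j : Fin s => x j = z).card = m := by
    rw [hm, ← Set.ncard_coe_finset]; congr 1; ext; simp
  have h1 : ((1 : ℕ) : ℕ∞) ≤ analyticOrderAt g z := by
    have := (hg z hz).analyticOrderAt_ne_zero.mpr hgz
    simpa using Order.one_le_iff_ne_zero.mpr this
  obtain ⟨k, hk, hgk⟩ := (natCast_le_analyticOrderAt (hg z hz)).mp h1
  have h2 : ((m + 1 : ℕ) : ℕ∞) ≤ analyticOrderAt f z := by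
    rw [natCast_le_analyticOrderAt (hf z hz)]
    refine ⟨fun w => A * (∏ j ∈ Finset.univ.filter (fun j : Fin s => ¬ x j = z), (w - x j)) * k w,
      ?_, ?_⟩
    · refine (analyticAt_const.mul ?_).mul hk
      apply Finset.analyticAt_fun_prod
      intro j _
      exact analyticAt_id.sub analyticAt_const
    · filter_upwards [hgk, Metric.isOpen_ball.mem_nhds hz] with w hw hwb
      rw [hfactor w hwb, hw, ← Finset.prod_filter_mul_prod_filter_not Finset.univ (fun j => x j = z)]
      have : ∏ j ∈ Finset.univ.filter (fun j : Fin s => x j = z), (w - x j) = (w - z) ^ m := by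
        rw [← hm', ← Finset.prod_const]
        apply Finset.prod_congr rfl
        intro j hj
        rw [(Finset.mem_filter.mp hj).2]
      rw [this]
      simp only [smul_eq_mul]; ring
  rw [hord] at h2
  have : m + 1 ≤ m := by exact_mod_cast h2
  omega

/-- Distortion theorem: let `f` be `(s,p)`-valent in the unit disk, having there exactly
`s` zeroes `x 0, …, x (s-1)` (counted with multiplicity). Let `P(z) = A ∏ (z - x j)` with
`A` chosen so that the analytic quotient `g = f / P` has constant term `g 0 = 1`. Then
`((1-|z|)/(1+|z|))^{2p} ≤ |f(z)/P(z)| = |g(z)| ≤ ((1+|z|)/(1-|z|))^{2p}` on the disk. -/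
theorem statement8 (f : ℂ → ℂ) (s p : ℕ) (x : Fin s → ℂ) (A : ℂ) (g : ℂ → ℂ)
    (hf : AnalyticOnNhd ℂ f (Metric.ball (0 : ℂ) 1))
    (hval : IsSPValentOn f (Metric.ball (0 : ℂ) 1) s p)
    (hx : ∀ j, x j ∈ Metric.ball (0 : ℂ) 1)
    (hzeros : ∀ z ∈ Metric.ball (0 : ℂ) 1,
      ordAt f z = (({j : Fin s | x j = z} : Set (Fin s)).ncard : ℕ∞))
    (hg : AnalyticOnNhd ℂ g (Metric.ball (0 : ℂ) 1))
    (hfactor : ∀ z ∈ Metric.ball (0 : ℂ) 1,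
      f z = (A * ∏ j, (z - x j)) * g z)
    (hg0 : g 0 = 1) :
    ∀ z ∈ Metric.ball (0 : ℂ) 1,
      ((1 - ‖z‖) / (1 + ‖z‖)) ^ (2 * p) ≤ ‖g z‖ ∧
      ‖g z‖ ≤
        ((1 + ‖z‖) / (1 - ‖z‖)) ^ (2 * p) := by
  intro z hz
  have hgne := nonvan f s x A g hf hzeros hg hfactor
  have hgd : DifferentiableOn ℂ g (Metric.ball 0 1) := hg.differentiableOn
  have hex : DifferentiableOn ℂ (fun z => deriv g z / g z) (Metric.ball 0 1) :=
    (hgd.deriv Metric.isOpen_ball).div hgd hgne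
  obtain ⟨F, hF0, hF⟩ := hex.isExactOn_ball.with_val_at 0 0
  have hFd : DifferentiableOn ℂ F (Metric.ball 0 1) := fun w hw =>
    (hF w hw).differentiableAt.differentiableWithinAt
  have hexp : ∀ w ∈ Metric.ball (0:ℂ) 1, Complex.exp (F w) = g w := by
    have hconst : ∀ w ∈ Metric.ball (0:ℂ) 1,
        HasDerivAt (fun w => Complex.exp (-F w) * g w) 0 w := by
      intro w hw
      have h1 := (hF w hw).neg.cexp
      have h2 := (hgd.differentiableAt (Metric.isOpen_ball.mem_nhds hw)).hasDerivAt
      have h3 := h1.mul h2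
      refine h3.congr_deriv ?_
      have := hgne w hw
      field_simp; ring
    intro w hw
    have hc := Metric.isOpen_ball.is_const_of_deriv_eq_zero (convex_ball (0:ℂ) 1).isPreconnected
      (f := fun w => Complex.exp (-F w) * g w)
      (fun w hw => (hconst w hw).differentiableAt.differentiableWithinAt)
      (fun w hw => (hconst w hw).deriv) hw (Metric.mem_ball_self one_pos)
    simp only [hF0, hg0, neg_zero, Complex.exp_zero, mul_one, Complex.exp_neg] at hc
    rw [inv_mul_eq_one₀ (Complex.exp_ne_zero _)] at hc
    exact hc
  have hv : ∀ c : ℂ, ∀ T : Finset ℂ,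
      (∀ z ∈ T, z ∈ Metric.ball (0:ℂ) 1 ∧ Complex.exp (F z) = c) → T.card ≤ p := by
    intro c T hT
    exact valent_of f s p x A g hf hval hfactor c T fun w hw =>
      ⟨(hT w hw).1, by rw [← hexp w (hT w hw).1]; exact (hT w hw).2⟩
  have hz1 : ‖z‖ < 1 := by simpa using hz
  have hz0 := norm_nonneg z
  have hgr := growth_s8 F p hFd hF0 hv z hz1
  have hq : 0 < (1 + ‖z‖) / (1 - ‖z‖) := div_pos (by positivity) (by linarith)
  have hre := abs_le.mp ((Complex.abs_re_le_norm (F z)).trans hgr)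
  have hpow : Real.exp (2 * p * Real.log ((1 + ‖z‖) / (1 - ‖z‖)))
      = ((1 + ‖z‖) / (1 - ‖z‖)) ^ (2 * p) := by
    have : (2 * p * Real.log ((1 + ‖z‖) / (1 - ‖z‖)) : ℝ)
        = ((2 * p : ℕ) : ℝ) * Real.log ((1 + ‖z‖) / (1 - ‖z‖)) := by push_cast; ring
    rw [this, Real.exp_nat_mul, Real.exp_log hq]
  rw [← hexp z hz, Complex.norm_exp]
  constructor
  · rw [← inv_div, inv_pow, ← hpow, ← Real.exp_neg]
    exact Real.exp_le_exp.mpr hre.1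
  · rw [← hpow]
    exact Real.exp_le_exp.mpr hre.2
end

section
/- Let p ≥ 1 and N ≥ 10p + 1 be integers, and let f(x) = x^p + x^N. Then for every s = 0, 1, …, p−1, the function f is (s,p)-valent in the disk D_{1/3} = {z ∈ ℂ : |z| < 1/3}: for every polynomial P of degree at most p−1, the equation f(x) = P(x) has at most p solutions in D_{1/3}, counted with multiplicity. -/
open Polynomial

lemma coeff_bound_s9 (G H : ℂ[X]) (x : ℂ) (hx : ‖x‖ ≤ 1/3) (hG : G = (X - C x) * H) (A : ℝ) (hA : 0 ≤ A)
    (m : ℕ) (h : ∀ j, m < j → ‖G.coeff j‖ ≤ A * 2 ^ j) :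
    ∀ k j, H.natDegree < j + k → m ≤ j → ‖H.coeff j‖ ≤ 6 * A * 2 ^ j := by
  intro k
  induction k with
  | zero =>
    intro j hj _
    rw [coeff_eq_zero_of_natDegree_lt (by simpa using hj)]
    simp; positivity
  | succ k ih =>
    intro j hj hm
    have h1 := ih (j+1) (by omega) (by omega)
    have h2 := h (j+1) (by omega)
    have e : H.coeff j = G.coeff (j+1) + x * H.coeff (j+1) := by
      rw [hG, sub_mul, coeff_sub, coeff_X_mul, coeff_C_mul]; ring
    rw [e]
    have h3 := norm_add_le (G.coeff (j+1)) (x * H.coeff (j+1))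
    rw [norm_mul] at h3
    have h4 : ‖x‖ * ‖H.coeff (j+1)‖ ≤ 1/3 * (6 * A * 2^(j+1)) := by gcongr
    rw [pow_succ] at *
    linarith

lemma main_ind (m : ℕ) : ∀ (G : ℂ[X]) (A : ℝ) (s : Multiset ℂ), 0 ≤ A → s.card = m + 1 →
    (∀ x ∈ s, ‖x‖ ≤ 1/3) → (s.map (fun a => X - C a)).prod ∣ G →
    (∀ j, m < j → ‖G.coeff j‖ ≤ A * 2 ^ j) → ‖G.coeff m - 1‖ ≤ A * 2 ^ m →
    1 ≤ A * 3 * 6 ^ m := by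
  induction m with
  | zero =>
    intro G A s hA hs hx hd h h0
    obtain ⟨x, rfl⟩ := Multiset.card_eq_one.1 hs
    obtain ⟨H, hH⟩ := hd
    simp only [Multiset.map_singleton, Multiset.prod_singleton] at hH
    have hx := hx x (by simp)
    have b := coeff_bound_s9 G H x hx hH A hA 0 h (H.natDegree + 1) 0 (by omega) le_rfl
    have e : G.coeff 0 = - (x * H.coeff 0) := by
      rw [hH, sub_mul, coeff_sub, coeff_C_mul]; simp
    rw [e] at h0
    have h4 : ‖x‖ * ‖H.coeff 0‖ ≤ 1/3 * (6 * A * 2^0) := by gcongr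
    have h5 : ‖(1:ℂ)‖ ≤ ‖-(x * H.coeff 0) - 1‖ + ‖x * H.coeff 0‖ := by
      rw [← norm_neg (-(x * H.coeff 0) - 1)]
      refine le_trans (le_of_eq ?_) (norm_sub_le _ _)
      congr 1; ring
    rw [norm_mul x, norm_one] at h5
    simp at *
    linarith
  | succ m ih =>
    intro G A s hA hs hx hd h h0
    obtain ⟨x, s, rfl⟩ : ∃ x t, s = x ::ₘ t := by
      obtain ⟨x, hx⟩ := Multiset.card_pos_iff_exists_mem.1 (show 0 < s.card by omega)
      obtain ⟨t, rfl⟩ := Multiset.exists_cons_of_mem hx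
      exact ⟨x, t, rfl⟩
    obtain ⟨K, hK⟩ := hd
    rw [Multiset.map_cons, Multiset.prod_cons, mul_assoc] at hK
    have hxx := hx x (by simp)
    set H := (s.map (fun a => X - C a)).prod * K with hH
    have b := coeff_bound_s9 G H x hxx hK A hA (m+1) h
    have b' : ∀ j, m < j → ‖H.coeff j‖ ≤ 6 * A * 2 ^ j := fun j hj =>
      b (H.natDegree + 1) j (by omega) hj
    have e : H.coeff m = G.coeff (m+1) + x * H.coeff (m+1) := by
      rw [hK, sub_mul, coeff_sub, coeff_X_mul, coeff_C_mul]; ring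
    have := ih H (6*A) s (by positivity) (by simpa using hs) (fun y hy => hx y (by simp [hy]))
      ⟨K, hH⟩ b' (by
        rw [e]
        have h3 := norm_add_le (G.coeff (m+1) - 1) (x * H.coeff (m+1))
        rw [norm_mul] at h3
        have h6 := b' (m+1) (by omega)
        have h4 : ‖x‖ * ‖H.coeff (m+1)‖ ≤ 1/3 * (6 * A * 2^(m+1)) := by gcongr
        rw [show G.coeff (m+1) + x * H.coeff (m+1) - 1 = G.coeff (m+1) - 1 + x * H.coeff (m+1) by ring]
        rw [pow_succ] at *
        linarith)
    rw [pow_succ]; linarith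

lemma order_eq (G : ℂ[X]) (hG : G ≠ 0) (z : ℂ) :
    analyticOrderAt (fun w => G.eval w) z = (G.rootMultiplicity z : ℕ∞) := by
  have han : ∀ Q : ℂ[X], AnalyticAt ℂ (fun w => Q.eval w) z := fun Q =>
    (Q.differentiable).analyticAt z
  rw [(han G).analyticOrderAt_eq_natCast]
  obtain ⟨q, hq, hnd⟩ := exists_eq_pow_rootMultiplicity_mul_and_not_dvd G hG z
  refine ⟨fun w => q.eval w, han q, ?_, ?_⟩
  · intro h0
    exact hnd (dvd_iff_isRoot.2 h0)
  · refine Filter.Eventually.of_forall fun w => ?_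
    conv_lhs => rw [hq]
    simp

theorem statement9 (p N : ℕ) (hp : 1 ≤ p) (hN : 10 * p + 1 ≤ N) :
    ∀ s : ℕ, s < p →
      IsSPValentOn (fun x : ℂ => x ^ p + x ^ N)
        (Metric.ball (0 : ℂ) (1 / 3)) s p := by
  classical
  intro s hs P hP
  set G : ℂ[X] := X ^ p + X ^ N - P with hGdef
  have hPc : ∀ j, p ≤ j → P.coeff j = 0 := fun j hj =>
    coeff_eq_zero_of_degree_lt (lt_of_le_of_lt hP (by exact_mod_cast lt_of_lt_of_le hs hj))
  have hG0 : G ≠ 0 := by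
    intro h
    have := congrArg (fun q => coeff q N) h
    simp [hGdef, coeff_X_pow, hPc N (by omega)] at this
    split_ifs at this with h
    · omega
    · simp at this
  have hfun : (fun z : ℂ => (fun x : ℂ => x ^ p + x ^ N) z - P.eval z) = fun w => G.eval w := by
    funext w; simp [hGdef]
  have hord : ∀ z, ordAt (fun w => G.eval w) z = (G.roots.count z : ℕ∞) := by
    intro z
    rw [ordAt, dif_pos ((G.differentiable).analyticAt z), order_eq G hG0, count_roots]
  set B := Metric.ball (0 : ℂ) (1 / 3) with hB
  set R := G.roots.filter (· ∈ B) with hR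
  have hcount : solCount (fun w => G.eval w) B = (R.card : ℕ∞) := by
    unfold solCount
    rw [tsum_subtype B (ordAt (fun w => G.eval w))]
    rw [tsum_eq_sum (s := R.toFinset)]
    · rw [← Multiset.toFinset_sum_count_eq, Nat.cast_sum]
      refine Finset.sum_congr rfl fun z hz => ?_
      have hz : z ∈ B := by
        rw [Multiset.mem_toFinset, hR, Multiset.mem_filter] at hz; exact hz.2
      rw [Set.indicator_of_mem hz, hord, hR, Multiset.count_filter_of_pos hz]
    · intro z hz
      by_cases hzB : z ∈ B
      · rw [Set.indicator_of_mem hzB, hord]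
        rw [Multiset.mem_toFinset, ← Multiset.count_eq_zero, hR, Multiset.count_filter_of_pos hzB] at hz
        simp [hz]
      · exact Set.indicator_of_notMem hzB _
  rw [hfun, hcount]
  by_contra hcon
  have hcard : p + 1 ≤ R.card := by
    by_contra h
    exact hcon (by exact_mod_cast (show R.card ≤ p by omega))
  obtain ⟨t, htR, htc⟩ : ∃ t : Multiset ℂ, t ≤ R ∧ t.card = p + 1 := by
    refine ⟨(R.toList.take (p + 1) : List ℂ), ?_, ?_⟩
    · conv_rhs => rw [← Multiset.coe_toList R]
      exact Multiset.coe_le.2 (List.take_sublist _ _).subperm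
    · simp [hcard]
  have key := main_ind p G (1 / 2 ^ N) t (by positivity) htc
    (fun x hx => by
      have := Multiset.mem_of_le htR hx
      rw [hR, Multiset.mem_filter, hB, mem_ball_zero_iff] at this
      exact this.2.le)
    ((Multiset.prod_X_sub_C_dvd_iff_le_roots hG0 t).2 (htR.trans (Multiset.filter_le _ _)))
    (fun j hj => by
      rw [hGdef, coeff_sub, coeff_add, coeff_X_pow, coeff_X_pow, hPc j hj.le, if_neg (by omega)]
      by_cases h : j = N
      · subst h; simp
      · rw [if_neg h]; simp)
    (by
      rw [hGdef, coeff_sub, coeff_add, coeff_X_pow, coeff_X_pow, hPc p le_rfl, if_pos rfl,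
        if_neg (by omega)]
      simp)
  have h1 : (2:ℝ) ^ (10 * p + 1) ≤ 2 ^ N := pow_le_pow_right₀ (by norm_num) hN
  have h2 : (2:ℝ) ^ (10 * p + 1) = 2 * (1024 ^ p) := by
    rw [pow_succ, pow_mul]; norm_num; ring
  have h3 : (12:ℝ) ^ p ≤ 1024 ^ p := by gcongr; norm_num
  have h4 : (2:ℝ) ≤ 2 ^ p := by
    calc (2:ℝ) = 2 ^ 1 := by norm_num
      _ ≤ 2 ^ p := pow_le_pow_right₀ (by norm_num) hp
  have h5 : (12:ℝ) ^ p = 2 ^ p * 6 ^ p := by rw [← mul_pow]; norm_num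
  have h6 : (0:ℝ) < 6 ^ p := by positivity
  have h7 : (2:ℝ) ^ N ≤ 3 * 6 ^ p := by
    rw [mul_assoc, div_mul_eq_mul_div, one_mul, le_div_iff₀ (by positivity)] at key
    linarith
  nlinarith
end

section
/- Let p ≥ 1 and N ≥ 10p + 1 be integers, and let f(x) = x^p + x^N. Then there exists a polynomial P of degree at most p (of the form P(x) = x^p + c with c ∈ ℂ, c ≠ 0 sufficiently small) such that the equation f(x) = P(x) has exactly N solutions in D_{1/3}, counted with multiplicity. In particular, f is not (p, N−1)-valent in D_{1/3}. -/
/-- For `f(x) = x^p + x^N` with `N ≥ 10p + 1`, there is a polynomial `P(x) = x^p + c`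
(with `c ≠ 0`) such that `f = P` has exactly `N` solutions in `D_{1/3}`, counted with
multiplicity; in particular `f` is not `(p, N-1)`-valent in `D_{1/3}`. -/
theorem statement10 (p N : ℕ) (hp : 1 ≤ p) (hN : 10 * p + 1 ≤ N) :
    ∃ c : ℂ, c ≠ 0 ∧
      solCount (fun z : ℂ => (z ^ p + z ^ N) - (z ^ p + c))
        (Metric.ball (0 : ℂ) (1 / 3)) = (N : ℕ∞) ∧
      ¬ IsSPValentOn (fun z : ℂ => z ^ p + z ^ N)
        (Metric.ball (0 : ℂ) (1 / 3)) p (N - 1) := by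
  have hN0 : N ≠ 0 := by omega
  have hc : ((1 / 4 : ℂ) ^ N) ≠ 0 := pow_ne_zero _ (by norm_num)
  have key : ∀ c : ℂ, c = (1 / 4 : ℂ) ^ N →
      solCount (fun z : ℂ => (z ^ p + z ^ N) - (z ^ p + c))
        (Metric.ball (0 : ℂ) (1 / 3)) = (N : ℕ∞) := by
    intro c hcc
    have hg : (fun z : ℂ => (z ^ p + z ^ N) - (z ^ p + c)) = fun z => z ^ N - c := by
      funext z; ring
    rw [hg]
    have hc0 : c ≠ 0 := by rw [hcc]; exact hc
    have hprim := Complex.isPrimitiveRoot_exp N hN0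
    have hnd : (Polynomial.nthRoots N c).Nodup := hprim.nthRoots_nodup hc0
    have hcard : Multiset.card (Polynomial.nthRoots N c) = N := by
      rw [hprim.card_nthRoots, if_pos ⟨_, hcc.symm⟩]
    have han : ∀ z : ℂ, AnalyticAt ℂ (fun z : ℂ => z ^ N - c) z := fun z => by fun_prop
    have hmem : ∀ z : ℂ, z ∈ (Polynomial.nthRoots N c).toFinset ↔ z ^ N = c := by
      intro z
      rw [Multiset.mem_toFinset, Polynomial.mem_nthRoots (by omega)]
    have hball : ∀ z : ℂ, z ^ N = c → z ∈ Metric.ball (0 : ℂ) (1 / 3) := by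
      intro z hz
      have h1 : ‖z‖ ^ N = (1 / 4 : ℝ) ^ N := by
        rw [← norm_pow, hz, hcc, norm_pow]; norm_num
      have h2 : ‖z‖ = 1 / 4 := (pow_left_inj₀ (norm_nonneg _) (by norm_num) hN0).1 h1
      rw [mem_ball_zero_iff, h2]; norm_num
    have hord : ∀ z : ℂ, ordAt (fun z : ℂ => z ^ N - c) z = if z ^ N = c then 1 else 0 := by
      intro z
      unfold ordAt
      rw [dif_pos (han z)]
      split_ifs with h
      · have hz0 : z ≠ 0 := by
          rintro rfl
          exact hc0 (by rw [← h, zero_pow hN0])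
        have hd : deriv (fun z : ℂ => z ^ N) z ≠ 0 := by
          simp [hN0, hz0]
        have := AnalyticAt.analyticOrderAt_sub_eq_one_of_deriv_ne_zero
          (f := fun z : ℂ => z ^ N) (by fun_prop) hd
        simpa [h] using this
      · exact (han z).analyticOrderAt_eq_zero.2 (sub_ne_zero.2 h)
    unfold solCount
    rw [tsum_subtype (Metric.ball (0 : ℂ) (1 / 3)) (ordAt (fun z : ℂ => z ^ N - c)),
      tsum_eq_sum (s := (Polynomial.nthRoots N c).toFinset)]
    · rw [Finset.sum_congr rfl (g := fun _ => (1 : ℕ∞))]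
      · rw [Finset.sum_const, Multiset.toFinset_card_of_nodup hnd, hcard]; simp
      · intro z hz
        have hz' := (hmem z).1 hz
        rw [Set.indicator_of_mem (hball z hz'), hord, if_pos hz']
    · intro z hz
      have hz' := fun h => hz ((hmem z).2 h)
      exact Set.indicator_apply_eq_zero.2 fun _ => by rw [hord, if_neg hz']
  refine ⟨_, hc, key _ rfl, fun hv => ?_⟩
  have hdeg : (Polynomial.X ^ p + Polynomial.C ((1 / 4 : ℂ) ^ N)).degree ≤ ((p : ℕ) : WithBot ℕ) := by
    rw [Polynomial.degree_X_pow_add_C (by omega)]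
  have h := hv _ hdeg
  simp only [Polynomial.eval_add, Polynomial.eval_pow, Polynomial.eval_X, Polynomial.eval_C] at h
  rw [key _ rfl] at h
  have h' : N ≤ N - 1 := by exact_mod_cast h
  omega
end

section
/- (Cartan's lemma) Let α > 0, ε > 0, and let P(z) be a monic polynomial of degree d over ℂ. Then the sublevel set V_{ε^d}(P) = {z ∈ ℂ : |P(z)| ≤ ε^d} can be covered by p ≤ d closed disks D_{r_1}, …, D_{r_p} with radii r_j > 0 satisfying Σ_{j=1}^p r_j^α ≤ e·(2ε)^α. -/
open Finset in
theorem cartan_greedy {ι : Type} [DecidableEq ι] (a : ι → ℂ) (ρ : ℕ → ℝ) (hρ : Monotone ρ)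
    (hρ0 : ∀ k, 0 ≤ ρ k) (n : ℕ) : ∀ S : Finset ι, S.card = n →
    ∃ (p : ℕ) (w : Fin p → ℂ) (k : Fin p → ℕ), (∀ j, 1 ≤ k j) ∧ ∑ j, k j = S.card ∧
      ∀ z : ℂ, (∀ j, 2 * ρ (k j) < dist z (w j)) →
        ∀ m, 1 ≤ m → (S.filter (fun i => dist z (a i) ≤ ρ m)).card < m := by
  classical
  induction n using Nat.strong_induction_on with
  | _ n ih =>
  intro S hS
  rcases S.eq_empty_or_nonempty with rfl | ⟨i0, hi0⟩
  · exact ⟨0, Fin.elim0, Fin.elim0, fun j => j.elim0, by simp, fun z _ m hm => by simp; omega⟩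
  let Q : ℕ → Prop := fun k => ∃ w : ℂ, k ≤ (S.filter (fun i => dist w (a i) ≤ ρ k)).card
  have hQb : ∀ k, Q k → k ≤ n := by
    rintro k ⟨w, hw⟩
    exact hw.trans ((card_filter_le _ _).trans hS.le)
  have hQ1 : Q 1 := by
    refine ⟨a i0, Finset.card_pos.2 ⟨i0, ?_⟩⟩
    simp [hi0, hρ0 1]
  obtain ⟨k0, hk0, hmax⟩ : ∃ k0, Q k0 ∧ ∀ k, Q k → k ≤ k0 :=
    ⟨Nat.findGreatest Q n, Nat.findGreatest_spec (hQb 1 hQ1) hQ1,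
      fun k hk => Nat.le_findGreatest (hQb k hk) hk⟩
  have h1 : 1 ≤ k0 := hmax 1 hQ1
  obtain ⟨w, hw⟩ := hk0
  set T := S.filter (fun i => dist w (a i) ≤ ρ k0) with hT
  have hTS : T ⊆ S := filter_subset _ _
  have hTc : T.card = k0 := by
    refine le_antisymm (hmax _ ⟨w, ?_⟩) hw
    refine card_le_card fun i hi => ?_
    rw [hT, mem_filter] at hi
    rw [mem_filter]
    exact ⟨hi.1, hi.2.trans (hρ hw)⟩
  have hsd : (S \ T).card + k0 = S.card := by
    rw [← hTc]; exact card_sdiff_add_card_eq_card hTS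
  obtain ⟨p, w', k', hk1, hsum, hcov⟩ := ih (S \ T).card (by omega) (S \ T) rfl
  refine ⟨p + 1, Fin.cons w w', Fin.cons k0 k', ?_, ?_, ?_⟩
  · intro j
    refine Fin.cases ?_ (fun j => ?_) j
    · simpa using h1
    · simpa using hk1 j
  · rw [Fin.sum_univ_succ]
    simp only [Fin.cons_zero, Fin.cons_succ]
    omega
  · intro z hz m hm
    rcases lt_or_ge k0 m with h | h
    · by_contra! hc
      exact absurd (hmax m ⟨z, hc⟩) (by omega)
    · have h0 : 2 * ρ k0 < dist z w := by simpa using hz 0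
      refine lt_of_le_of_lt (card_le_card ?_) (hcov z (fun j => by simpa using hz j.succ) m hm)
      intro i hi
      rw [mem_filter] at hi
      rw [mem_filter, mem_sdiff]
      refine ⟨⟨hi.1, fun hiT => ?_⟩, hi.2⟩
      rw [hT, mem_filter] at hiT
      have := dist_triangle_right z w (a i)
      have := hρ h
      linarith [hi.2, hiT.2]

open Finset in
theorem cartan_prod {ι : Type} [DecidableEq ι] (f : ι → ℝ) (ρ : ℕ → ℝ)
    (hρ0 : ∀ k, 1 ≤ k → 0 < ρ k) (n : ℕ) : ∀ S : Finset ι, S.card = n →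
    (∀ m, 1 ≤ m → (S.filter (fun i => f i ≤ ρ m)).card < m) →
    ∏ k ∈ range n, ρ (k + 1) ≤ ∏ i ∈ S, f i ∧
      (0 < n → ∏ k ∈ range n, ρ (k + 1) < ∏ i ∈ S, f i) := by
  induction n with
  | zero =>
    intro S hS _
    rw [card_eq_zero] at hS
    subst hS
    simp
  | succ n ih =>
    intro S hS h
    obtain ⟨i, hi, hlt⟩ : ∃ i ∈ S, ρ (n + 1) < f i := by
      by_contra! hc
      have := h (n + 1) (by omega)
      rw [filter_true_of_mem hc] at this
      omega
    have h2 := (ih (S.erase i) (by rw [card_erase_of_mem hi]; omega) (fun m hm =>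
      lt_of_le_of_lt (card_le_card (filter_subset_filter _ (erase_subset _ _))) (h m hm))).1
    have hpos : 0 < ∏ k ∈ range n, ρ (k + 1) := prod_pos fun k _ => hρ0 _ (by omega)
    have : ∏ k ∈ range (n + 1), ρ (k + 1) < ∏ i ∈ S, f i := by
      rw [prod_range_succ, ← prod_erase_mul _ _ hi]
      exact mul_lt_mul_of_le_of_lt_of_pos_of_nonneg h2 hlt hpos
        ((hρ0 (n+1) (by omega)).trans hlt).le
    exact ⟨this.le, fun _ => this⟩

/-- Cartan's lemma: for a monic polynomial `P` of degree `d`, the sublevel set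
`V_{ε^d}(P) = {z : |P(z)| ≤ ε^d}` can be covered by `p ≤ d` disks whose radii `r_j > 0`
satisfy `∑ r_j^α ≤ e (2ε)^α`. -/
theorem statement11 (α ε : ℝ) (hα : 0 < α) (hε : 0 < ε)
    (P : Polynomial ℂ) (d : ℕ) (hd : 1 ≤ d) (hdeg : P.natDegree = d)
    (hmonic : P.Monic) :
    ∃ (p : ℕ) (w : Fin p → ℂ) (r : Fin p → ℝ), p ≤ d ∧ (∀ j, 0 < r j) ∧
      ({z : ℂ | ‖P.eval z‖ ≤ ε ^ d} ⊆
        ⋃ j, Metric.closedBall (w j) (r j)) ∧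
      (∑ j, r j ^ α) ≤ Real.exp 1 * (2 * ε) ^ α := by
  have hd0 : (0 : ℝ) < d := by exact_mod_cast hd
  have hroots : ∃ a : Fin d → ℂ, ∀ z, ‖P.eval z‖ = ∏ i, dist z (a i) := by
    have hs := IsAlgClosed.splits P
    have hcard : P.roots.toList.length = d := by
      rw [Multiset.length_toList, ← hs.natDegree_eq_card_roots, hdeg]
    refine ⟨fun i => P.roots.toList.get (i.cast hcard.symm), fun z => ?_⟩
    have h1 : P.eval z = (P.roots.map (fun a => z - a)).prod := by
      conv_lhs => rw [hs.eq_prod_roots_of_monic hmonic]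
      rw [Polynomial.eval_multiset_prod, Multiset.map_map]
      simp
    have h2 : (P.roots.map (fun a => z - a)).prod
        = ∏ i : Fin d, (z - P.roots.toList.get (i.cast hcard.symm)) := by
      conv_lhs => rw [← Multiset.coe_toList P.roots]
      rw [Multiset.map_coe, Multiset.prod_coe]
      subst hcard
      simp [← Fin.prod_univ_getElem]
    rw [h1, h2, norm_prod]
    simp [dist_eq_norm]
  obtain ⟨a, ha⟩ := hroots
  set A : ℝ := Real.exp 1 * ε ^ α / d with hA
  have hA0 : 0 < A := by positivity
  let ρ : ℕ → ℝ := fun k => (A * k) ^ (1 / α)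
  have hρm : Monotone ρ := fun x y h => by
    have : (x : ℝ) ≤ y := by exact_mod_cast h
    simp only [ρ]
    gcongr
  have hρ0 : ∀ k, 0 ≤ ρ k := fun k => by simp only [ρ]; positivity
  have hρ1 : ∀ k, 1 ≤ k → 0 < ρ k := fun k hk => by
    have : (0 : ℝ) < k := by exact_mod_cast hk
    simp only [ρ]; positivity
  have hρα : ∀ k, ρ k ^ α = A * k := fun k => by
    simp only [ρ]
    rw [← Real.rpow_mul (by positivity), one_div_mul_cancel hα.ne', Real.rpow_one]
  have hprod : ε ^ d ≤ ∏ k ∈ Finset.range d, ρ (k + 1) := by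
    have hP0 : 0 ≤ ∏ k ∈ Finset.range d, ρ (k + 1) := Finset.prod_nonneg fun k _ => hρ0 _
    rw [← Real.rpow_le_rpow_iff (by positivity) hP0 hα, ← Real.finsetProd_rpow _ _ (fun k _ => hρ0 _)]
    simp only [hρα]
    rw [Finset.prod_mul_distrib, Finset.prod_const, Finset.card_range, ← Nat.cast_prod,
      Finset.prod_range_add_one_eq_factorial, ← Real.rpow_natCast, ← Real.rpow_mul hε.le,
      mul_comm (d : ℝ) α, Real.rpow_mul hε.le, Real.rpow_natCast, hA, div_pow, mul_pow,
      ← Real.exp_nat_mul, mul_one]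
    have h := Real.pow_div_factorial_le_exp (d : ℝ) hd0.le d
    rw [div_le_iff₀ (by positivity)] at h
    rw [div_mul_eq_mul_div, le_div_iff₀ (by positivity)]
    nlinarith [pow_pos (Real.rpow_pos_of_pos hε α) d]
  obtain ⟨p, w, k, hk1, hsum, hcov⟩ :=
    cartan_greedy a ρ hρm hρ0 d Finset.univ (by simp)
  rw [Finset.card_univ, Fintype.card_fin] at hsum
  refine ⟨p, w, fun j => 2 * ρ (k j), ?_, fun j => by linarith [hρ1 _ (hk1 j)], ?_, ?_⟩
  · calc p = ∑ j : Fin p, 1 := by simp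
      _ ≤ ∑ j, k j := Finset.sum_le_sum fun j _ => hk1 j
      _ = d := hsum
  · intro z hz
    by_contra hc
    simp only [Set.mem_iUnion, Metric.mem_closedBall, not_exists, not_le] at hc
    have := (cartan_prod (fun i => dist z (a i)) ρ hρ1 d Finset.univ (by simp) (hcov z hc)).2 hd
    rw [← ha] at this
    exact absurd (hprod.trans_lt this) (not_lt.2 hz)
  · apply le_of_eq
    simp only [Real.mul_rpow zero_le_two (hρ0 _), hρα]
    rw [← Finset.mul_sum, ← Finset.mul_sum, ← Nat.cast_sum, hsum, Real.mul_rpow zero_le_two hε.le, hA]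
    field_simp
end

section
/- Let P(z) be a complex polynomial of degree d ≥ 1 with leading coefficient of absolute value A, let α > 0, and let Z ⊂ D_1 be a set on which |P(z)| ≤ 1. Then A · c_{d,α}(Z)^d ≤ (2·e^{1/α})^d; equivalently, if c_{d,α}(Z) > 0 then A ≤ (2e^{1/α}/c_{d,α}(Z))^d. -/
/-- The `(d,α)`-Cartan measure of a set `Z ⊆ ℂ`: the infimum of `(∑ r_j^α)^{1/α}` over
all coverings of `Z` by at most `d` disks with positive radii `r_j`. -/
noncomputable def cartanMeasure (d : ℕ) (α : ℝ) (Z : Set ℂ) : ℝ :=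
  sInf {t : ℝ | ∃ (p : ℕ) (w : Fin p → ℂ) (r : Fin p → ℝ), p ≤ d ∧ (∀ j, 0 < r j) ∧
    Z ⊆ (⋃ j, Metric.closedBall (w j) (r j)) ∧ t = (∑ j, r j ^ α) ^ (1 / α)}

lemma cover_aux {ι : Type*} [DecidableEq ι] (ρ : ℕ → ℝ) (hmono : Monotone ρ) (hρ : ∀ k, 0 ≤ ρ k)
    (z : ι → ℂ) : ∀ (n : ℕ) (S : Finset ι), S.card = n →
    ∃ (p : ℕ) (w : Fin p → ℂ) (k : Fin p → ℕ), (∀ j, 1 ≤ k j) ∧ ∑ j, k j = n ∧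
      ∀ x : ℂ, (∀ j, 2 * ρ (k j) < dist x (w j)) →
        ∀ m : ℕ, 1 ≤ m → (S.filter (fun i => dist x (z i) ≤ ρ m)).card < m := by
  classical
  intro n
  induction n using Nat.strong_induction_on with
  | _ n ih =>
  intro S hS
  rcases Nat.eq_zero_or_pos n with h0 | hpos
  · subst h0
    refine ⟨0, Fin.elim0, Fin.elim0, fun j => j.elim0, by simp, fun x _ m hm => ?_⟩
    rw [Finset.card_eq_zero] at hS
    subst hS
    simp; omega
  · let Q : ℕ → Prop := fun k => ∃ w : ℂ, k ≤ (S.filter (fun i => dist w (z i) ≤ ρ k)).card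
    have hbound : ∀ k, Q k → k ≤ n := by
      rintro k ⟨w, hw⟩
      exact hw.trans ((Finset.card_filter_le _ _).trans hS.le)
    have hQ1 : Q 1 := by
      obtain ⟨i, hi⟩ : S.Nonempty := Finset.card_pos.mp (by omega)
      refine ⟨z i, Finset.card_pos.mpr ⟨i, by simp [hi, hρ]⟩⟩
    let k := Nat.findGreatest Q n
    have hQk : Q k := Nat.findGreatest_spec (P := Q) hpos hQ1
    have hk1 : 1 ≤ k := Nat.le_findGreatest hpos hQ1
    have hmax : ∀ m, Q m → m ≤ k := fun m hm => Nat.le_findGreatest (hbound m hm) hm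
    obtain ⟨w, hw⟩ := hQk
    set T := S.filter (fun i => dist w (z i) ≤ ρ k) with hT
    have hTk : T.card = k := by
      refine le_antisymm (hmax _ ⟨w, ?_⟩) hw
      apply Finset.card_le_card
      intro i hi
      rw [hT, Finset.mem_filter] at hi
      exact Finset.mem_filter.mpr ⟨hi.1, hi.2.trans (hmono hw)⟩
    have hTS : T ⊆ S := Finset.filter_subset _ _
    have hkn : k ≤ n := by rw [← hTk, ← hS]; exact Finset.card_le_card hTS
    have hc : (S \ T).card = n - k := by rw [Finset.card_sdiff_of_subset hTS, hTk, hS]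
    obtain ⟨p, w', k', h1, h2, h3⟩ := ih (n - k) (by omega) (S \ T) hc
    refine ⟨p + 1, Fin.cons w w', Fin.cons k k', ?_, ?_, ?_⟩
    · intro j
      refine Fin.cases ?_ (fun j => ?_) j
      · simpa using hk1
      · simpa using h1 j
    · rw [Fin.sum_univ_succ]
      simp only [Fin.cons_zero, Fin.cons_succ, h2]
      omega
    · intro x hx m hm
      have hx0 := hx 0
      simp only [Fin.cons_zero] at hx0
      have hx' := h3 x (fun j => by simpa using hx j.succ) m hm
      by_contra hcon
      push Not at hcon
      have hmk : m ≤ k := hmax m ⟨x, hcon⟩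
      have hmk' := hmono hmk
      refine absurd (hcon.trans (Finset.card_le_card ?_)) (not_le.mpr hx')
      intro i hi
      rw [Finset.mem_filter] at hi ⊢
      refine ⟨Finset.mem_sdiff.mpr ⟨hi.1, fun hiT => ?_⟩, hi.2⟩
      rw [hT, Finset.mem_filter] at hiT
      have := dist_triangle_right x w (z i)
      linarith [hi.2, hiT.2]

lemma prod_aux {ι : Type*} [DecidableEq ι] (ρ : ℕ → ℝ) (hρ : ∀ k, 1 ≤ k → 0 < ρ k)
    (f : ι → ℝ) : ∀ (n : ℕ) (S : Finset ι), S.card = n →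
    (∀ m, 1 ≤ m → (S.filter (fun i => f i ≤ ρ m)).card < m) →
    ∏ k ∈ Finset.range n, ρ (k + 1) ≤ ∏ i ∈ S, f i ∧
    (1 ≤ n → ∏ k ∈ Finset.range n, ρ (k + 1) < ∏ i ∈ S, f i) := by
  intro n
  induction n with
  | zero =>
    intro S hS _
    rw [Finset.card_eq_zero] at hS
    subst hS
    simp
  | succ n ih =>
    intro S hS h
    have hlt : ∏ k ∈ Finset.range (n+1), ρ (k + 1) < ∏ i ∈ S, f i := by
      obtain ⟨i, hi, hfi⟩ : ∃ i ∈ S, ρ (n + 1) < f i := by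
        by_contra hcon
        push Not at hcon
        have := h (n+1) (by omega)
        rw [Finset.filter_true_of_mem hcon] at this
        omega
      have := (ih (S.erase i) (by rw [Finset.card_erase_of_mem hi]; omega) (fun m hm =>
        lt_of_le_of_lt (Finset.card_le_card (Finset.filter_subset_filter _ (Finset.erase_subset i S)))
          (h m hm))).1
      rw [Finset.prod_range_succ, ← Finset.prod_erase_mul S f hi]
      have hp : 0 < ∏ k ∈ Finset.range n, ρ (k + 1) :=
        Finset.prod_pos fun k _ => hρ _ (by omega)
      exact mul_lt_mul' this hfi (hρ _ (by omega)).le (hp.trans_le this)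
    exact ⟨hlt.le, fun _ => hlt⟩

lemma rho_prod (d : ℕ) (hd : 1 ≤ d) (α : ℝ) (hα : 0 < α) (B : ℝ) (hB : 0 < B) :
    B ^ d ≤ ∏ k ∈ Finset.range d,
      (Real.exp (1 / α) * B * (((k + 1 : ℕ) : ℝ) / d) ^ (1 / α)) := by
  have hd' : (0 : ℝ) < d := by exact_mod_cast hd
  rw [Finset.prod_mul_distrib, Finset.prod_const, Finset.card_range,
    Real.finsetProd_rpow _ _ (fun i _ => by positivity), Finset.prod_div_distrib,
    Finset.prod_const, Finset.card_range, ← Nat.cast_prod, Finset.prod_range_add_one_eq_factorial]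
  have h1 : (d : ℝ) ^ d / (d.factorial : ℝ) ≤ Real.exp d :=
    Real.pow_div_factorial_le_exp _ hd'.le d
  have hfac : (0 : ℝ) < d.factorial := by exact_mod_cast d.factorial_pos
  have h2 : Real.exp (-(d : ℝ)) ≤ (d.factorial : ℝ) / (d : ℝ) ^ d := by
    rw [Real.exp_neg, ← inv_div]
    exact inv_anti₀ (by positivity) h1
  have h3 : Real.exp (-(d : ℝ)) ^ (1 / α) ≤ ((d.factorial : ℝ) / (d : ℝ) ^ d) ^ (1 / α) :=
    Real.rpow_le_rpow (Real.exp_pos _).le h2 (by positivity)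
  calc B ^ d = (Real.exp (1 / α) * B) ^ d * Real.exp (-(d : ℝ)) ^ (1 / α) := by
        rw [mul_pow, ← Real.exp_nat_mul, ← Real.exp_mul]
        have : Real.exp (d * (1 / α)) * Real.exp (-(d : ℝ) * (1 / α)) = 1 := by
          rw [← Real.exp_add]; simp
        linear_combination (-B ^ d) * this
    _ ≤ _ := by gcongr

theorem statement13 (P : Polynomial ℂ) (d : ℕ) (hd : 1 ≤ d) (hdeg : P.natDegree = d)
    (α : ℝ) (hα : 0 < α) (Z : Set ℂ) (hZ : Z ⊆ Metric.closedBall (0 : ℂ) 1)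
    (hbd : ∀ z ∈ Z, ‖P.eval z‖ ≤ 1) :
    ‖P.leadingCoeff‖ * cartanMeasure d α Z ^ d ≤
      (2 * Real.exp (1 / α)) ^ d := by
  have hd' : (0 : ℝ) < d := by exact_mod_cast hd
  have hP0 : P ≠ 0 := by
    rintro rfl
    simp at hdeg
    omega
  have hA : 0 < ‖P.leadingCoeff‖ := by simpa using hP0
  set A := ‖P.leadingCoeff‖ with hAdef
  obtain ⟨B, hB, hBd⟩ : ∃ B : ℝ, 0 < B ∧ B ^ d = A⁻¹ :=
    ⟨(A⁻¹) ^ ((d : ℝ)⁻¹), by positivity,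
      Real.rpow_inv_natCast_pow (by positivity) (by omega)⟩
  have hsplit : P.Splits := IsAlgClosed.splits P
  set L := P.roots.toList with hL
  have hLlen : L.length = d := by
    rw [hL, Multiset.length_toList, ← hdeg]
    exact (Polynomial.splits_iff_card_roots.mp hsplit)
  have heval : ∀ x, ‖P.eval x‖ = A * ∏ i : Fin L.length, dist x (L.get i) := by
    intro x
    rw [hsplit.eval_eq_prod_roots, norm_mul]
    congr 1
    rw [← Multiset.coe_toList P.roots, ← hL, Multiset.map_coe, Multiset.prod_coe]
    have : List.map (x - ·) L = List.ofFn (fun i : Fin L.length => x - L.get i) := by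
      conv_lhs => rw [← List.ofFn_get L, List.map_ofFn]
      rfl
    rw [this, List.prod_ofFn, norm_prod]
    simp only [dist_eq_norm]
  set H := Real.exp (1 / α) * B with hH
  have hHpos : 0 < H := by positivity
  let ρ : ℕ → ℝ := fun k => H * ((k : ℝ) / d) ^ (1 / α)
  have hρ0 : ∀ k, 0 ≤ ρ k := fun k => by positivity
  have hρpos : ∀ k, 1 ≤ k → 0 < ρ k := fun k hk => by
    have : (0 : ℝ) < k := by exact_mod_cast hk
    positivity
  have hρmono : Monotone ρ := fun a b hab => by
    have : (a : ℝ) ≤ b := by exact_mod_cast hab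
    simp only [ρ]
    gcongr
  obtain ⟨p, w, k, hk1, hksum, hcov⟩ := cover_aux ρ hρmono hρ0 (fun i : Fin L.length => L.get i) d
    Finset.univ (by simp [hLlen])
  have hc0 : 0 ≤ cartanMeasure d α Z := by
    apply Real.sInf_nonneg
    rintro t ⟨p, w, r, -, hr, -, rfl⟩
    exact Real.rpow_nonneg (Finset.sum_nonneg fun j _ => Real.rpow_nonneg (hr j).le _) _
  have hc : cartanMeasure d α Z ≤ 2 * H := by
    refine csInf_le ⟨0, ?_⟩ ⟨p, w, fun j => 2 * ρ (k j), ?_, ?_, ?_, ?_⟩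
    · rintro t ⟨p, w, r, -, hr, -, rfl⟩
      exact Real.rpow_nonneg (Finset.sum_nonneg fun j _ => Real.rpow_nonneg (hr j).le _) _
    · calc p = ∑ j : Fin p, 1 := by simp
        _ ≤ ∑ j, k j := Finset.sum_le_sum fun j _ => hk1 j
        _ = d := hksum
    · intro j
      have := hρpos _ (hk1 j)
      positivity
    · intro x hx
      by_contra hcon
      simp only [Set.mem_iUnion, Metric.mem_closedBall, not_exists, not_le] at hcon
      have h1 := hcov x hcon
      have h2 := (prod_aux ρ hρpos (fun i : Fin L.length => dist x (L.get i)) d Finset.univ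
        (by simp [hLlen]) h1).2 hd
      have h3 := rho_prod d hd α hα B hB
      have h4 := h3.trans_lt h2
      rw [hBd] at h4
      have h5 := hbd x hx
      rw [heval] at h5
      have h6 := mul_lt_mul_of_pos_left h4 hA
      rw [mul_inv_cancel₀ hA.ne'] at h6
      linarith
    · have : ∀ j, (2 * ρ (k j)) ^ α = (2 * H) ^ α / d * (k j : ℝ) := by
        intro j
        simp only [ρ]
        rw [← mul_assoc, Real.mul_rpow (by positivity) (by positivity),
          ← Real.rpow_mul (by positivity), one_div_mul_cancel hα.ne', Real.rpow_one]
        ring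
      simp only [this]
      rw [← Finset.mul_sum, ← Nat.cast_sum, hksum, div_mul_cancel₀ _ hd'.ne',
        ← Real.rpow_mul (by positivity), mul_one_div_cancel hα.ne', Real.rpow_one]
  calc A * cartanMeasure d α Z ^ d ≤ A * (2 * H) ^ d := by gcongr
    _ = A * B ^ d * (2 * Real.exp (1 / α)) ^ d := by rw [hH]; ring
    _ = _ := by rw [hBd, mul_inv_cancel₀ hA.ne', one_mul]
end

section
/- Let Z ⊂ D_1 and d ≥ 1. Then ω_{cd}(Z)/2 ≤ c_{d,2}(Z) ≤ c_{d,1}(Z) ≤ ρ_d(Z), where ω_{cd}(Z) = sup_{ε>0} ε·(M(ε,Z) − d)^{1/2} (the supremum taken over ε for which M(ε,Z) > d), M(ε,Z) is the minimal number of disks of radius ε needed to cover Z, and ρ_d(Z) = d·ε_0 with ε_0 the minimal ε such that Z can be covered by d disks of radius ε. -/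
/-- The covering number `M(ε, Z)`: the minimal number of closed disks of radius `ε`
needed to cover `Z`. -/
noncomputable def coverNum (ε : ℝ) (Z : Set ℂ) : ℕ :=
  sInf {n : ℕ | ∃ w : Fin n → ℂ, Z ⊆ ⋃ j, Metric.closedBall (w j) ε}

theorem le_of_sq_le_sq_aux {a b : ℝ} (h : a ^ 2 ≤ b ^ 2) (hb : 0 ≤ b) : a ≤ b :=
  (le_abs_self a).trans (abs_le_of_sq_le_sq h hb)

theorem aux_unit (n : ℕ) (hn : 1 ≤ n) (x : ℝ) (h0 : 0 ≤ x) (h1 : x ≤ n) :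
    ∃ i : Fin n, (i : ℝ) ≤ x ∧ x ≤ (i : ℝ) + 1 := by
  by_cases h : x = n
  · refine ⟨⟨n - 1, by omega⟩, ?_, ?_⟩
    · simp only [h]; exact_mod_cast Nat.sub_le n 1
    · simp only [h]; push_cast [Nat.cast_sub hn]; linarith
  · have hlt : x < n := lt_of_le_of_ne h1 h
    refine ⟨⟨⌊x⌋₊, (Nat.floor_lt h0).2 hlt⟩, Nat.floor_le h0, (Nat.lt_floor_add_one x).le⟩

theorem aux_coverNum_le {ι : Type} [Fintype ι] (ε : ℝ) (Z : Set ℂ) (w : ι → ℂ)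
    (h : Z ⊆ ⋃ j, Metric.closedBall (w j) ε) : coverNum ε Z ≤ Fintype.card ι := by
  apply Nat.sInf_le
  refine ⟨fun i => w ((Fintype.equivFin ι).symm i), fun z hz => ?_⟩
  obtain ⟨j, hj⟩ := Set.mem_iUnion.1 (h hz)
  exact Set.mem_iUnion.2 ⟨Fintype.equivFin ι j, by simpa using hj⟩

theorem aux_grid (w : ℂ) (r h ε : ℝ) (hh : 0 < h) (hε : 0 < ε) (hhe : h ^ 2 = 2 * ε ^ 2)
    (n : ℕ) (hn : 1 ≤ n) (hr : 2 * r ≤ n * h) :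
    ∃ c : Fin n × Fin n → ℂ, Metric.closedBall w r ⊆ ⋃ i, Metric.closedBall (c i) ε := by
  have key : ∀ y : ℝ, |y| ≤ r → ∃ i : Fin n, |y - (-r + (i + 1 / 2) * h)| ≤ h / 2 := by
    intro y hy
    obtain ⟨h1, h2⟩ := abs_le.1 hy
    obtain ⟨i, hi1, hi2⟩ := aux_unit n hn ((y + r) / h) (div_nonneg (by linarith) hh.le)
      ((div_le_iff₀ hh).2 (by linarith))
    rw [le_div_iff₀ hh] at hi1
    rw [div_le_iff₀ hh] at hi2
    exact ⟨i, abs_le.2 ⟨by linarith, by linarith⟩⟩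
  refine ⟨fun i => w + ⟨-r + (i.1 + 1 / 2) * h, -r + (i.2 + 1 / 2) * h⟩, fun z hz => ?_⟩
  rw [Metric.mem_closedBall, Complex.dist_eq] at hz
  obtain ⟨i, hi⟩ := key (z - w).re ((Complex.abs_re_le_norm _).trans hz)
  obtain ⟨j, hj⟩ := key (z - w).im ((Complex.abs_im_le_norm _).trans hz)
  refine Set.mem_iUnion.2 ⟨(i, j), ?_⟩
  rw [Metric.mem_closedBall, Complex.dist_eq]
  apply le_of_sq_le_sq_aux ?_ hε.le
  rw [Complex.sq_norm, Complex.normSq_apply]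
  have e1 := sq_le_sq' (abs_le.1 hi).1 (abs_le.1 hi).2
  have e2 := sq_le_sq' (abs_le.1 hj).1 (abs_le.1 hj).2
  simp only [Complex.sub_re, Complex.sub_im, Complex.add_re, Complex.add_im] at e1 e2 ⊢
  nlinarith

theorem aux_disk (w : ℂ) (r ε : ℝ) (hε : 0 < ε) (hr : 0 < r) :
    ∃ (k : ℕ) (c : Fin k → ℂ), (k : ℝ) ≤ 1 + 4 * (r / ε) ^ 2 ∧
      Metric.closedBall w r ⊆ ⋃ i, Metric.closedBall (c i) ε := by
  by_cases hre : r ≤ ε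
  · refine ⟨1, fun _ => w, ?_, fun z hz => Set.mem_iUnion.2 ⟨0, ?_⟩⟩
    · have := sq_nonneg (r / ε)
      push_cast; linarith
    · exact Metric.closedBall_subset_closedBall hre hz
  · push Not at hre
    have hs2 : (0 : ℝ) < √2 := by positivity
    have hsq : √2 ^ 2 = (2 : ℝ) := Real.sq_sqrt (by norm_num)
    have hs : 1 < r / ε := (one_lt_div hε).2 hre
    set s := r / ε with hsdef
    have hrs : r = s * ε := by rw [hsdef]; field_simp
    set n := ⌈√2 * s⌉₊ with hn
    have hx : √2 * s ≤ n := Nat.le_ceil _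
    have hx2 : (n : ℝ) < √2 * s + 1 := Nat.ceil_lt_add_one (by positivity)
    have hxs : (√2 * s) ^ 2 = 2 * s ^ 2 := by rw [mul_pow, hsq]
    have hx1 : 1 < √2 * s := by nlinarith [mul_pos hs2 (show 0 < s by linarith)]
    have hn1 : 2 ≤ n := by
      have : (1 : ℝ) < n := hx1.trans_le hx
      exact_mod_cast this
    obtain ⟨c, hc⟩ := aux_grid w r (√2 * ε) ε (by positivity) hε (by rw [mul_pow, hsq]) n
      (by omega) (by
        have : 2 * r = (√2 * s) * (√2 * ε) := by
          rw [hrs]; linear_combination (-s * ε) * hsq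
        rw [this]; gcongr)
    refine ⟨n * n, fun i => c (finProdFinEquiv.symm i), ?_, fun z hz => ?_⟩
    · push_cast
      rcases Nat.lt_or_ge n 3 with h3 | h3
      · have : n = 2 := by omega
        rw [this]; push_cast; nlinarith
      · have h3' : (3 : ℝ) ≤ n := by exact_mod_cast h3
        have : ((n : ℝ) - 1) ^ 2 ≤ (√2 * s) ^ 2 := by
          apply pow_le_pow_left₀ <;> linarith
        nlinarith
    · obtain ⟨j, hj⟩ := Set.mem_iUnion.1 (hc hz)
      exact Set.mem_iUnion.2 ⟨finProdFinEquiv j, by simpa using hj⟩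

theorem aux_cover (d p : ℕ) (Z : Set ℂ) (w : Fin p → ℂ) (r : Fin p → ℝ) (hp : p ≤ d)
    (hr : ∀ j, 0 < r j) (hc : Z ⊆ ⋃ j, Metric.closedBall (w j) (r j)) (ε : ℝ) (hε : 0 < ε) :
    (coverNum ε Z : ℝ) ≤ d + 4 * (∑ j, r j ^ 2) / ε ^ 2 := by
  choose k c hk hkc using fun j => aux_disk (w j) (r j) ε hε (hr j)
  have h1 := aux_coverNum_le (ι := Σ j, Fin (k j)) ε Z (fun x => c x.1 x.2) (fun z hz => by
    obtain ⟨j, hj⟩ := Set.mem_iUnion.1 (hc hz)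
    obtain ⟨i, hi⟩ := Set.mem_iUnion.1 (hkc j hj)
    exact Set.mem_iUnion.2 ⟨⟨j, i⟩, hi⟩)
  rw [Fintype.card_sigma] at h1
  simp only [Fintype.card_fin] at h1
  have h2 : (coverNum ε Z : ℝ) ≤ ∑ j, (k j : ℝ) := by exact_mod_cast h1
  have h3 : ∑ j, (k j : ℝ) ≤ ∑ j, (1 + 4 * (r j / ε) ^ 2) := Finset.sum_le_sum fun j _ => hk j
  have h4 : ∑ j, (1 + 4 * (r j / ε) ^ 2) = p + 4 * (∑ j, r j ^ 2) / ε ^ 2 := by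
    rw [Finset.sum_add_distrib, Finset.mul_sum, Finset.sum_div]
    simp [div_pow, mul_div_assoc]
  have h5 : (p : ℝ) ≤ d := by exact_mod_cast hp
  linarith

theorem aux_nonneg (d : ℕ) (α : ℝ) (Z : Set ℂ) : ∀ t ∈ {t : ℝ | ∃ (p : ℕ) (w : Fin p → ℂ)
    (r : Fin p → ℝ), p ≤ d ∧ (∀ j, 0 < r j) ∧
    Z ⊆ (⋃ j, Metric.closedBall (w j) (r j)) ∧ t = (∑ j, r j ^ α) ^ (1 / α)}, 0 ≤ t := by
  rintro t ⟨p, w, r, -, hr, -, rfl⟩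
  exact Real.rpow_nonneg (Finset.sum_nonneg fun j _ => Real.rpow_nonneg (hr j).le _) _

theorem aux_nonempty (d : ℕ) (hd : 1 ≤ d) (α : ℝ) (Z : Set ℂ)
    (hZ : Z ⊆ Metric.closedBall (0 : ℂ) 1) : {t : ℝ | ∃ (p : ℕ) (w : Fin p → ℂ)
    (r : Fin p → ℝ), p ≤ d ∧ (∀ j, 0 < r j) ∧
    Z ⊆ (⋃ j, Metric.closedBall (w j) (r j)) ∧ t = (∑ j, r j ^ α) ^ (1 / α)}.Nonempty :=
  ⟨_, 1, fun _ => 0, fun _ => 1, hd, fun _ => one_pos,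
    fun _ hz => Set.mem_iUnion.2 ⟨0, hZ hz⟩, rfl⟩

/-- `ω_{cd}(Z)/2 ≤ c_{d,2}(Z) ≤ c_{d,1}(Z) ≤ ρ_d(Z)`, where
`ω_{cd}(Z) = sup_{ε : M(ε,Z) > d} ε (M(ε,Z) - d)^{1/2}` and `ρ_d(Z) = d ε₀`, with `ε₀`
the minimal `ε` such that `Z` can be covered by `d` disks of radius `ε`. -/
theorem statement18 (d : ℕ) (hd : 1 ≤ d) (Z : Set ℂ)
    (hZ : Z ⊆ Metric.closedBall (0 : ℂ) 1) :
    sSup {t : ℝ | ∃ ε : ℝ, 0 < ε ∧ d < coverNum ε Z ∧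
        t = ε * Real.sqrt ((coverNum ε Z - d : ℕ) : ℝ)} / 2 ≤
      cartanMeasure d 2 Z ∧
    cartanMeasure d 2 Z ≤ cartanMeasure d 1 Z ∧
    cartanMeasure d 1 Z ≤
      d * sInf {ε : ℝ | 0 < ε ∧ ∃ w : Fin d → ℂ,
        Z ⊆ ⋃ j, Metric.closedBall (w j) ε} := by
  have hdpos : (0 : ℝ) < d := by exact_mod_cast hd
  refine ⟨?_, ?_, ?_⟩
  · rw [div_le_iff₀ (by norm_num : (0 : ℝ) < 2)]
    apply Real.sSup_le
    · rintro t ⟨ε, hε, hlt, rfl⟩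
      rw [← div_le_iff₀ (by norm_num : (0 : ℝ) < 2)]
      apply le_csInf (aux_nonempty d hd 2 Z hZ)
      rintro u ⟨p, w, r, hp, hr, hc, rfl⟩
      have h := aux_cover d p Z w r hp hr hc ε hε
      rw [Nat.cast_sub hlt.le, ← Real.sqrt_eq_rpow, div_le_iff₀ (by norm_num : (0 : ℝ) < 2)]
      simp only [Real.rpow_two]
      have hS : 0 ≤ ∑ j, r j ^ 2 := Finset.sum_nonneg fun j _ => sq_nonneg _
      have h0 : (0 : ℝ) ≤ (coverNum ε Z : ℝ) - d := by
        have : (d : ℝ) < coverNum ε Z := by exact_mod_cast hlt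
        linarith
      apply le_of_sq_le_sq_aux ?_ (by positivity)
      rw [mul_pow, mul_pow, Real.sq_sqrt h0, Real.sq_sqrt hS]
      have h2 : (coverNum ε Z : ℝ) - d ≤ 4 * (∑ j, r j ^ 2) / ε ^ 2 := by linarith
      rw [le_div_iff₀ (by positivity)] at h2
      linarith
    · exact mul_nonneg (Real.sInf_nonneg (aux_nonneg d 2 Z)) (by norm_num)
  · apply le_csInf (aux_nonempty d hd 1 Z hZ)
    rintro u ⟨p, w, r, hp, hr, hc, rfl⟩
    refine (csInf_le ⟨0, aux_nonneg d 2 Z⟩ ⟨p, w, r, hp, hr, hc, rfl⟩).trans ?_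
    rw [← Real.sqrt_eq_rpow]
    simp only [Real.rpow_two, Real.rpow_one, div_one]
    apply Real.sqrt_le_iff.2
    exact ⟨Finset.sum_nonneg fun j _ => (hr j).le,
      Finset.sum_sq_le_sq_sum_of_nonneg fun j _ => (hr j).le⟩
  · rw [← div_le_iff₀' hdpos]
    apply le_csInf
    · exact ⟨1, one_pos, fun _ => 0, fun _ hz => Set.mem_iUnion.2 ⟨⟨0, hd⟩, hZ hz⟩⟩
    · rintro ε ⟨hε, w, hw⟩
      rw [div_le_iff₀' hdpos]
      refine csInf_le ⟨0, aux_nonneg d 1 Z⟩ ⟨d, w, fun _ => ε, le_rfl, fun _ => hε, hw, ?_⟩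
      simp
end
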